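/- arXiv:2003.05368 — 5 statements merged into one kernel-verified Lean document; each statement's English description precedes it below -/
import Mathlib

section
/- For every positive integer n, the number of pairs (x, y) ∈ F_{3^n} × F_{3^n} satisfying y² = x⁹ + x⁸ + x⁷ + 2x⁵ + x equals 3^n minus the sum of the n-th powers of the complex roots (with multiplicity) of the polynomial P₃(T) = T⁸ − T⁷ + 2T⁶ − 4T⁵ − 2T⁴ − 12T³ + 18T² − 27T + 81. (Equivalently, the L-polynomial of the curve y² = x⁹ + x⁸ + x⁷ + 2x⁵ + x over F₃ is 1 − T + 2T² − 4T³ − 2T⁴ − 12T⁵ + 18T⁶ − 27T⁷ + 81T⁸; the curve has exactly one point at infinity since the right-hand side has odd degree 9.) -/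
open Polynomial

/-- The Weil polynomial of the Jacobian of `y² = x⁹ + x⁸ + x⁷ + 2x⁵ + x` over `𝔽₃`,
viewed as a polynomial with complex coefficients. -/
noncomputable def P3 : Polynomial ℂ :=
  X ^ 8 - X ^ 7 + 2 * X ^ 6 - 4 * X ^ 5 - 2 * X ^ 4 - 12 * X ^ 3 + 18 * X ^ 2 - 27 * X + 81

section FieldPart
open Module IntermediateField

lemma norm_pb_aeval {K L : Type*} [Field K] [Field L] [Algebra K L] [FiniteDimensional K L]
    [Algebra.IsSeparable K L] (pb : PowerBasis K L) (g : K[X]) :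
    Algebra.norm K (aeval pb.gen g) = resultant (minpoly K pb.gen) g := by
  classical
  let E := AlgebraicClosure L
  apply (algebraMap K E).injective
  have hs : ((minpoly K pb.gen).map (algebraMap K E)).Splits := IsAlgClosed.splits _
  have hsep : (minpoly K pb.gen).Separable := Algebra.IsSeparable.isSeparable K _
  have hm : (minpoly K pb.gen).Monic := minpoly.monic (Algebra.IsSeparable.isIntegral K _)
  rw [Algebra.norm_eq_prod_embeddings K E, ← resultant_map_map]
  have h1 := resultant_eq_prod_eval ((minpoly K pb.gen).map (algebraMap K E))
    (g.map (algebraMap K E)) g.natDegree (natDegree_map_le) hs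
  rw [natDegree_map, (hm.map _).leadingCoeff, one_pow, one_mul] at h1
  rw [h1]
  rw [Fintype.prod_equiv pb.liftEquiv'
    (fun σ => σ (aeval pb.gen g)) (fun x => (g.map (algebraMap K E)).eval x.1) ?_]
  · rw [Finset.prod_mem_multiset (f := fun x => (g.map (algebraMap K E)).eval x.1)
      (g := fun x => (g.map (algebraMap K E)).eval x) (hfg := fun _ => rfl),
      Finset.prod_eq_multiset_prod, Multiset.toFinset_val, Multiset.dedup_eq_self.mpr]
    exact nodup_roots (hsep.map)
  · intro σ
    simp only [PowerBasis.liftEquiv'_apply_coe]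
    rw [eval_map_algebraMap, aeval_algHom_apply]

lemma norm_aeval_eq {K L : Type*} [Field K] [Field L] [Algebra K L] [FiniteDimensional K L]
    [Algebra.IsSeparable K L] (x : L) (g : K[X]) :
    Algebra.norm K (aeval x g) = (resultant (minpoly K x) g) ^ finrank K⟮x⟯ L := by
  have hx := Algebra.IsSeparable.isIntegral K x
  have : Algebra.IsSeparable K K⟮x⟯ := Algebra.isSeparable_tower_bot_of_isSeparable K K⟮x⟯ L
  have h1 := norm_pb_aeval (adjoin.powerBasis hx) g
  rw [adjoin.powerBasis_gen] at h1
  rw [minpoly_gen] at h1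
  rw [← h1]
  have h2 : aeval x g = algebraMap K⟮x⟯ L (aeval (AdjoinSimple.gen K x) g) := by
    rw [← aeval_algebraMap_apply, AdjoinSimple.algebraMap_gen]
  rw [h2, ← Algebra.norm_norm (S := K⟮x⟯), Algebra.norm_algebraMap, map_pow]

instance fact3 : Fact (Nat.Prime 3) := ⟨Nat.prime_three⟩

/-- the quadratic character of a finite extension of `𝔽₃` is that of the norm -/
lemma quadChar_norm {F : Type*} [Field F] [Fintype F] [DecidableEq F] [Algebra (ZMod 3) F]
    (a : F) : quadraticChar F a = quadraticChar (ZMod 3) (Algebra.norm (ZMod 3) a) := by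
  have hchar : CharP F 3 := charP_of_injective_algebraMap (algebraMap (ZMod 3) F).injective 3
  have h2 : ringChar F ≠ 2 := by rw [ringChar.eq F 3]; norm_num
  have hc : Fintype.card F = 3 ^ finrank (ZMod 3) F := by
    rw [Module.card_eq_pow_finrank (K := ZMod 3), ZMod.card]
  have h := FiniteField.algebraMap_norm_eq_pow (K := ZMod 3) (x := a)
  have hodd : Odd (3 ^ finrank (ZMod 3) F) := Odd.pow (by decide)
  have hE := quadraticChar_eq_pow_of_char_ne_two' h2 a
  have hexp : (Nat.card F - 1) / (Nat.card (ZMod 3) - 1) = Fintype.card F / 2 := by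
    simp only [Nat.card_eq_fintype_card, ZMod.card]
    obtain ⟨k, hk⟩ := hodd
    rw [hc, hk]; omega
  rw [hexp, ← hE] at h
  have key : ∀ b : ZMod 3, b = ((quadraticChar (ZMod 3) b : ℤ) : ZMod 3) := by decide
  rw [key (Algebra.norm (ZMod 3) a), map_intCast] at h
  set u := quadraticChar F a
  set v := quadraticChar (ZMod 3) (Algebra.norm (ZMod 3) a)
  have hu : u = 0 ∨ u = 1 ∨ u = -1 := quadraticChar_isQuadratic F a
  have hv : v = 0 ∨ v = 1 ∨ v = -1 := quadraticChar_isQuadratic (ZMod 3) _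
  have h3 : ((v - u : ℤ) : F) = 0 := by push_cast; rw [h, sub_self]
  rw [CharP.intCast_eq_zero_iff F 3] at h3
  rcases hu with hu | hu | hu <;> rcases hv with hv | hv | hv <;> rw [hu, hv] at h3 ⊢ <;>
    revert h3 <;> decide

end FieldPart


section Enum

/-- polynomial of degree `< k` over `𝔽₃` with code `a` in base `3` -/
noncomputable def pc : ℕ → ℕ → (ZMod 3)[X]
  | 0, _ => 0
  | k + 1, a => C (a : ZMod 3) + X * pc k (a / 3)

lemma pc_degree_lt (k a : ℕ) : (pc k a).degree < k := by
  induction k generalizing a with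
  | zero => simp [pc]
  | succ k ih =>
    rw [pc, degree_lt_iff_coeff_zero]
    intro m hm
    obtain ⟨m, rfl⟩ : ∃ m', m = m' + 1 := ⟨m - 1, by omega⟩
    rw [coeff_add, coeff_X_mul, coeff_C_succ, zero_add]
    exact (degree_lt_iff_coeff_zero _ _).1 (ih (a / 3)) m (by omega)

lemma pc_surj (k : ℕ) (p : (ZMod 3)[X]) (hp : p.degree < k) : ∃ a < 3 ^ k, pc k a = p := by
  induction k generalizing p with
  | zero =>
    refine ⟨0, by simp, ?_⟩
    have : p = 0 := by
      ext m
      exact (degree_lt_iff_coeff_zero _ _).1 hp m (Nat.zero_le _)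
    simp [pc, this]
  | succ k ih =>
    obtain ⟨a, ha, hpa⟩ := ih p.divX (by
      rw [degree_lt_iff_coeff_zero]
      intro m hm
      rw [coeff_divX]
      exact (degree_lt_iff_coeff_zero _ _).1 hp (m + 1) (by omega))
    have hlt : (p.coeff 0).val < 3 := ZMod.val_lt _
    refine ⟨(p.coeff 0).val + 3 * a, by rw [pow_succ]; omega, ?_⟩
    rw [pc]
    have h1 : ((p.coeff 0).val + 3 * a) / 3 = a := by omega
    have h3 : ((3 : ℕ) : ZMod 3) = 0 := by decide
    rw [h1, hpa]
    rw [Nat.cast_add, Nat.cast_mul, h3, zero_mul, add_zero, ZMod.natCast_zmod_val]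
    rw [add_comm, mul_comm]
    exact divX_mul_X_add p

lemma pc_inj (k a b : ℕ) (ha : a < 3 ^ k) (hb : b < 3 ^ k) (h : pc k a = pc k b) : a = b := by
  induction k generalizing a b with
  | zero => simp at ha hb; omega
  | succ k ih =>
    rw [pc, pc] at h
    have h0 := congrArg (fun p => coeff p 0) h
    simp at h0
    rw [ZMod.natCast_eq_natCast_iff'] at h0
    have h1 : pc k (a / 3) = pc k (b / 3) := by
      ext m
      have := congrArg (fun p => coeff p (m + 1)) h
      simpa [coeff_X_mul, coeff_C_succ] using this
    have := ih (a / 3) (b / 3) (by rw [pow_succ] at ha; omega) (by rw [pow_succ] at hb; omega) h1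
    omega

open Classical in
/-- monic polynomials of degree `d` -/
noncomputable def MM (d : ℕ) : Finset (ZMod 3)[X] :=
  (Finset.range (3 ^ d)).image (fun a => X ^ d + pc d a)

lemma mem_MM {d : ℕ} {h : (ZMod 3)[X]} : h ∈ MM d ↔ h.Monic ∧ h.natDegree = d := by
  classical
  rw [MM, Finset.mem_image]
  constructor
  · rintro ⟨a, -, rfl⟩
    have := pc_degree_lt d a
    exact ⟨monic_X_pow_add this, by
      rw [natDegree_add_eq_left_of_degree_lt, natDegree_X_pow]
      rwa [degree_X_pow]⟩
  · rintro ⟨hm, rfl⟩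
    obtain ⟨a, ha, hp⟩ := pc_surj h.natDegree (h - X ^ h.natDegree) (by
      have : h.degree = (X ^ h.natDegree : (ZMod 3)[X]).degree := by
        rw [degree_X_pow, degree_eq_natDegree hm.ne_zero]
      rw [← degree_eq_natDegree hm.ne_zero]
      exact degree_sub_lt_left this hm.ne_zero (by rw [hm.leadingCoeff, leadingCoeff_X_pow]))
    exact ⟨a, Finset.mem_range.2 ha, by rw [hp]; ring⟩

lemma sum_MM {A : Type*} [AddCommMonoid A] (d : ℕ) (w : (ZMod 3)[X] → A) :
    ∑ h ∈ MM d, w h = ∑ a ∈ Finset.range (3 ^ d), w (X ^ d + pc d a) := by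
  classical
  rw [MM, Finset.sum_image]
  intro a ha b hb hab
  exact pc_inj d a b (Finset.mem_range.1 ha) (Finset.mem_range.1 hb) (add_left_cancel hab)

end Enum

section Mangoldt

/-- the right-hand side of the curve -/
noncomputable def ff : (ZMod 3)[X] := X ^ 9 + X ^ 8 + X ^ 7 + 2 * X ^ 5 + X

/-- the quadratic symbol -/
noncomputable def chi (h : (ZMod 3)[X]) : ℤ := quadraticChar (ZMod 3) (resultant h ff)

lemma chi_mul (g h : (ZMod 3)[X]) (hg : g.Monic) (hh : h.Monic) :
    chi (g * h) = chi g * chi h := by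
  rw [chi, chi, chi, ← map_mul, ← resultant_mul_left _ _ _ _ le_rfl, hg.natDegree_mul hh]

lemma chi_one : chi 1 = 1 := by
  rw [chi]; simp

lemma chi_pow (g : (ZMod 3)[X]) (hg : g.Monic) (k : ℕ) : chi (g ^ k) = chi g ^ k := by
  induction k with
  | zero => simp [chi_one]
  | succ k ih => rw [pow_succ, chi_mul _ _ (hg.pow k) hg, ih, pow_succ]

open Classical in
/-- monic irreducible polynomials of degree at most `D` -/
noncomputable def Irr (D : ℕ) : Finset (ZMod 3)[X] :=
  ((Finset.range (D + 1)).biUnion MM).filter Irreducible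

lemma mem_Irr {D : ℕ} {P : (ZMod 3)[X]} :
    P ∈ Irr D ↔ P.Monic ∧ P.natDegree ≤ D ∧ Irreducible P := by
  classical
  simp only [Irr, Finset.mem_filter, Finset.mem_biUnion, Finset.mem_range, mem_MM]
  constructor
  · rintro ⟨⟨d, hd, hm, rfl⟩, hi⟩
    exact ⟨hm, by omega, hi⟩
  · rintro ⟨hm, hd, hi⟩
    exact ⟨⟨_, by omega, hm, rfl⟩, hi⟩

/-- coefficients of the `L`-series -/
noncomputable def cc (d : ℕ) : ℤ := ∑ h ∈ MM d, chi h

/-- logarithmic coefficients -/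
noncomputable def SS (D m : ℕ) : ℤ :=
  ∑ P ∈ Irr D, ∑ k ∈ Finset.Icc 1 D, if k * P.natDegree = m then (P.natDegree : ℤ) * chi P ^ k else 0

open Classical in
lemma degree_sum (d : ℕ) (h : (ZMod 3)[X]) (hm : h.Monic) (hd : h.natDegree = d) :
    (d : ℤ) = ∑ P ∈ Irr d, ∑ k ∈ Finset.Icc 1 d, if P ^ k ∣ h then (P.natDegree : ℤ) else 0 := by
  have hne : h ≠ 0 := hm.ne_zero
  let s := UniqueFactorizationMonoid.normalizedFactors h
  have hs : s.prod = h := by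
    have := UniqueFactorizationMonoid.prod_normalizedFactors_eq hne
    rw [this, hm.normalize_eq_self]
  have hsirr : ∀ P ∈ s, Irreducible P := fun P hP =>
    UniqueFactorizationMonoid.irreducible_of_normalized_factor P hP
  have hsmon : ∀ P ∈ s, P.Monic := fun P hP => by
    rw [← UniqueFactorizationMonoid.normalize_normalized_factor P hP]
    exact monic_normalize (hsirr P hP).ne_zero
  have hsub : s.toFinset ⊆ Irr d := by
    intro P hP
    rw [Multiset.mem_toFinset] at hP
    refine mem_Irr.2 ⟨hsmon P hP, ?_, hsirr P hP⟩
    rw [← hd]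
    exact natDegree_le_of_dvd (UniqueFactorizationMonoid.dvd_of_mem_normalizedFactors hP) hne
  have h1 : d = (s.map natDegree).sum := by
    rw [← hd, ← hs, natDegree_multiset_prod_of_monic]
    exact hsmon
  rw [Finset.sum_multiset_map_count] at h1
  have h2 : d = ∑ P ∈ Irr d, s.count P • P.natDegree := by
    rw [h1]
    conv_rhs => rw [← h1]
    refine Finset.sum_subset hsub ?_
    intro P _ hP
    rw [Multiset.mem_toFinset] at hP
    rw [Multiset.count_eq_zero_of_notMem hP, zero_smul]
  have h3 : ∀ P ∈ Irr d, ∀ k, P ^ k ∣ h ↔ k ≤ s.count P := by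
    intro P hP k
    obtain ⟨hPm, -, hPi⟩ := mem_Irr.1 hP
    have := UniqueFactorizationMonoid.emultiplicity_eq_count_normalizedFactors hPi hne
    rw [hPm.normalize_eq_self] at this
    rw [pow_dvd_iff_le_emultiplicity, this]
    exact Nat.cast_le
  conv_lhs => rw [h2]
  push_cast
  refine Finset.sum_congr rfl fun P hP => ?_
  have hPi := (mem_Irr.1 hP).2.2
  have hle : s.count P ≤ d := by
    have h4 := natDegree_le_of_dvd ((h3 P hP _).2 le_rfl) hne
    rw [natDegree_pow, hd] at h4
    have := hPi.natDegree_pos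
    nlinarith
  rw [← Finset.sum_filter, Finset.sum_const, nsmul_eq_mul]
  have : (Finset.Icc 1 d).filter (fun k => P ^ k ∣ h) = Finset.Icc 1 (s.count P) := by
    ext k
    rw [Finset.mem_filter, h3 P hP, Finset.mem_Icc, Finset.mem_Icc]
    omega
  rw [this]
  simp

open Classical in
lemma sum_dvd (d : ℕ) (Q : (ZMod 3)[X]) (hQ : Q.Monic) :
    ∑ h ∈ MM d, (if Q ∣ h then chi h else 0) =
      if Q.natDegree ≤ d then chi Q * cc (d - Q.natDegree) else 0 := by
  split_ifs with hd
  · rw [cc, Finset.mul_sum, ← Finset.sum_filter]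
    symm
    refine Finset.sum_bij (fun g _ => Q * g) ?_ ?_ ?_ ?_
    · intro g hg
      obtain ⟨hg1, hg2⟩ := mem_MM.1 hg
      refine Finset.mem_filter.2 ⟨mem_MM.2 ⟨hQ.mul hg1, ?_⟩, dvd_mul_right _ _⟩
      rw [hQ.natDegree_mul hg1]; omega
    · intro a _ b _ hab
      exact mul_left_cancel₀ hQ.ne_zero hab
    · intro h hh
      obtain ⟨hh1, g, rfl⟩ := Finset.mem_filter.1 hh
      obtain ⟨hh2, hh3⟩ := mem_MM.1 hh1
      have hg := hQ.of_mul_monic_left hh2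
      refine ⟨g, mem_MM.2 ⟨hg, ?_⟩, rfl⟩
      rw [hQ.natDegree_mul hg] at hh3; omega
    · intro g hg
      rw [chi_mul _ _ hQ (mem_MM.1 hg).1]
  · refine Finset.sum_eq_zero fun h hh => ?_
    obtain ⟨h1, h2⟩ := mem_MM.1 hh
    rw [if_neg]
    intro hdv
    have := natDegree_le_of_dvd hdv h1.ne_zero
    omega

/-- Newton-type recursion for the `L`-series -/
lemma recursion (d : ℕ) : (d : ℤ) * cc d = ∑ m ∈ Finset.Icc 1 d, SS d m * cc (d - m) := by
  classical
  have h1 : (d : ℤ) * cc d = ∑ P ∈ Irr d, ∑ k ∈ Finset.Icc 1 d,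
      (P.natDegree : ℤ) * ∑ h ∈ MM d, (if P ^ k ∣ h then chi h else 0) := by
    rw [cc, Finset.mul_sum]
    have : ∀ h ∈ MM d, (d : ℤ) * chi h = ∑ P ∈ Irr d, ∑ k ∈ Finset.Icc 1 d,
        (P.natDegree : ℤ) * (if P ^ k ∣ h then chi h else 0) := by
      intro h hh
      obtain ⟨a, b⟩ := mem_MM.1 hh
      conv_lhs => rw [degree_sum d h a b]
      rw [Finset.sum_mul]
      refine Finset.sum_congr rfl fun P _ => ?_
      rw [Finset.sum_mul]
      refine Finset.sum_congr rfl fun k _ => ?_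
      split_ifs <;> simp
    rw [Finset.sum_congr rfl this, Finset.sum_comm]
    refine Finset.sum_congr rfl fun P _ => ?_
    rw [Finset.sum_comm]
    refine Finset.sum_congr rfl fun k _ => ?_
    rw [Finset.mul_sum]
  rw [h1]
  simp only [SS, Finset.sum_mul]
  symm
  rw [Finset.sum_comm]
  refine Finset.sum_congr rfl fun P hP => ?_
  rw [Finset.sum_comm]
  refine Finset.sum_congr rfl fun k hk => ?_
  symm
  obtain ⟨hPm, -, hPi⟩ := mem_Irr.1 hP
  rw [sum_dvd d _ (hPm.pow k), chi_pow P hPm, natDegree_pow]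
  simp only [ite_mul, zero_mul]
  rw [Finset.sum_ite_eq]
  have : 1 ≤ k * P.natDegree := Nat.mul_pos (Finset.mem_Icc.1 hk).1 hPi.natDegree_pos
  by_cases h : k * P.natDegree ≤ d
  · rw [if_pos h, if_pos (Finset.mem_Icc.2 ⟨this, h⟩), mul_assoc]
  · rw [if_neg h, if_neg (by rw [Finset.mem_Icc]; tauto), mul_zero]

end Mangoldt


section FieldSum
open Module IntermediateField

lemma field_sum (n : ℕ) (hn : 0 < n) (D : ℕ) (hD : n ≤ D) (F : Type*) [Field F] [Fintype F]
    [DecidableEq F] [Algebra (ZMod 3) F] (hF : Fintype.card F = 3 ^ n) :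
    ∑ x : F, quadraticChar F (aeval x ff) = SS D n := by
  classical
  have hrank : finrank (ZMod 3) F = n := by
    have := Module.card_eq_pow_finrank (K := ZMod 3) (V := F)
    rw [hF, ZMod.card] at this
    exact (Nat.pow_right_injective (le_refl 2 |>.trans (by norm_num)) this).symm
  have hint : ∀ x : F, IsIntegral (ZMod 3) x := fun x => Algebra.IsIntegral.isIntegral x
  have hdvd : ∀ x : F, (minpoly (ZMod 3) x).natDegree * finrank (ZMod 3)⟮x⟯ F = n := by
    intro x
    rw [← adjoin.finrank (hint x), Module.finrank_mul_finrank, hrank]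
  have hmap : ∀ x ∈ (Finset.univ : Finset F), minpoly (ZMod 3) x ∈ Irr D := by
    intro x _
    refine mem_Irr.2 ⟨minpoly.monic (hint x), ?_, minpoly.irreducible (hint x)⟩
    exact (Nat.le_of_dvd hn ⟨_, (hdvd x).symm⟩).trans hD
  rw [← Finset.sum_fiberwise_of_maps_to hmap, SS]
  refine Finset.sum_congr rfl fun P hP => ?_
  obtain ⟨hPm, hPd, hPi⟩ := mem_Irr.1 hP
  have hpos := hPi.natDegree_pos
  by_cases hdiv : P.natDegree ∣ n
  · obtain ⟨k, hk⟩ := hdiv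
    have hkpos : 0 < k := by
      rcases Nat.eq_zero_or_pos k with h | h
      · subst h; omega
      · exact h
    have hval : ∀ x ∈ Finset.univ.filter (fun x : F => minpoly (ZMod 3) x = P),
        quadraticChar F (aeval x ff) = chi P ^ k := by
      intro x hx
      have hx' := (Finset.mem_filter.1 hx).2
      rw [quadChar_norm, norm_aeval_eq, map_pow, chi, hx']
      congr 1
      have := hdvd x
      rw [hx', hk] at this
      exact Nat.eq_of_mul_eq_mul_left hpos this
    rw [Finset.sum_congr rfl hval, Finset.sum_const]
    have hcard : (Finset.univ.filter (fun x : F => minpoly (ZMod 3) x = P)).card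
        = P.natDegree := by
      have hset : (Finset.univ.filter (fun x : F => minpoly (ZMod 3) x = P))
          = (P.aroots F).toFinset := by
        ext x
        rw [Finset.mem_filter, Multiset.mem_toFinset, mem_aroots]
        constructor
        · rintro ⟨-, rfl⟩
          exact ⟨hPi.ne_zero, minpoly.aeval _ _⟩
        · rintro ⟨-, h⟩
          exact ⟨Finset.mem_univ _, (minpoly.eq_of_irreducible_of_monic hPi h hPm).symm⟩
      have hdv : P ∣ X ^ (Nat.card (ZMod 3)) ^ n - X :=
        hPi.natDegree_dvd_iff_dvd_X_pow_card_pow_sub_X.1 ⟨k, hk⟩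
      have hsplit : (P.map (algebraMap (ZMod 3) F)).Splits := by
        have h1 := FiniteField.splits_X_pow_nat_card_sub_X (K := F) 3
        have hcF : Nat.card F = Nat.card (ZMod 3) ^ n := by
          rw [Nat.card_eq_fintype_card, hF, Nat.card_eq_fintype_card, ZMod.card]
        rw [← hcF] at hdv
        refine Splits.of_dvd h1 ?_ (Polynomial.map_dvd (algebraMap (ZMod 3) F) hdv)
        exact Polynomial.map_ne_zero
          (FiniteField.X_pow_card_sub_X_ne_zero (ZMod 3) Finite.one_lt_card)
      have hsep : P.Separable := PerfectField.separable_of_irreducible hPi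
      rw [hset, Multiset.toFinset_card_of_nodup (nodup_roots hsep.map),
        ← hsplit.natDegree_eq_card_roots, natDegree_map]
    rw [hcard, Finset.sum_eq_single_of_mem k]
    · rw [if_pos (by rw [hk, mul_comm]), nsmul_eq_mul]
    · refine Finset.mem_Icc.2 ⟨hkpos, ?_⟩
      nlinarith
    · intro j _ hj
      rw [if_neg]
      intro h
      apply hj
      rw [hk, mul_comm] at h
      exact Nat.eq_of_mul_eq_mul_left hpos h
  · rw [Finset.sum_eq_zero, Finset.sum_eq_zero]
    · intro k _
      rw [if_neg]
      rintro rfl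
      exact hdiv (dvd_mul_left _ _)
    · intro x hx
      exact absurd ⟨_, (hdvd x).symm⟩ ((Finset.mem_filter.1 hx).2 ▸ hdiv)

end FieldSum


section Vanish

lemma ff_natDegree : ff.natDegree = 9 := by
  rw [ff]; compute_degree!

lemma ff_monic : ff.Monic := by
  rw [ff]; monicity!

lemma chi_swap (d : ℕ) (h : (ZMod 3)[X]) (hd : h.natDegree = d) :
    chi h = quadraticChar (ZMod 3) ((-1) ^ (d * 9)) *
      quadraticChar (ZMod 3) (resultant ff h 9 d) := by
  rw [chi, resultant_comm, map_mul, hd, ff_natDegree]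

lemma cc_vanish (d : ℕ) (hd : 9 ≤ d) : cc d = 0 := by
  have hmono := ff_monic
  -- facts about the involution
  have hr : ∀ h : (ZMod 3)[X], (h %ₘ ff).degree < 9 := by
    intro h
    have := degree_modByMonic_lt h hmono
    rwa [degree_eq_natDegree hmono.ne_zero, ff_natDegree] at this
  have key : ∀ h ∈ MM d, (h - C 2 * (h %ₘ ff)) ∈ MM d ∧
      (h - C 2 * (h %ₘ ff)) %ₘ ff = - (h %ₘ ff) ∧ chi (h - C 2 * (h %ₘ ff)) = - chi h := by
    intro h hh
    obtain ⟨hm, hdeg⟩ := mem_MM.1 hh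
    have hlt : (C 2 * (h %ₘ ff)).degree < h.degree := by
      rw [degree_eq_natDegree hm.ne_zero, hdeg]
      calc (C 2 * (h %ₘ ff)).degree = (h %ₘ ff).degree := degree_C_mul (by decide)
        _ < 9 := hr h
        _ ≤ d := by exact_mod_cast hd
    have hmem : (h - C 2 * (h %ₘ ff)) ∈ MM d := by
      refine mem_MM.2 ⟨hm.sub_of_left hlt, ?_⟩
      rw [natDegree_eq_of_degree_eq (degree_sub_eq_left_of_degree_lt hlt), hdeg]
    refine ⟨hmem, ?_, ?_⟩
    · rw [sub_modByMonic, C_mul', smul_modByMonic,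
        (modByMonic_eq_self_iff hmono).2 (degree_modByMonic_lt h hmono), ← C_mul']
      rw [C_ofNat]; ring
    · have hq : (h /ₘ ff).natDegree + 9 ≤ d := by
        rw [natDegree_divByMonic h hmono, hdeg, ff_natDegree]; omega
      have e1 : h = h %ₘ ff + ff * (h /ₘ ff) := (modByMonic_add_div h ff).symm
      have e2 : h - C 2 * (h %ₘ ff) = C (-1) * (h %ₘ ff) + ff * (h /ₘ ff) := by
        rw [C_ofNat, C_neg, C_1]
        linear_combination e1
      rw [chi_swap d _ (mem_MM.1 hmem).2, chi_swap d _ hdeg, e2,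
        resultant_add_mul_right _ _ _ _ _ hq ff_natDegree.le, resultant_C_mul_right]
      conv_rhs => rw [e1, resultant_add_mul_right _ _ _ _ _ hq ff_natDegree.le]
      have : quadraticChar (ZMod 3) ((-1) ^ 9) = -1 := by decide
      rw [map_mul, this]; ring
  have hinv : ∀ h ∈ MM d, (h - C 2 * (h %ₘ ff)) -
      C 2 * ((h - C 2 * (h %ₘ ff)) %ₘ ff) = h := by
    intro h hh
    rw [(key h hh).2.1]; ring
  have : cc d = - cc d := by
    conv_rhs => rw [cc, ← Finset.sum_neg_distrib]
    rw [cc]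
    refine Finset.sum_nbij' (fun h => h - C 2 * (h %ₘ ff)) (fun h => h - C 2 * (h %ₘ ff))
      (fun h hh => (key h hh).1) (fun h hh => (key h hh).1) hinv hinv ?_
    intro h hh
    rw [(key h hh).2.2, neg_neg]
  omega

end Vanish


section Compute

/-- addition of codes -/
def addc : ℕ → ℕ → ℕ → ℕ
  | 0, _, _ => 0
  | k + 1, a, b => (a % 3 + b % 3) % 3 + 3 * addc k (a / 3) (b / 3)

/-- multiplication by `X` modulo the degree 7 factor, on codes -/
def stepc (a : ℕ) : ℕ := addc 7 (3 * a) (a / 729 % 3 * 769)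

/-- bit mask of the orbit of a code under `stepc` -/
def runc : ℕ → ℕ → ℕ → ℕ
  | 0, _, M => M
  | n + 1, a, M =>
    match a, M with
    | 0, M => M
    | _, 0 => 0
    | a + 1, M + 1 => runc n (stepc (a + 1)) ((M + 1) ||| 2 ^ (a + 1))

/-- bit mask of the codes of powers of `X` modulo the degree 7 factor -/
def Mlit : ℕ :=
  14220658515547017330763595314642110292507245530800651753927930326306928638821129306572525850083435097986630048398921063917731428712890764161680343966048540569391907703415409696278174805667371159750577074342470727641893155669152356162499704721440758197747310658864072526570270878478772492536644414819783557966722812675460285633911951651177684241444233621815487065094466244480153182554075200165378287920113164432445500513966716966807974521676664860581529587416250497404648161023089009563668868998926488827121862578388089898856524840336952492973627790305055507724566050371102255980728496369306115839440416065551263386509446004649881229911598859959952389577483050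

set_option maxRecDepth 100000 in
lemma runc_eq : runc 1093 1 2 = Mlit := by decide +kernel

/-- tests all codes in `[lo, lo + 3 ^ k)` -/
def allc (p : ℕ → Bool) : ℕ → ℕ → Bool
  | 0, lo => p lo
  | k + 1, lo => allc p k lo && (allc p k (lo + 3 ^ k) && allc p k (lo + 2 * 3 ^ k))

/-- sums over all codes in `[lo, lo + 3 ^ k)` -/
def sumc (w : ℕ → ℤ) : ℕ → ℕ → ℤ
  | 0, lo => w lo
  | k + 1, lo => sumc w k lo + sumc w k (lo + 3 ^ k) + sumc w k (lo + 2 * 3 ^ k)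

lemma allc_spec (p : ℕ → Bool) (k lo : ℕ) (h : allc p k lo = true) :
    ∀ a < 3 ^ k, p (lo + a) = true := by
  induction k generalizing lo with
  | zero => intro a ha; simp at ha; subst ha; exact h
  | succ k ih =>
    rw [allc, Bool.and_eq_true, Bool.and_eq_true] at h
    intro a ha
    rw [pow_succ] at ha
    by_cases h1 : a < 3 ^ k
    · exact ih lo h.1 a h1
    · by_cases h2 : a < 2 * 3 ^ k
      · have := ih _ h.2.1 (a - 3 ^ k) (by omega)
        rwa [show lo + 3 ^ k + (a - 3 ^ k) = lo + a by omega] at this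
      · have := ih _ h.2.2 (a - 2 * 3 ^ k) (by omega)
        rwa [show lo + 2 * 3 ^ k + (a - 2 * 3 ^ k) = lo + a by omega] at this

lemma sumc_spec (w : ℕ → ℤ) (k lo : ℕ) :
    sumc w k lo = ∑ a ∈ Finset.range (3 ^ k), w (lo + a) := by
  induction k generalizing lo with
  | zero => simp [sumc]
  | succ k ih =>
    rw [sumc, ih, ih, ih, show 3 ^ (k + 1) = 3 ^ k + 3 ^ k + 3 ^ k by ring,
      Finset.sum_range_add, Finset.sum_range_add]
    simp only [add_assoc, two_mul]

/-- values of the symbol modulo the degree 7 factor -/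
def ps (a : ℕ) : ℤ := bif Mlit.testBit a then 1 else bif a == 0 then 0 else -1

/-- quadratic character of `𝔽₃` -/
def q3 (a : ℕ) : ℤ :=
  match a % 3 with
  | 0 => 0
  | 1 => 1
  | _ => -1

/-- digit sum -/
def dsum : ℕ → ℕ → ℕ
  | 0, _ => 0
  | k + 1, a => a % 3 + dsum k (a / 3)

/-- the summand -/
def term (u v a : ℕ) : ℤ := q3 (u + a) * q3 (v + dsum 7 a) * ps a

lemma cover : allc (fun a => a == 0 || (Mlit.testBit a || Mlit.testBit (addc 7 a a))) 7 0 = true := by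
  decide +kernel

lemma val0 : sumc (term 0 0) 0 1 = 1 := by decide +kernel
lemma val1 : sumc (term 0 0) 1 3 = 1 := by decide +kernel
lemma val2 : sumc (term 0 0) 2 9 = 2 := by decide +kernel
lemma val3 : sumc (term 0 0) 3 27 = 4 := by decide +kernel
lemma val4 : sumc (term 0 0) 4 81 = -2 := by decide +kernel
lemma val5 : sumc (term 0 0) 5 243 = 12 := by decide +kernel
lemma val6 : sumc (term 0 0) 6 729 = 18 := by decide +kernel
lemma val7 : sumc (term 2 2) 7 0 = 27 := by decide +kernel
lemma val8 : sumc (term 0 2) 7 0 + sumc (term 2 4) 7 0 + sumc (term 4 6) 7 0 = 81 := by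
  decide +kernel

lemma q3_spec (a : ℕ) : q3 a = quadraticChar (ZMod 3) (a : ZMod 3) := by
  have h : ((a % 3 : ℕ) : ZMod 3) = (a : ZMod 3) := ZMod.natCast_mod a 3
  rw [← h, q3]
  have hlt : a % 3 < 3 := Nat.mod_lt _ (by norm_num)
  generalize a % 3 = b at *
  interval_cases b <;> decide

lemma three_eq : ((3 : ℕ) : ZMod 3) = 0 := by decide

lemma pc_addc (k a b : ℕ) : pc k (addc k a b) = pc k a + pc k b := by
  induction k generalizing a b with
  | zero => simp [pc]
  | succ k ih =>
    rw [pc, pc, pc, addc]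
    have h1 : ((a % 3 + b % 3) % 3 + 3 * addc k (a / 3) (b / 3)) / 3 = addc k (a / 3) (b / 3) := by
      omega
    rw [h1, ih, Nat.cast_add, Nat.cast_mul, three_eq, zero_mul, add_zero, ZMod.natCast_mod,
      Nat.cast_add, ZMod.natCast_mod, ZMod.natCast_mod, C_add]
    ring

lemma pc_succ_top (k a : ℕ) : pc (k + 1) a = pc k a + C ((a / 3 ^ k : ℕ) : ZMod 3) * X ^ k := by
  induction k generalizing a with
  | zero => simp [pc]
  | succ k ih =>
    rw [pc, ih, pc, Nat.div_div_eq_div_mul, ← pow_succ']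
    ring

lemma pc_three_mul (k a : ℕ) : pc (k + 1) (3 * a) = X * pc k a := by
  rw [pc, Nat.cast_mul, three_eq, zero_mul, C_0, zero_add, Nat.mul_div_cancel_left _ (by norm_num)]

lemma pc_mod (k a t : ℕ) : pc k (3 ^ k * t + a) = pc k a := by
  induction k generalizing a with
  | zero => simp [pc]
  | succ k ih =>
    rw [pc, pc, pow_succ']
    have h1 : (3 * 3 ^ k * t + a) / 3 = 3 ^ k * t + a / 3 := by
      rw [mul_assoc]; omega
    rw [h1, ih, mul_assoc, Nat.cast_add, Nat.cast_mul, three_eq, zero_mul, zero_add]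

lemma pc_lt (k a : ℕ) (ha : a < 3 ^ k) (j : ℕ) : pc (k + j) a = pc k a := by
  induction j with
  | zero => rfl
  | succ j ih =>
    rw [← add_assoc, pc_succ_top, ih, Nat.div_eq_of_lt]
    · simp
    · exact ha.trans_le (Nat.pow_le_pow_right (by norm_num) (by omega))

lemma pc_monic (d a : ℕ) (hd : d ≤ 6) (ha : a < 3 ^ d) : X ^ d + pc d a = pc 7 (3 ^ d + a) := by
  have h1 : pc (d + 1) (3 ^ d + a) = pc d a + X ^ d := by
    rw [pc_succ_top]
    have h2 := pc_mod d a 1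
    rw [mul_one] at h2
    have h3 : (3 ^ d + a) / 3 ^ d = 1 := by
      rw [Nat.add_div_left _ (by positivity), Nat.div_eq_of_lt ha]
    rw [h2, h3]; simp
  have h4 := pc_lt (d + 1) (3 ^ d + a) (by rw [pow_succ]; omega) (6 - d)
  rw [show d + 1 + (6 - d) = 7 by omega, h1] at h4
  rw [h4, add_comm]

lemma pc_eval_zero (a : ℕ) : eval 0 (pc 7 a) = (a : ZMod 3) := by
  rw [pc]; simp

lemma pc_eval_one (k a : ℕ) : eval 1 (pc k a) = (dsum k a : ZMod 3) := by
  induction k generalizing a with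
  | zero => simp [pc, dsum]
  | succ k ih =>
    rw [pc, dsum, Nat.cast_add, ZMod.natCast_mod]
    simp [ih]

/-- the factor of degree 7 -/
noncomputable def g7 : (ZMod 3)[X] := X ^ 7 + 2 * X ^ 6 + 2 * X ^ 3 + 2 * X ^ 2 + 2 * X + 2

lemma g7_natDegree : g7.natDegree = 7 := by
  rw [g7]; compute_degree!

lemma g7_monic : g7.Monic := by
  rw [g7]; monicity!

lemma three_poly : (3 : (ZMod 3)[X]) = 0 := by
  have h := CharP.cast_eq_zero (ZMod 3)[X] 3
  simpa only [Nat.cast_ofNat] using h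

lemma ff_factor : ff = (X - C 0) * ((X - C 1) * g7) := by
  rw [ff, g7, C_0, C_1]
  linear_combination (X ^ 7 + X) * three_poly

lemma g7_eval_zero : eval 0 g7 = ((2 : ℕ) : ZMod 3) := by
  simp [g7]

lemma g7_eval_one : eval 1 g7 = ((2 : ℕ) : ZMod 3) := by
  simp [g7]; decide

/-- the symbol modulo the degree 7 factor -/
noncomputable def psi (h : (ZMod 3)[X]) : ℤ := quadraticChar (ZMod 3) (resultant g7 h 7 10)

lemma psi_eq (h : (ZMod 3)[X]) (d : ℕ) (hd : h.natDegree ≤ d) (hd2 : d ≤ 10) :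
    psi h = quadraticChar (ZMod 3) (resultant g7 h 7 d) := by
  have := resultant_add_right_deg g7 h 7 d (10 - d) hd
  have hc : g7.coeff 7 = 1 := by
    rw [← g7_natDegree]; exact g7_monic
  rw [hc, one_pow, one_mul, show d + (10 - d) = 10 by omega] at this
  rw [psi, this]

lemma chi_eq (d : ℕ) (hd : d ≤ 10) (h : (ZMod 3)[X]) (hm : h.natDegree = d) :
    chi h = (-1) ^ d * (quadraticChar (ZMod 3) (eval 0 h) * quadraticChar (ZMod 3) (eval 1 h)
      * psi h) := by
  have hn1 : ((X - C 1) * g7).natDegree = 8 := by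
    rw [(monic_X_sub_C _).natDegree_mul g7_monic, g7_natDegree, natDegree_X_sub_C]
  have e1 := resultant_mul_right h (X - C 0) ((X - C 1) * g7) d hm.le
  have e2 := resultant_mul_right h (X - C 1) g7 d hm.le
  rw [← (monic_X_sub_C (0 : ZMod 3)).natDegree_mul ((monic_X_sub_C (1 : ZMod 3)).mul g7_monic),
    ← ff_factor] at e1
  rw [← (monic_X_sub_C (1 : ZMod 3)).natDegree_mul g7_monic] at e2
  rw [e2, natDegree_X_sub_C, natDegree_X_sub_C, resultant_X_sub_C_right _ _ _ hm.le,
    resultant_X_sub_C_right _ _ _ hm.le, g7_natDegree, resultant_comm h g7] at e1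
  rw [psi_eq h d hm.le hd, chi, hm, e1]
  have hq : quadraticChar (ZMod 3) (-1) = -1 := by decide
  simp only [map_mul, map_pow, hq]
  have : ((-1 : ℤ) ^ d) * ((-1) ^ d * (-1) ^ (d * 7)) = (-1) ^ d := by
    rw [← pow_add, ← pow_add, show d + (d + d * 7) = d + 2 * (4 * d) by ring, pow_add, pow_mul]
    simp
  linear_combination (quadraticChar (ZMod 3) (eval 0 h) * quadraticChar (ZMod 3) (eval 1 h) *
    quadraticChar (ZMod 3) (resultant g7 h 7 d)) * this

lemma pc_natDegree (a : ℕ) : (pc 7 a).natDegree ≤ 6 := by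
  exact natDegree_le_iff_coeff_eq_zero.2 fun m hm =>
    (degree_lt_iff_coeff_zero _ _).1 (pc_degree_lt 7 a) m (by omega)

lemma psi_X_mul (h : (ZMod 3)[X]) (hd : h.natDegree ≤ 9) : psi (X * h) = psi h := by
  have e := resultant_mul_right g7 (X - C 0) h 7 g7_natDegree.le
  have hX : (X : (ZMod 3)[X]) = X - C 0 := by simp
  rw [hX, psi_eq ((X - C 0) * h) _ natDegree_mul_le (by rw [natDegree_X_sub_C]; omega), e, map_mul,
    natDegree_X_sub_C, resultant_X_sub_C_right _ _ _ g7_natDegree.le, g7_eval_zero,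
    psi_eq h _ le_rfl (by omega)]
  have : quadraticChar (ZMod 3) ((-1) ^ 7 * ((2 : ℕ) : ZMod 3)) = 1 := by decide
  rw [this, one_mul]

lemma psi_add_mul (h q : (ZMod 3)[X]) (hq : q.natDegree ≤ 3) : psi (h + g7 * q) = psi h := by
  rw [psi, psi, resultant_add_mul_right _ _ _ _ _ (by omega) g7_natDegree.le]

lemma psi_neg (h : (ZMod 3)[X]) : psi (h + h) = - psi h := by
  have : h + h = C (-1) * h := by
    rw [C_neg, C_1]; linear_combination h * three_poly
  rw [this, psi, resultant_C_mul_right, map_mul, psi]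
  have : quadraticChar (ZMod 3) ((-1) ^ 7) = -1 := by decide
  rw [this, neg_one_mul]

lemma natCast_code (a b : ℕ) (h : a % 3 = b) : ((a : ℕ) : ZMod 3) = (b : ZMod 3) := by
  rw [← h, ZMod.natCast_mod]

lemma pc_top_mul (t : ℕ) (ht : t < 3) : pc 7 (t * 769) = C (t : ZMod 3) * (X ^ 7 - g7) := by
  rw [g7]
  interval_cases t
  · simp [pc]
  · simp only [pc, Nat.reduceMul, Nat.reduceDiv]
    rw [natCast_code 769 1 rfl, natCast_code 256 1 rfl, natCast_code 85 1 rfl,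
      natCast_code 28 1 rfl, natCast_code 9 0 rfl, natCast_code 3 0 rfl]
    simp only [Nat.cast_zero, Nat.cast_one, C_0, C_1]
    linear_combination (X ^ 6 + X ^ 3 + X ^ 2 + X + 1) * three_poly
  · simp only [pc, Nat.reduceMul, Nat.reduceDiv]
    rw [natCast_code 1538 2 rfl, natCast_code 512 2 rfl, natCast_code 170 2 rfl,
      natCast_code 56 2 rfl, natCast_code 18 0 rfl, natCast_code 6 0 rfl]
    have h2 : (C ((2 : ℕ) : ZMod 3) : (ZMod 3)[X]) = 2 := map_natCast C 2
    rw [h2, Nat.cast_zero, C_0]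
    linear_combination 2 * (X ^ 6 + X ^ 3 + X ^ 2 + X + 1) * three_poly

lemma psi_stepc (a : ℕ) : psi (pc 7 (stepc a)) = psi (pc 7 a) := by
  have h1 : pc 7 (stepc a) = X * pc 7 a + g7 * C (-((a / 729 : ℕ) : ZMod 3)) := by
    rw [stepc, pc_addc, pc_three_mul, pc_top_mul _ (Nat.mod_lt _ (by norm_num)), pc_succ_top 6 a,
      ZMod.natCast_mod, C_neg]
    norm_num
    ring
  rw [h1, psi_add_mul _ _ (by rw [natDegree_C]; omega),
    psi_X_mul _ ((pc_natDegree a).trans (by norm_num))]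

lemma psi_pc_one : psi (pc 7 1) = 1 := by
  have : pc 7 1 = 1 := by simp [pc]
  have hc : g7.coeff 7 = 1 := by
    rw [← g7_natDegree]; exact g7_monic
  have hd : (1 : (ZMod 3)[X]).natDegree ≤ 0 := by simp
  have hr : resultant g7 1 7 0 = 1 := by simp
  rw [this, psi_eq 1 0 hd (by norm_num), hr]; simp

lemma runc_succ (n a M : ℕ) : runc (n + 1) a M = M ∨ runc (n + 1) a M =
    runc n (stepc a) (M ||| 2 ^ a) := by
  cases a with
  | zero => left; rfl
  | succ a =>
    cases M with
    | zero => left; rfl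
    | succ M => right; rfl

lemma runc_spec (n a M : ℕ) (ha : psi (pc 7 a) = 1)
    (hM : ∀ c, M.testBit c = true → psi (pc 7 c) = 1) :
    ∀ c, (runc n a M).testBit c = true → psi (pc 7 c) = 1 := by
  induction n generalizing a M with
  | zero => exact hM
  | succ n ih =>
    rcases runc_succ n a M with h | h
    · rw [h]; exact hM
    · rw [h]
      apply ih
      · rw [psi_stepc, ha]
      · intro c hc
        rw [Nat.testBit_or, Bool.or_eq_true] at hc
        rcases hc with hc | hc
        · exact hM c hc
        · rw [Nat.testBit_two_pow] at hc
          have : a = c := by simpa using hc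
          rw [← this, ha]

lemma Mlit_spec (c : ℕ) (hc : Mlit.testBit c = true) : psi (pc 7 c) = 1 := by
  rw [← runc_eq] at hc
  refine runc_spec 1093 1 2 psi_pc_one ?_ c hc
  intro c hc
  have h2 : (2 : ℕ) = 2 ^ 1 := rfl
  rw [h2, Nat.testBit_two_pow] at hc
  have : 1 = c := by simpa using hc
  rw [← this, psi_pc_one]

lemma psi_pc_zero : psi (pc 7 0) = 0 := by
  have : pc 7 0 = 0 := by simp [pc]
  rw [this, psi, resultant_zero_right]; simp

lemma ps_spec (a : ℕ) (ha : a < 2187) : psi (pc 7 a) = ps a := by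
  have h := allc_spec _ 7 0 cover a ha
  rw [zero_add] at h
  rw [ps]
  rcases hb : Mlit.testBit a with _ | _
  · simp only [hb, Bool.false_or, Bool.or_eq_true, beq_iff_eq] at h
    rcases h with rfl | h
    · simpa using psi_pc_zero
    · have h0 : a ≠ 0 := by
        rintro rfl
        have := Mlit_spec _ h
        rw [pc_addc, psi_neg, psi_pc_zero] at this
        norm_num at this
      have := Mlit_spec _ h
      rw [pc_addc, psi_neg] at this
      have hb0 : (a == 0) = false := by simp [h0]
      simp only [hb0, cond_false]
      omega
  · simpa using Mlit_spec a hb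

lemma cc_small (d : ℕ) (hd : d ≤ 6) : cc d = (-1) ^ d * sumc (term 0 0) d (3 ^ d) := by
  rw [cc, sum_MM, sumc_spec, Finset.mul_sum]
  refine Finset.sum_congr rfl fun a ha => ?_
  rw [Finset.mem_range] at ha
  have hmem : X ^ d + pc d a ∈ MM d := by
    classical
    exact Finset.mem_image_of_mem _ (Finset.mem_range.2 ha)
  rw [chi_eq d (by omega) _ (mem_MM.1 hmem).2, pc_monic d a hd ha, pc_eval_zero, pc_eval_one,
    ps_spec, term, q3_spec, q3_spec, zero_add, zero_add]
  have : 3 ^ d ≤ 3 ^ 6 := Nat.pow_le_pow_right (by norm_num) hd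
  omega

lemma sum_MM_add {A : Type*} [AddCommMonoid A] (d : ℕ) (w : (ZMod 3)[X] → A) :
    ∑ h ∈ MM (d + 7), w h =
      ∑ q ∈ MM d, ∑ a ∈ Finset.range (3 ^ 7), w (pc 7 a + g7 * q) := by
  rw [← Finset.sum_product']
  have hdeg : ∀ a, (pc 7 a).degree < g7.degree := by
    intro a
    rw [degree_eq_natDegree g7_monic.ne_zero, g7_natDegree]
    exact pc_degree_lt 7 a
  symm
  refine Finset.sum_bij (fun x _ => pc 7 x.2 + g7 * x.1) ?_ ?_ ?_ ?_
  · rintro ⟨q, a⟩ hx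
    obtain ⟨hq, -⟩ := Finset.mem_product.1 hx
    obtain ⟨hq1, hq2⟩ := mem_MM.1 hq
    have hmon := g7_monic.mul hq1
    have hn : (g7 * q).natDegree = d + 7 := by
      rw [g7_monic.natDegree_mul hq1, g7_natDegree, hq2, add_comm]
    have hlt : (pc 7 a).degree < (g7 * q).degree := by
      rw [degree_eq_natDegree hmon.ne_zero, hn]
      refine (pc_degree_lt 7 a).trans_le ?_
      exact_mod_cast Nat.le_add_left _ _
    refine mem_MM.2 ⟨hmon.add_of_right hlt, ?_⟩
    rw [natDegree_add_eq_right_of_degree_lt hlt, hn]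
  · rintro ⟨q, a⟩ hx ⟨q', a'⟩ hx' h
    obtain ⟨-, ha⟩ := Finset.mem_product.1 hx
    obtain ⟨-, ha'⟩ := Finset.mem_product.1 hx'
    have u1 := div_modByMonic_unique q (pc 7 a) g7_monic ⟨rfl, hdeg a⟩
    have u2 := div_modByMonic_unique q' (pc 7 a') g7_monic ⟨rfl, hdeg a'⟩
    simp only at h
    rw [h] at u1
    have hq : q = q' := u1.1.symm.trans u2.1
    have hp : pc 7 a = pc 7 a' := u1.2.symm.trans u2.2
    rw [hq, pc_inj 7 a a' (Finset.mem_range.1 ha) (Finset.mem_range.1 ha') hp]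
  · intro h hh
    obtain ⟨h1, h2⟩ := mem_MM.1 hh
    obtain ⟨a, ha, hpa⟩ := pc_surj 7 (h %ₘ g7) (by
      have := degree_modByMonic_lt h g7_monic
      rwa [degree_eq_natDegree g7_monic.ne_zero, g7_natDegree] at this)
    refine ⟨(h /ₘ g7, a), Finset.mem_product.2 ⟨mem_MM.2 ⟨?_, ?_⟩, Finset.mem_range.2 ha⟩, ?_⟩
    · rw [Monic, leadingCoeff_divByMonic_of_monic g7_monic]
      · exact h1
      · rw [degree_eq_natDegree g7_monic.ne_zero, g7_natDegree, degree_eq_natDegree h1.ne_zero, h2]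
        exact_mod_cast Nat.le_add_left _ _
    · rw [natDegree_divByMonic h g7_monic, h2, g7_natDegree]; omega
    · simp only [hpa]; exact modByMonic_add_div h g7
  · intro x _; rfl

lemma lt_2187 {a : ℕ} (ha : a ∈ Finset.range (3 ^ 7)) : a < 2187 := by
  rw [Finset.mem_range] at ha
  norm_num at ha
  exact ha

lemma cc_big (d : ℕ) (hd : d ≤ 1) : cc (d + 7) = (-1) ^ (d + 7) *
    ∑ q ∈ MM d, ∑ a ∈ Finset.range (3 ^ 7),
      quadraticChar (ZMod 3) (2 * eval 0 q + a) *
        quadraticChar (ZMod 3) (2 * eval 1 q + dsum 7 a) * ps a := by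
  have : cc (d + 7) = ∑ h ∈ MM (d + 7), (-1) ^ (d + 7) * (quadraticChar (ZMod 3) (eval 0 h) *
      quadraticChar (ZMod 3) (eval 1 h) * psi h) := by
    rw [cc]
    exact Finset.sum_congr rfl fun h hh => chi_eq _ (by omega) _ (mem_MM.1 hh).2
  rw [this, ← Finset.mul_sum, sum_MM_add]
  refine congrArg _ (Finset.sum_congr rfl fun q hq => Finset.sum_congr rfl fun a ha => ?_)
  have h7 := lt_2187 ha
  clear ha
  rw [psi_add_mul _ _ (by rw [(mem_MM.1 hq).2]; omega), ps_spec a h7,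
    eval_add, eval_add, eval_mul, eval_mul, g7_eval_zero, g7_eval_one, pc_eval_zero, pc_eval_one]
  push_cast
  rw [add_comm (a : ZMod 3), add_comm (dsum 7 a : ZMod 3)]

lemma sum_term (u v : ℕ) (x y : ZMod 3) (hx : x = u) (hy : y = v) :
    ∑ a ∈ Finset.range (3 ^ 7), quadraticChar (ZMod 3) (x + a) *
        quadraticChar (ZMod 3) (y + dsum 7 a) * ps a = sumc (term u v) 7 0 := by
  rw [sumc_spec]
  refine Finset.sum_congr rfl fun a _ => ?_
  rw [term, q3_spec, q3_spec, zero_add, Nat.cast_add, Nat.cast_add, hx, hy]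

lemma cc_seven : cc 7 = -27 := by
  have h := cc_big 0 (by norm_num)
  rw [sum_MM, pow_zero, Finset.sum_range_one, sum_term 2 2 _ _ (by simp [pc]) (by simp [pc]),
    val7] at h
  rw [h]; norm_num

lemma cc_eight : cc 8 = 81 := by
  have h := cc_big 1 (by norm_num)
  rw [sum_MM, show (3 : ℕ) ^ 1 = 2 + 1 from rfl, Finset.sum_range_succ, Finset.sum_range_succ,
    Finset.sum_range_one,
    sum_term 0 2 _ _ (by simp [pc]) (by simp [pc]),
    sum_term 2 4 _ _ (by simp [pc]) (by simp [pc]; norm_num),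
    sum_term 4 6 _ _ (by simp [pc]; norm_num) (by simp [pc]; norm_num), val8] at h
  rw [h]; norm_num

lemma cc_values : cc 0 = 1 ∧ cc 1 = -1 ∧ cc 2 = 2 ∧ cc 3 = -4 ∧ cc 4 = -2 ∧ cc 5 = -12 ∧
    cc 6 = 18 ∧ cc 7 = -27 ∧ cc 8 = 81 := by
  refine ⟨?_, ?_, ?_, ?_, ?_, ?_, ?_, cc_seven, cc_eight⟩
  · rw [cc_small 0 (by norm_num), pow_zero, pow_zero, val0]; norm_num
  · rw [cc_small 1 (by norm_num), show 3 ^ 1 = 3 by norm_num, val1]; norm_num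
  · rw [cc_small 2 (by norm_num), show 3 ^ 2 = 9 by norm_num, val2]; norm_num
  · rw [cc_small 3 (by norm_num), show 3 ^ 3 = 27 by norm_num, val3]; norm_num
  · rw [cc_small 4 (by norm_num), show 3 ^ 4 = 81 by norm_num, val4]; norm_num
  · rw [cc_small 5 (by norm_num), show 3 ^ 5 = 243 by norm_num, val5]; norm_num
  · rw [cc_small 6 (by norm_num), show 3 ^ 6 = 729 by norm_num, val6]; norm_num

end Compute


section Newton

lemma newton_multiset (s : Multiset ℂ) (d : ℕ) :
    (d : ℂ) * ((-1) ^ d * s.esymm d) =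
      - ∑ m ∈ Finset.Icc 1 d, (s.map (· ^ m)).sum * ((-1) ^ (d - m) * s.esymm (d - m)) := by
  classical
  have h := MvPolynomial.mul_esymm_eq_sum s ℂ d
  have h2 := congrArg (MvPolynomial.aeval (fun x : s => (x : ℂ))) h
  have hes : ∀ k, MvPolynomial.aeval (fun x : s => (x : ℂ)) (MvPolynomial.esymm s ℂ k)
      = s.esymm k := by
    intro k
    rw [MvPolynomial.aeval_esymm_eq_multiset_esymm, Multiset.map_univ_coe]
  have hps : ∀ k, MvPolynomial.aeval (fun x : s => (x : ℂ)) (MvPolynomial.psum s ℂ k)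
      = (s.map (· ^ k)).sum := by
    intro k
    rw [MvPolynomial.psum, map_sum]
    simp only [map_pow, MvPolynomial.aeval_X]
    conv_rhs => rw [← Multiset.map_univ_coe s, Multiset.map_map]
    rfl
  simp only [map_mul, map_sum, map_pow, map_neg, map_one, map_natCast, hes, hps] at h2
  have h3 : ∑ a ∈ Finset.HasAntidiagonal.antidiagonal d with a.1 < d,
      (-1) ^ a.1 * s.esymm a.1 * (s.map (· ^ a.2)).sum =
      ∑ m ∈ Finset.Icc 1 d, (s.map (· ^ m)).sum * ((-1) ^ (d - m) * s.esymm (d - m)) := by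
    refine Finset.sum_bij' (fun a _ => a.2) (fun m _ => (d - m, m)) ?_ ?_ ?_ ?_ ?_
    · rintro ⟨a, b⟩ h
      simp only [Finset.mem_filter, Finset.HasAntidiagonal.mem_antidiagonal] at h
      simp only [Finset.mem_Icc]; omega
    · intro m h
      simp only [Finset.mem_Icc] at h
      simp only [Finset.mem_filter, Finset.HasAntidiagonal.mem_antidiagonal]; omega
    · rintro ⟨a, b⟩ h
      simp only [Finset.mem_filter, Finset.HasAntidiagonal.mem_antidiagonal] at h
      simp only [Prod.mk.injEq, and_true]; omega
    · intro m h
      rfl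
    · rintro ⟨a, b⟩ h
      simp only [Finset.mem_filter, Finset.HasAntidiagonal.mem_antidiagonal] at h
      have : d - b = a := by omega
      rw [this]; ring
  rw [h3] at h2
  rw [mul_left_comm, h2, ← mul_assoc, ← pow_add]
  have : (-1 : ℂ) ^ (d + (d + 1)) = -1 := by
    rw [← add_assoc, pow_succ, ← two_mul, pow_mul]; simp
  rw [this]; ring

lemma P3_natDegree : P3.natDegree = 8 := by
  rw [P3]; compute_degree!

lemma P3_monic : P3.Monic := by
  rw [P3]; monicity!

lemma P3_esymm (d : ℕ) (hd : d ≤ 8) : (-1) ^ d * P3.roots.esymm d = P3.coeff (8 - d) := by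
  have hcard : P3.roots.card = P3.natDegree :=
    (IsAlgClosed.splits P3).natDegree_eq_card_roots.symm
  rw [coeff_eq_esymm_roots_of_card hcard (by rw [P3_natDegree]; omega), P3_monic.leadingCoeff,
    P3_natDegree, one_mul]
  congr <;> omega

lemma P3_esymm_zero (d : ℕ) (hd : 8 < d) : P3.roots.esymm d = 0 := by
  have hcard : P3.roots.card = 8 := by
    rw [← P3_natDegree]; exact (IsAlgClosed.splits P3).natDegree_eq_card_roots.symm
  rw [Multiset.esymm, Multiset.powersetCard_eq_empty d (by rw [hcard]; exact hd)]
  simp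

lemma P3_coeffs : P3.coeff 8 = 1 ∧ P3.coeff 7 = -1 ∧ P3.coeff 6 = 2 ∧ P3.coeff 5 = -4 ∧
    P3.coeff 4 = -2 ∧ P3.coeff 3 = -12 ∧ P3.coeff 2 = 18 ∧ P3.coeff 1 = -27 ∧
    P3.coeff 0 = 81 := by
  have h : P3 = C 1 * X ^ 8 + C (-1) * X ^ 7 + C 2 * X ^ 6 + C (-4) * X ^ 5 + C (-2) * X ^ 4
      + C (-12) * X ^ 3 + C 18 * X ^ 2 + C (-27) * X ^ 1 + C 81 * X ^ 0 := by
    rw [P3]; simp only [map_neg, map_one, map_ofNat]; ring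
  rw [h]
  refine ⟨?_, ?_, ?_, ?_, ?_, ?_, ?_, ?_, ?_⟩ <;> simp only [coeff_add, coeff_C_mul_X_pow] <;>
    norm_num

end Newton


section Final

lemma cc_esymm (d : ℕ) : (cc d : ℂ) = (-1) ^ d * P3.roots.esymm d := by
  by_cases hd : d ≤ 8
  · rw [P3_esymm d hd]
    obtain ⟨h0, h1, h2, h3, h4, h5, h6, h7, h8⟩ := cc_values
    obtain ⟨k8, k7, k6, k5, k4, k3, k2, k1, k0⟩ := P3_coeffs
    interval_cases d
    · rw [h0, k8]; norm_num
    · rw [h1, k7]; norm_num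
    · rw [h2, k6]; norm_num
    · rw [h3, k5]; norm_num
    · rw [h4, k4]; norm_num
    · rw [h5, k3]; norm_num
    · rw [h6, k2]; norm_num
    · rw [h7, k1]; norm_num
    · rw [h8, k0]; norm_num
  · rw [cc_vanish d (by omega), P3_esymm_zero d (by omega)]; simp

lemma SS_indep (m D : ℕ) (hm : 0 < m) (hD : m ≤ D) : SS D m = SS m m := by
  classical
  have : Fintype (GaloisField 3 m) := Fintype.ofFinite _
  have hc : Fintype.card (GaloisField 3 m) = 3 ^ m := by
    rw [← Nat.card_eq_fintype_card, GaloisField.card 3 m hm.ne']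
  rw [← field_sum m hm D hD (GaloisField 3 m) hc, ← field_sum m hm m le_rfl (GaloisField 3 m) hc]

lemma SS_roots (n : ℕ) (hn : 0 < n) : (SS n n : ℂ) = -(P3.roots.map (· ^ n)).sum := by
  induction n using Nat.strong_induction_on with
  | _ n ih =>
    have h1 := congrArg (Int.cast : ℤ → ℂ) (recursion n)
    have h2 := newton_multiset P3.roots n
    push_cast at h1
    simp only [← cc_esymm] at h2
    rw [h1, ← Finset.sum_neg_distrib] at h2
    obtain ⟨k, rfl⟩ : ∃ k, n = k + 1 := ⟨n - 1, by omega⟩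
    rw [Finset.sum_Icc_succ_top (by omega), Finset.sum_Icc_succ_top (by omega)] at h2
    have h3 : ∀ m ∈ Finset.Icc 1 k, (SS (k + 1) m : ℂ) * (cc (k + 1 - m) : ℂ) =
        -((P3.roots.map (· ^ m)).sum * (cc (k + 1 - m) : ℂ)) := by
      intro m hm
      rw [Finset.mem_Icc] at hm
      rw [SS_indep m (k + 1) (by omega) (by omega), ih m (by omega) (by omega), neg_mul]
    rw [Finset.sum_congr rfl h3, Nat.sub_self, cc_values.1] at h2
    have h4 := add_left_cancel h2
    rw [Int.cast_one, mul_one, mul_one] at h4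
    exact h4

end Final

/-- For every `n ≥ 1` and every finite field `F` with `3 ^ n` elements, the number of pairs
`(x, y) ∈ F × F` with `y² = x⁹ + x⁸ + x⁷ + 2x⁵ + x` equals `3 ^ n` minus the sum of the `n`-th
powers of the complex roots (with multiplicity) of `P3`. -/
theorem point_count_F3 (n : ℕ) (hn : 0 < n) (F : Type) [Field F] [Fintype F]
    (hF : Fintype.card F = 3 ^ n) :
    ((Nat.card {p : F × F // p.2 ^ 2 = p.1 ^ 9 + p.1 ^ 8 + p.1 ^ 7 + 2 * p.1 ^ 5 + p.1} : ℕ) : ℂ)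
      = 3 ^ n - (P3.roots.map (· ^ n)).sum := by
  classical
  have hchar : CharP F 3 := charP_of_card_eq_prime_pow hF
  let _ : Algebra (ZMod 3) F := ZMod.algebra F 3
  have h2 : ringChar F ≠ 2 := by
    rw [ringChar.eq F 3]; norm_num
  have hs := field_sum n hn n le_rfl F hF
  have hev : ∀ x : F, aeval x ff = x ^ 9 + x ^ 8 + x ^ 7 + 2 * x ^ 5 + x := by
    intro x
    have h : aeval x (2 : (ZMod 3)[X]) = 2 := map_ofNat _ 2
    simp [ff, h]
  have hcard : (Nat.card {p : F × F // p.2 ^ 2 = p.1 ^ 9 + p.1 ^ 8 + p.1 ^ 7 + 2 * p.1 ^ 5 + p.1} : ℤ)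
      = ∑ x : F, (quadraticChar F (aeval x ff) + 1) := by
    have e : {p : F × F // p.2 ^ 2 = p.1 ^ 9 + p.1 ^ 8 + p.1 ^ 7 + 2 * p.1 ^ 5 + p.1} ≃
        Σ x : F, {y : F // y ^ 2 = x ^ 9 + x ^ 8 + x ^ 7 + 2 * x ^ 5 + x} :=
      { toFun := fun p => ⟨p.1.1, ⟨p.1.2, p.2⟩⟩
        invFun := fun q => ⟨(q.1, q.2.1), q.2.2⟩
        left_inv := fun _ => rfl
        right_inv := fun _ => rfl }
    rw [Nat.card_congr e, Nat.card_sigma, Nat.cast_sum]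
    refine Finset.sum_congr rfl fun x _ => ?_
    rw [← quadraticChar_card_sqrts h2, hev, Nat.card_eq_fintype_card, Set.toFinset_card]
    norm_cast
  rw [Finset.sum_add_distrib, hs, Finset.sum_const, Finset.card_univ, hF] at hcard
  have hfin := congrArg (Int.cast : ℤ → ℂ) hcard
  push_cast at hfin
  rw [hfin, SS_roots n hn]
  simp
  ring
end

section
/- For every positive integer n, the number of pairs (x, y) ∈ F_{5^n} × F_{5^n} satisfying y² = x⁹ + x⁶ + 2x⁵ + x equals 5^n minus the sum of the n-th powers of the complex roots (with multiplicity) of the polynomial P₅(T) = T⁸ − T⁷ + 2T⁶ − 4T⁵ + 16T⁴ − 20T³ + 50T² − 125T + 625. (Equivalently, the L-polynomial of the curve y² = x⁹ + x⁶ + 2x⁵ + x over F₅ is 1 − T + 2T² − 4T³ + 16T⁴ − 20T⁵ + 50T⁶ − 125T⁷ + 625T⁸; the curve has exactly one point at infinity since the right-hand side has odd degree 9.) -/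
open Polynomial

/-- The Weil polynomial of the Jacobian of `y² = x⁹ + x⁶ + 2x⁵ + x` over `𝔽₅`,
viewed as a polynomial with complex coefficients. -/
noncomputable def P5 : Polynomial ℂ :=
  X ^ 8 - X ^ 7 + 2 * X ^ 6 - 4 * X ^ 5 + 16 * X ^ 4 - 20 * X ^ 3 + 50 * X ^ 2 - 125 * X + 625

namespace PC5

instance fact5 : Fact (Nat.Prime 5) := ⟨by norm_num⟩

/-- The base field. -/
abbrev F5 := ZMod 5

/-- The quadratic character of the prime field with five elements. -/
noncomputable def qc (a : F5) : ℤ := quadraticChar F5 a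

lemma qc_mul (a b : F5) : qc (a * b) = qc a * qc b := map_mul (quadraticChar F5) a b
lemma qc_one : qc 1 = 1 := by simp [qc]
lemma qc_zero : qc 0 = 0 := by simp [qc]
lemma qc_pow (a : F5) (n : ℕ) : qc (a ^ n) = qc a ^ n := map_pow (quadraticChar F5) a n
lemma qc_two : qc 2 = -1 := by decide +kernel
lemma qc_neg_one : qc (-1) = 1 := by decide +kernel
lemma qc_sq {a : F5} (h : a ≠ 0) : qc a * qc a = 1 := by
  have := quadraticChar_sq_one h
  rw [← sq]; exact this
lemma sum_qc : ∑ a : F5, qc a = 0 := by decide +kernel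
lemma sum_qc_sq : ∑ a : F5, qc a * qc a = 4 := by decide +kernel
lemma qc_eq_zero {a : F5} : qc a = 0 ↔ a = 0 := quadraticChar_eq_zero_iff

lemma sum_qc_affine (b c : F5) (hc : c ≠ 0) : ∑ t : F5, qc (b + t * c) = 0 := by
  rw [← sum_qc]
  exact Fintype.sum_equiv ((Equiv.mulRight₀ c hc).trans (Equiv.addLeft b)) _ _ (fun t => by simp)

/-- Quadratic symbol of the resultant. -/
noncomputable def jac (a b : F5[X]) : ℤ := qc (a.resultant b)

lemma res_deg {a : F5[X]} (ha : a.Monic) (b : F5[X]) {n : ℕ} (hn : b.natDegree ≤ n) :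
    a.resultant b a.natDegree n = a.resultant b := by
  obtain ⟨k, rfl⟩ := Nat.exists_eq_add_of_le hn
  rw [resultant_add_right_deg _ _ _ _ _ le_rfl]
  simp [ha.coeff_natDegree]

lemma res_add {a : F5[X]} (ha : a.Monic) (b c : F5[X]) :
    a.resultant (b + a * c) = a.resultant b := by
  have h1 : (b + a * c).natDegree ≤ b.natDegree + (c.natDegree + a.natDegree) := by
    refine (natDegree_add_le _ _).trans (max_le (by omega) (natDegree_mul_le.trans (by omega)))
  rw [← res_deg ha _ h1, resultant_add_mul_right _ _ _ _ _ (by omega) le_rfl,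
    res_deg ha _ (by omega)]

lemma res_mul (a b c : F5[X]) (ha : a.Monic) :
    a.resultant (b * c) = a.resultant b * a.resultant c := by
  rw [← resultant_mul_right _ _ _ _ le_rfl, res_deg ha _ natDegree_mul_le]

lemma jac_mul {a : F5[X]} (ha : a.Monic) (b c : F5[X]) : jac a (b * c) = jac a b * jac a c := by
  rw [jac, res_mul _ _ _ ha, qc_mul]; rfl

lemma jac_add {a : F5[X]} (ha : a.Monic) (b c : F5[X]) : jac a (b + a * c) = jac a b := by
  rw [jac, res_add ha]; rfl

lemma jac_comm (a b : F5[X]) : jac a b = jac b a := by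
  rw [jac, resultant_comm, qc_mul, qc_pow, qc_neg_one]; simp [jac]

lemma jac_C {a : F5[X]} (ha : a.Monic) (c : F5) : jac a (C c) = qc c ^ a.natDegree := by
  rw [jac, resultant_C_right, qc_mul, qc_pow, qc_pow]
  simp [qc_one, ha.coeff_natDegree]

lemma jac_one {a : F5[X]} (ha : a.Monic) : jac a 1 = 1 := by
  have := jac_C ha 1
  simpa [qc_one] using this

lemma jac_pow {a : F5[X]} (ha : a.Monic) (b : F5[X]) (k : ℕ) : jac a (b ^ k) = jac a b ^ k := by
  induction k with
  | zero => simp [jac_one ha]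
  | succ k ih => rw [pow_succ, jac_mul ha, ih, pow_succ]

lemma jac_modByMonic {a : F5[X]} (ha : a.Monic) (b : F5[X]) : jac a (b %ₘ a) = jac a b := by
  conv_rhs => rw [← modByMonic_add_div b a]
  rw [jac_add ha]

lemma jac_ne_zero {a b : F5[X]} (ha : a.Monic) (h : jac a b ≠ 0) : IsCoprime a b := by
  rw [← isUnit_resultant_iff_isCoprime ha, isUnit_iff_ne_zero]
  intro h0
  exact h (by rw [jac, h0, qc_zero])

lemma jac_sq {a b : F5[X]} (ha : a.Monic) (h : IsCoprime a b) : jac a b * jac a b = 1 := by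
  apply qc_sq
  rw [← isUnit_resultant_iff_isCoprime ha, isUnit_iff_ne_zero] at h
  exact h

/-- The right-hand side of the curve. -/
noncomputable def f : F5[X] := X ^ 9 + X ^ 6 + 2 * X ^ 5 + X

lemma f_deg : f.natDegree = 9 := by unfold f; compute_degree!
lemma f_monic : f.Monic := by unfold f; monicity!

/-- The quadratic character modulo `f`. -/
noncomputable def chi (g : F5[X]) : ℤ := jac f g

lemma chi_mul (a b : F5[X]) : chi (a * b) = chi a * chi b := jac_mul f_monic a b
lemma chi_pow (a : F5[X]) (k : ℕ) : chi (a ^ k) = chi a ^ k := jac_pow f_monic a k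
lemma chi_one : chi 1 = 1 := jac_one f_monic
lemma chi_mod (a : F5[X]) : chi (a %ₘ f) = chi a := jac_modByMonic f_monic a
lemma qc_pow9 (c : F5) : qc c ^ 9 = qc c := by revert c; decide +kernel
lemma chi_C (c : F5) : chi (C c) = qc c := by
  rw [chi, jac_C f_monic, f_deg, qc_pow9]

/-- Polynomials of degree `< d`. -/
noncomputable def V (d : ℕ) : Finset F5[X] :=
  Finset.univ.image (fun v : Fin d → F5 => ((degreeLTEquiv F5 d).symm v : F5[X]))

lemma mem_V {d : ℕ} {g : F5[X]} : g ∈ V d ↔ g.degree < d := by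
  simp only [V, Finset.mem_image, Finset.mem_univ, true_and]
  constructor
  · rintro ⟨v, rfl⟩
    exact mem_degreeLT.1 ((degreeLTEquiv F5 d).symm v).2
  · intro h
    exact ⟨degreeLTEquiv F5 d ⟨g, mem_degreeLT.2 h⟩, by simp⟩

lemma sum_V (d : ℕ) (G : F5[X] → ℤ) :
    ∑ g ∈ V d, G g = ∑ v : Fin d → F5, G ((degreeLTEquiv F5 d).symm v : F5[X]) := by
  rw [V, Finset.sum_image]
  intro a _ b _ h
  exact (degreeLTEquiv F5 d).symm.injective (Subtype.ext h)

lemma card_V (d : ℕ) : (V d).card = 5 ^ d := by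
  have := sum_V d (fun _ => 1)
  simp at this
  exact_mod_cast this

/-- Monic polynomials of degree `d`. -/
noncomputable def M (d : ℕ) : Finset F5[X] := (V d).image (fun g => X ^ d + g)

lemma mem_M {d : ℕ} {g : F5[X]} : g ∈ M d ↔ g.Monic ∧ g.natDegree = d := by
  simp only [M, Finset.mem_image, mem_V]
  constructor
  · rintro ⟨a, ha, rfl⟩
    refine ⟨monic_X_pow_add ha, ?_⟩
    rw [natDegree_add_eq_left_of_degree_lt (by simpa using ha)]
    simp
  · rintro ⟨hm, rfl⟩
    refine ⟨g - X ^ g.natDegree, ?_, by ring⟩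
    have hg : g ≠ 0 := hm.ne_zero
    have := degree_sub_lt_left (p := g) (q := X ^ g.natDegree) (by simp [degree_eq_natDegree hg]) hg
      (by simp [hm.leadingCoeff])
    rwa [degree_eq_natDegree hg] at this

lemma sum_M (d : ℕ) (G : F5[X] → ℤ) : ∑ g ∈ M d, G g = ∑ g ∈ V d, G (X ^ d + g) := by
  rw [M, Finset.sum_image]
  intro a _ b _ h
  simpa using h

lemma card_M (d : ℕ) : (M d).card = 5 ^ d := by
  have := sum_M d (fun _ => 1)
  simp [card_V] at this
  exact_mod_cast this

/-- The coefficients of the L-function. -/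
noncomputable def c (d : ℕ) : ℤ := ∑ g ∈ M d, chi g

end PC5

namespace PC5

lemma mod_mem_V (a : F5[X]) : a %ₘ f ∈ V 9 := by
  rw [mem_V]
  have := degree_modByMonic_lt a f_monic
  rwa [degree_eq_natDegree f_monic.ne_zero, f_deg] at this

lemma mod_eq_self {a : F5[X]} (h : a ∈ V 9) : a %ₘ f = a := by
  have h1 := mem_V.1 h
  rw [modByMonic_eq_self_iff f_monic, degree_eq_natDegree f_monic.ne_zero, f_deg]
  exact h1

lemma mod_eq_iff {a b : F5[X]} : a %ₘ f = b %ₘ f ↔ f ∣ a - b := by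
  rw [← modByMonic_eq_zero_iff_dvd f_monic, sub_modByMonic, sub_eq_zero]

lemma sub_mod_dvd (a : F5[X]) : f ∣ a - a %ₘ f := by
  rw [← mod_eq_iff, mod_eq_self (mod_mem_V a)]

/-- Multiplication by a unit permutes the residues. -/
lemma sum_unit {u w : F5[X]} (h : f ∣ u * w - 1) (G : F5[X] → ℤ) :
    ∑ a ∈ V 9, G a = ∑ a ∈ V 9, G ((u * a) %ₘ f) := by
  symm
  have key : ∀ u w : F5[X], f ∣ u * w - 1 → ∀ a ∈ V 9, (u * ((w * a) %ₘ f)) %ₘ f = a := by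
    intro u w h a ha
    conv_rhs => rw [← mod_eq_self ha]
    rw [mod_eq_iff]
    have h1 := sub_mod_dvd (w * a)
    have : u * ((w * a) %ₘ f) - a = (u * w - 1) * a - u * (w * a - (w * a) %ₘ f) := by ring
    rw [this]
    exact dvd_sub (h.mul_right _) (h1.mul_left _)
  refine Finset.sum_bij' (fun a _ => (u * a) %ₘ f) (fun a _ => (w * a) %ₘ f)
    (fun a _ => mod_mem_V _) (fun a _ => mod_mem_V _) ?_ ?_ (fun _ _ => rfl)
  · intro a ha
    exact key w u (by rwa [mul_comm]) a ha
  · intro a ha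
    exact key u w h a ha

/-- The twisted sum. -/
noncomputable def B (h : F5[X]) : ℤ := ∑ a ∈ V 9, chi a * qc (((a * h) %ₘ f).coeff 8)

lemma mod_mul_mod (a b : F5[X]) : ((a %ₘ f) * b) %ₘ f = (a * b) %ₘ f := by
  rw [mod_eq_iff]
  have := sub_mod_dvd a
  rw [show a %ₘ f * b - a * b = -((a - a %ₘ f) * b) by ring, dvd_neg]
  exact this.mul_right _

lemma B_coprime {h : F5[X]} (hc : IsCoprime f h) : B h = chi h * B 1 := by
  obtain ⟨s, w, hw⟩ := hc
  have hd : f ∣ w * h - 1 := ⟨-s, by linear_combination hw⟩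
  have hchi : chi w * chi h = 1 := by
    rw [← chi_mul, ← chi_one, ← chi_mod (w * h), ← chi_mod 1, mod_eq_iff.2 hd]
  have hsq : chi h * chi h = 1 := jac_sq f_monic ⟨s, w, hw⟩
  have hwh : chi w = chi h := by
    linear_combination chi h * hchi - chi w * hsq
  rw [B, sum_unit hd, B, Finset.mul_sum]
  refine Finset.sum_congr rfl fun a ha => ?_
  rw [chi_mod, chi_mul, mod_mul_mod, hwh, mul_assoc, mul_one]
  congr 4
  rw [mod_eq_iff, show w * a * h - a = (w * h - 1) * a by ring]
  exact hd.mul_right _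

lemma B_zero {h u : F5[X]} (hu : chi u = -1) (hd : f ∣ (u - 1) * h) : B h = 0 := by
  have hc : IsCoprime f u := jac_ne_zero f_monic (by change chi u ≠ 0; rw [hu]; norm_num)
  obtain ⟨s, w, hw⟩ := hc
  have hd' : f ∣ u * w - 1 := ⟨-s, by linear_combination hw⟩
  have : B h = - B h := by
    conv_lhs => rw [B, sum_unit hd']
    rw [B, ← Finset.sum_neg_distrib]
    refine Finset.sum_congr rfl fun a ha => ?_
    rw [chi_mod, chi_mul, mod_mul_mod, hu]
    have : u * a * h %ₘ f = a * h %ₘ f := by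
      rw [mod_eq_iff, show u * a * h - a * h = ((u - 1) * h) * a by ring]
      exact hd.mul_right _
    rw [this]; ring
  omega

/-- The factor of degree seven. -/
noncomputable def q7 : F5[X] := X ^ 7 + X ^ 6 + X ^ 5 + 2 * X ^ 4 - X ^ 3 - X ^ 2 - X - 1

lemma five_zero : (5 : F5[X]) = 0 := by
  have h : ((5 : ℕ) : F5[X]) = 0 := CharP.cast_eq_zero F5[X] 5
  exact_mod_cast h

lemma f_fac : f = X * ((X - 1) * q7) := by
  unfold f q7
  linear_combination (X ^ 5) * five_zero

lemma q7_deg : q7.natDegree = 7 := by unfold q7; compute_degree!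
lemma q7_monic : q7.Monic := by unfold q7; monicity!

lemma jac_fac {a b g : F5[X]} (hg : g.Monic) : jac (a * b) g = jac a g * jac b g := by
  rw [jac_comm, jac_mul hg, jac_comm, jac_comm g b]

lemma jac_fac' {a b g : F5[X]} (ha : a.Monic) (hb : b.Monic) :
    jac (a * b) g = jac a g * jac b g := by
  rw [jac, jac, jac, ← qc_mul, ha.natDegree_mul hb, resultant_mul_left _ _ _ _ le_rfl]

lemma jac_lin (r : F5) (g : F5[X]) : jac (X - C r) g = qc (g.eval r) := by
  rw [jac, natDegree_X_sub_C, resultant_X_sub_C_left _ _ _ le_rfl]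

lemma jac_one_add {a b : F5[X]} (ha : a.Monic) : jac a (1 + a * b) = 1 := by
  rw [jac_add ha, jac_one ha]

lemma chi_u0 : chi (1 + (X - 1) * q7) = -1 := by
  have h1 : ((X - 1) * q7).Monic := 
    Monic.mul (by simpa using monic_X_sub_C (1 : F5)) q7_monic
  rw [chi, f_fac, jac_fac' monic_X h1]
  have := jac_one_add (b := 1) h1
  rw [mul_one] at this
  rw [this]
  have h2 := jac_lin 0 (1 + (X - 1) * q7)
  simp only [map_zero, sub_zero] at h2
  rw [h2, mul_one, ← qc_two]
  congr 1
  simp [q7]; decide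

lemma chi_u1 : chi (1 + X * q7) = -1 := by
  have hX : (X - 1 : F5[X]).Monic := by simpa using monic_X_sub_C (1 : F5)
  have h1 : (X * q7).Monic := monic_X.mul q7_monic
  rw [chi, f_fac, show X * ((X - 1) * q7) = (X - 1) * (X * q7) by ring, jac_fac' hX h1]
  have := jac_one_add (b := 1) h1
  rw [mul_one] at this
  rw [this]
  have h2 := jac_lin 1 (1 + X * q7)
  simp only [map_one] at h2
  rw [h2, mul_one, ← qc_two]
  congr 1
  simp [q7]; decide

lemma B_root0 {h : F5[X]} (h0 : h.eval 0 = 0) : B h = 0 := by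
  refine B_zero chi_u0 ?_
  obtain ⟨k, rfl⟩ : X ∣ h := by rwa [X_dvd_iff, coeff_zero_eq_eval_zero]
  exact ⟨k, by rw [f_fac]; ring⟩

lemma B_root1 {h : F5[X]} (h0 : h.eval 1 = 0) : B h = 0 := by
  refine B_zero chi_u1 ?_
  obtain ⟨k, rfl⟩ : X - C 1 ∣ h := dvd_iff_isRoot.2 h0
  exact ⟨k, by rw [f_fac, C_1]; ring⟩

lemma chi_root0 {h : F5[X]} (h0 : h.eval 0 = 0) : chi h = 0 := by
  obtain ⟨k, rfl⟩ : X ∣ h := by rwa [X_dvd_iff, coeff_zero_eq_eval_zero]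
  have : chi X = 0 := by
    by_contra h
    have := jac_ne_zero f_monic h
    rw [f_fac] at this
    have := (this.of_mul_left_left)
    rw [isCoprime_self] at this
    exact not_isUnit_X this
  rw [chi_mul, this, zero_mul]

lemma chi_root1 {h : F5[X]} (h0 : h.eval 1 = 0) : chi h = 0 := by
  obtain ⟨k, rfl⟩ : X - C 1 ∣ h := dvd_iff_isRoot.2 h0
  have : chi (X - C 1) = 0 := by
    by_contra h
    have := jac_ne_zero f_monic h
    rw [f_fac, ← C_1] at this
    have := (this.of_mul_left_right.of_mul_left_left)
    rw [isCoprime_self] at this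
    exact not_isUnit_X_sub_C _ this
  rw [chi_mul, this, zero_mul]

/-- `h` is coprime to `f` or has one of the roots `0`, `1`. -/
def good (h : F5[X]) : Prop := chi h ≠ 0 ∨ h.eval 0 = 0 ∨ h.eval 1 = 0

lemma B_good {h : F5[X]} (hg : good h) : B h = chi h * B 1 := by
  rcases hg with h1 | h1 | h1
  · exact B_coprime (jac_ne_zero f_monic h1)
  · rw [B_root0 h1, chi_root0 h1, zero_mul]
  · rw [B_root1 h1, chi_root1 h1, zero_mul]

lemma M_translate {e : ℕ} {g : F5[X]} (hg : g.degree < e) (G : F5[X] → ℤ) :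
    ∑ h ∈ M e, G (h + g) = ∑ h ∈ M e, G h := by
  rw [sum_M, sum_M]
  refine Finset.sum_bij' (fun a _ => a + g) (fun a _ => a - g) ?_ ?_ ?_ ?_ ?_
  · intro a ha; rw [mem_V] at *; exact (degree_add_le _ _).trans_lt (max_lt ha hg)
  · intro a ha; rw [mem_V] at *; exact (degree_sub_le _ _).trans_lt (max_lt ha hg)
  · intro a _; simp
  · intro a _; simp
  · intro a _; rw [add_assoc]

lemma inner_small {e : ℕ} (he : e ≤ 8) {a : F5[X]} (ha : a ∈ V (9 - e)) :
    ∑ h ∈ M e, qc (((a * h) %ₘ f).coeff 8) = 5 ^ e * qc (a.coeff (8 - e)) := by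
  have h1 : ∀ h ∈ M e, qc (((a * h) %ₘ f).coeff 8) = qc (a.coeff (8 - e)) := by
    intro h hh
    obtain ⟨hm, hd⟩ := mem_M.1 hh
    have had : a.natDegree ≤ 8 - e := by
      rw [mem_V] at ha
      by_cases h0 : a = 0
      · simp [h0]
      rw [degree_eq_natDegree h0] at ha
      have : a.natDegree < 9 - e := by exact_mod_cast ha
      omega
    have h2 : a * h ∈ V 9 := by
      rw [mem_V]
      refine lt_of_le_of_lt degree_le_natDegree ?_
      have := natDegree_mul_le (p := a) (q := h)
      have h3 : (a * h).natDegree < 9 := by omega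
      exact_mod_cast h3
    rw [mod_eq_self h2]
    have := coeff_mul_add_eq_of_natDegree_le had hd.le
    rw [show 8 - e + e = 8 by omega] at this
    rw [this, ← hd, hm.coeff_natDegree, mul_one]
  rw [Finset.sum_congr rfl h1]
  simp [card_M]

lemma inner_big {e : ℕ} {a : F5[X]} (ha : a ∈ V 9) (ha' : a ∉ V (9 - e)) :
    ∑ h ∈ M e, qc (((a * h) %ₘ f).coeff 8) = 0 := by
  rw [mem_V] at ha ha'
  have h0 : a ≠ 0 := by
    rintro rfl
    rw [degree_zero] at ha'
    exact ha' (WithBot.bot_lt_coe _)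
  rw [degree_eq_natDegree h0] at ha ha'
  have hk : a.natDegree < 9 := by exact_mod_cast ha
  have hk' : ¬ a.natDegree < 9 - e := by exact_mod_cast ha'
  have hlc : a.leadingCoeff ≠ 0 := leadingCoeff_ne_zero.2 h0
  have h1 : ∀ t : F5, ∑ h ∈ M e, qc (((a * h) %ₘ f).coeff 8 + t * a.leadingCoeff)
      = ∑ h ∈ M e, qc (((a * h) %ₘ f).coeff 8) := by
    intro t
    have hdeg : (C t * X ^ (8 - a.natDegree) : F5[X]).degree < e := by
      refine (degree_C_mul_X_pow_le _ _).trans_lt ?_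
      have : 8 - a.natDegree < e := by omega
      exact_mod_cast this
    rw [← M_translate hdeg (fun h => qc (((a * h) %ₘ f).coeff 8))]
    refine Finset.sum_congr rfl fun h _ => ?_
    congr 1
    rw [mul_add, add_modByMonic, coeff_add]
    congr 1
    have h2 : a * (C t * X ^ (8 - a.natDegree)) ∈ V 9 := by
      rw [mem_V]
      refine (degree_mul_le _ _).trans_lt ?_
      refine lt_of_le_of_lt (add_le_add degree_le_natDegree (degree_C_mul_X_pow_le _ _)) ?_
      have : a.natDegree + (8 - a.natDegree) < 9 := by omega
      exact_mod_cast this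
    rw [mod_eq_self h2, mul_left_comm, coeff_C_mul, coeff_mul_X_pow', if_pos (by omega),
      show 8 - (8 - a.natDegree) = a.natDegree by omega]
    rfl
  have h2 : ∑ t : F5, ∑ h ∈ M e, qc (((a * h) %ₘ f).coeff 8 + t * a.leadingCoeff) = 0 := by
    rw [Finset.sum_comm]
    exact Finset.sum_eq_zero fun h _ => sum_qc_affine _ _ hlc
  simp only [h1] at h2
  simp at h2
  exact h2

lemma V_mono {m n : ℕ} (h : m ≤ n) : V m ⊆ V n := by
  intro a ha
  rw [mem_V] at *
  exact ha.trans_le (by exact_mod_cast h)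

lemma sum_V_succ (d : ℕ) :
    ∑ a ∈ V (d + 1), chi a * qc (a.coeff d) = 4 * c d := by
  have h0 : ∑ a ∈ V (d + 1), chi a * qc (a.coeff d)
      = ∑ a ∈ (V (d + 1)).filter (fun a => a.coeff d ≠ 0), chi a * qc (a.coeff d) := by
    symm
    apply Finset.sum_filter_of_ne
    intro a _ h h0
    exact h (by rw [h0, qc_zero, mul_zero])
  have h1 : ∑ x ∈ (Finset.univ.filter (fun t : F5 => t ≠ 0)) ×ˢ M d, qc x.1 * qc x.1 * chi x.2
      = ∑ a ∈ (V (d + 1)).filter (fun a => a.coeff d ≠ 0), chi a * qc (a.coeff d) := by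
    refine Finset.sum_bij' (fun x _ => C x.1 * x.2) (fun a _ => (a.coeff d, C (a.coeff d)⁻¹ * a))
      ?_ ?_ ?_ ?_ ?_
    · rintro ⟨t, g⟩ hx
      simp only [Finset.mem_product, Finset.mem_filter, Finset.mem_univ, true_and, mem_M, mem_V,
        coeff_C_mul] at hx ⊢
      obtain ⟨ht, hm, rfl⟩ := hx
      rw [hm.coeff_natDegree, mul_one]
      refine ⟨?_, ht⟩
      rw [degree_C_mul ht, degree_eq_natDegree hm.ne_zero]
      exact_mod_cast Nat.lt_succ_self _
    · intro a ha
      simp only [Finset.mem_product, Finset.mem_filter, Finset.mem_univ, true_and, mem_M, mem_V] at ha ⊢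
      obtain ⟨h1, h2⟩ := ha
      have hd : a.natDegree = d := by
        have h0 : a ≠ 0 := by rintro rfl; simp at h2
        rw [degree_eq_natDegree h0] at h1
        have : a.natDegree < d + 1 := by exact_mod_cast h1
        have := le_natDegree_of_ne_zero h2
        omega
      refine ⟨h2, ?_, ?_⟩
      · rw [Monic, leadingCoeff_mul, leadingCoeff_C, leadingCoeff, hd, inv_mul_cancel₀ h2]
      · rw [natDegree_C_mul (inv_ne_zero h2), hd]
    · rintro ⟨t, g⟩ hx
      simp only [Finset.mem_product, Finset.mem_filter, Finset.mem_univ, true_and, mem_M] at hx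
      obtain ⟨ht, hm, rfl⟩ := hx
      simp only [coeff_C_mul, hm.coeff_natDegree, mul_one]
      rw [← mul_assoc, ← C_mul, inv_mul_cancel₀ ht]; simp
    · intro a ha
      simp only [Finset.mem_filter] at ha
      simp only
      rw [← mul_assoc, ← C_mul, mul_inv_cancel₀ ha.2]; simp
    · rintro ⟨t, g⟩ hx
      simp only [Finset.mem_product, Finset.mem_filter, Finset.mem_univ, true_and, mem_M] at hx
      obtain ⟨ht, hm, rfl⟩ := hx
      simp only [coeff_C_mul, hm.coeff_natDegree, mul_one]
      rw [chi_mul, chi_C]; ring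
  rw [h0, ← h1, Finset.sum_product]
  simp_rw [← Finset.mul_sum]
  rw [← Finset.sum_mul]
  have h4 : ∑ t ∈ (Finset.univ.filter (fun t : F5 => t ≠ 0)), qc t * qc t = 4 := by
    rw [← sum_qc_sq]
    apply Finset.sum_filter_of_ne
    intro a _ h h0
    exact h (by rw [h0, qc_zero, mul_zero])
  rw [h4]; rfl

lemma func_eq {e : ℕ} (he : e ≤ 8) (hg : ∀ h ∈ M e, good h) :
    c e * B 1 = 5 ^ e * (4 * c (8 - e)) := by
  rw [c, Finset.sum_mul, Finset.sum_congr rfl (fun h hh => (B_good (hg h hh)).symm)]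
  unfold B
  rw [Finset.sum_comm]
  simp_rw [← Finset.mul_sum]
  rw [← Finset.sum_subset (V_mono (show 9 - e ≤ 9 by omega))]
  · rw [Finset.sum_congr rfl (fun a ha => by rw [inner_small he ha])]
    rw [← sum_V_succ, show 8 - e + 1 = 9 - e by omega, Finset.mul_sum]
    exact Finset.sum_congr rfl fun a _ => by ring
  · intro a ha ha'
    rw [inner_big ha ha', mul_zero]

lemma sum_V9 : ∑ a ∈ V 9, chi a = 0 := by
  have h : f ∣ C 2 * C 3 - 1 := by
    have : (C 2 * C 3 - 1 : F5[X]) = 0 := by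
      rw [← C_mul, show (2 * 3 : F5) = 1 by decide]; simp
    rw [this]; exact dvd_zero _
  have h1 := sum_unit h chi
  simp_rw [chi_mod, chi_mul, chi_C, ← Finset.mul_sum, qc_two] at h1
  omega

lemma c_big {d : ℕ} (hd : 9 ≤ d) : c d = 0 := by
  have : c d = ∑ x ∈ M (d - 9) ×ˢ V 9, chi x.2 := by
    symm
    refine Finset.sum_bij' (fun x _ => x.2 + f * x.1) (fun g _ => (g /ₘ f, g %ₘ f)) ?_ ?_ ?_ ?_ ?_
    · rintro ⟨h, r⟩ hx
      simp only [Finset.mem_product, mem_M, mem_V] at hx ⊢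
      obtain ⟨⟨hm, hdeg⟩, hr⟩ := hx
      have hfm : (f * h).Monic := f_monic.mul hm
      have hfd : (f * h).natDegree = d := by rw [f_monic.natDegree_mul hm, f_deg, hdeg]; omega
      have hlt : r.degree < (f * h).degree := by
        rw [degree_eq_natDegree hfm.ne_zero, hfd]
        exact hr.trans_le (by exact_mod_cast hd)
      refine ⟨hfm.add_of_right hlt, ?_⟩
      rw [natDegree_add_eq_right_of_degree_lt hlt, hfd]
    · intro g hg
      rw [mem_M] at hg
      simp only [Finset.mem_product, mod_mem_V, and_true, mem_M]
      have hle : f.degree ≤ g.degree := by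
        rw [degree_eq_natDegree hg.1.ne_zero, degree_eq_natDegree f_monic.ne_zero, f_deg, hg.2]
        exact_mod_cast hd
      refine ⟨?_, ?_⟩
      · rw [Monic, leadingCoeff_divByMonic_of_monic f_monic hle, hg.1.leadingCoeff]
      · rw [natDegree_divByMonic _ f_monic, hg.2, f_deg]
    · rintro ⟨h, r⟩ hx
      simp only [Finset.mem_product] at hx
      have h1 := mem_V.1 hx.2
      have h2 : r.degree < f.degree := by
        rw [degree_eq_natDegree f_monic.ne_zero, f_deg]; exact h1
      have := div_modByMonic_unique (f := r + f * h) (g := f) h r f_monic ⟨rfl, h2⟩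
      simp [this.1, this.2]
    · intro g _
      exact modByMonic_add_div g f
    · rintro ⟨h, r⟩ _
      exact (jac_add f_monic r h).symm
  rw [this, Finset.sum_product]
  simp [sum_V9]

end PC5

namespace PC5

/-- Polynomial with the given coefficients, leading coefficient first. -/
noncomputable def ev : List ℕ → F5[X]
  | [] => 0
  | x :: t => C (x : F5) * X ^ t.length + ev t

/-- Monic polynomial with the given lower coefficients. -/
noncomputable def mon (l : List ℕ) : F5[X] := X ^ l.length + ev l

lemma ev_degree (l : List ℕ) : (ev l).degree < l.length := by
  induction l with
  | nil => simp [ev]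
  | cons x t ih =>
    refine (degree_add_le _ _).trans_lt (max_lt ?_ ?_)
    · refine (degree_C_mul_X_pow_le _ _).trans_lt ?_
      exact_mod_cast Nat.lt_succ_self _
    · refine ih.trans ?_
      exact_mod_cast Nat.lt_succ_self _

lemma mon_mem (l : List ℕ) : mon l ∈ M l.length := by
  rw [M, Finset.mem_image]
  exact ⟨ev l, mem_V.2 (ev_degree l), rfl⟩

lemma mon_monic (l : List ℕ) : (mon l).Monic := (mem_M.1 (mon_mem l)).1
lemma mon_deg (l : List ℕ) : (mon l).natDegree = l.length := (mem_M.1 (mon_mem l)).2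

lemma ev_one_cons (l : List ℕ) : ev (1 :: l) = mon l := by simp [ev, mon]

/-- Subtract `k` times the first list from the beginning of the second. -/
def subl (k : ℕ) : List ℕ → List ℕ → List ℕ
  | [], b => b
  | _ :: _, [] => []
  | x :: a, y :: b => ((y + 4 * k * x) % 5) :: subl k a b

lemma subl_length (k : ℕ) (a b : List ℕ) : (subl k a b).length = b.length := by
  induction a generalizing b with
  | nil => rfl
  | cons x a ih => cases b with
    | nil => rfl
    | cons y b => simp [subl, ih]

lemma four_eq : (4 : F5[X]) = -1 := by linear_combination five_zero

lemma subl_ev (k : ℕ) (a b : List ℕ) (h : a.length ≤ b.length) :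
    ev (subl k a b) = ev b - C (k : F5) * ev a * X ^ (b.length - a.length) := by
  induction a generalizing b with
  | nil => simp [subl, ev]
  | cons x a ih => cases b with
    | nil => simp at h
    | cons y b =>
      simp only [List.length_cons, add_le_add_iff_right] at h
      simp only [subl, ev, subl_length, ih b h, List.length_cons, Nat.add_sub_add_right]
      obtain ⟨j, hj⟩ := Nat.exists_eq_add_of_le h
      rw [hj, Nat.add_sub_cancel_left, ZMod.natCast_mod]
      push_cast
      simp only [map_add, map_mul, C_ofNat, pow_add]
      rw [four_eq]
      ring

/-- Remainder after `n` division steps. -/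
def reml (a : List ℕ) : ℕ → List ℕ → List ℕ
  | 0, b => b
  | _ + 1, [] => []
  | n + 1, y :: b => reml a n (subl y a b)

lemma reml_ev (a : List ℕ) (n : ℕ) (b : List ℕ) (h : a.length + n ≤ b.length) :
    ∃ q, ev b = ev (reml a n b) + mon a * q := by
  induction n generalizing b with
  | zero => exact ⟨0, by simp [reml]⟩
  | succ n ih => cases b with
    | nil => simp at h
    | cons y b =>
      simp only [List.length_cons] at h
      obtain ⟨q, hq⟩ := ih (subl y a b) (by rw [subl_length]; omega)
      refine ⟨q + C (y : F5) * X ^ (b.length - a.length), ?_⟩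
      rw [subl_ev _ _ _ (by omega)] at hq
      simp only [reml, ev]
      obtain ⟨j, hj⟩ := Nat.exists_eq_add_of_le (show a.length ≤ b.length by omega)
      rw [hj, Nat.add_sub_cancel_left] at hq ⊢
      rw [mul_add, ← add_assoc, ← hq, mon, pow_add]
      ring

lemma reml_length (a : List ℕ) (n : ℕ) (b : List ℕ) : (reml a n b).length = b.length - n := by
  induction n generalizing b with
  | zero => simp [reml]
  | succ n ih => cases b with
    | nil => simp [reml]
    | cons y b => simp [reml, ih, subl_length]

/-- Remove leading zeros. -/
def strip : List ℕ → List ℕ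
  | [] => []
  | x :: t => if x % 5 = 0 then strip t else x :: t

lemma natCast_eq_zero {x : ℕ} : (x : F5) = 0 ↔ x % 5 = 0 := by
  rw [ZMod.natCast_eq_zero_iff]; omega

lemma strip_spec (l : List ℕ) : ev (strip l) = ev l ∧ (strip l).length ≤ l.length ∧
    ∀ x t, strip l = x :: t → (x : F5) ≠ 0 := by
  induction l with
  | nil => simp [strip]
  | cons y l ih =>
    by_cases h : y % 5 = 0
    · simp only [strip, if_pos h]
      refine ⟨?_, ih.2.1.trans (by simp), ih.2.2⟩
      rw [ih.1, ev, natCast_eq_zero.2 h]; simp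
    · simp only [strip, if_neg h]
      refine ⟨trivial, le_rfl, ?_⟩
      rintro x t ⟨⟩
      rwa [Ne, natCast_eq_zero]

/-- Computable quadratic character. -/
def qz (c : ℕ) : ℤ := if c % 5 = 0 then 0 else if c % 5 = 1 then 1 else if c % 5 = 4 then 1 else -1

lemma qz_eq (c : ℕ) : qz c = qc (c : F5) := by
  have h : c % 5 < 5 := Nat.mod_lt _ (by norm_num)
  rw [← ZMod.natCast_mod]
  unfold qz
  generalize c % 5 = m at h
  revert m
  decide +kernel

/-- Computable version of `jac`. -/
def J : ℕ → List ℕ → List ℕ → ℤ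
  | 0, _, _ => 1
  | _ + 1, [], _ => 1
  | k + 1, x :: a, b =>
    match strip (reml (x :: a) (b.length - (a.length + 1)) b) with
    | [] => 0
    | c :: t => qz c ^ (a.length + 1) * J k (t.map (fun y => c ^ 3 * y % 5)) (1 :: x :: a)

lemma ev_smul (c : ℕ) (hc : (c : F5) ≠ 0) (t : List ℕ) :
    ev t = C (c : F5) * ev (t.map (fun y => c ^ 3 * y % 5)) := by
  induction t with
  | nil => simp [ev]
  | cons x t ih =>
    simp only [List.map_cons, ev, List.length_map, mul_add, ← ih]
    rw [← mul_assoc, ← C_mul, ZMod.natCast_mod]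
    congr 3
    push_cast
    have h4 : (c : F5) ^ 4 = 1 := ZMod.pow_card_sub_one_eq_one hc
    linear_combination (-(x : F5)) * h4

lemma mon_nil : mon [] = 1 := by simp [mon, ev]

lemma J_spec (k : ℕ) (a b : List ℕ) (h1 : a.length ≤ k) (h2 : a.length ≤ b.length) :
    J k a b = jac (mon a) (ev b) := by
  have h_one : ∀ g, jac 1 g = 1 := fun g => by
    rw [jac]; simp [qc_one]
  induction k generalizing a b with
  | zero =>
    have : a = [] := List.length_eq_zero_iff.1 (by omega)
    subst this
    rw [J, mon_nil, h_one]
  | succ k ih =>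
    cases a with
    | nil => rw [J, mon_nil, h_one]
    | cons x a =>
      simp only [List.length_cons] at h1 h2
      set r := reml (x :: a) (b.length - (a.length + 1)) b with hr
      obtain ⟨q, hq⟩ := reml_ev (x :: a) (b.length - (a.length + 1)) b (by simp; omega)
      obtain ⟨s1, s2, s3⟩ := strip_spec r
      have hl : r.length = a.length + 1 := by rw [hr, reml_length]; omega
      rw [hq, jac_add (mon_monic _), ← hr, ← s1, J, ← hr]
      split
      · rename_i hs
        rw [hs, ev]
        symm
        by_contra h
        have := jac_ne_zero (mon_monic _) h
        rw [isCoprime_zero_right] at this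
        have h3 := natDegree_eq_zero_of_isUnit this
        rw [mon_deg] at h3
        simp at h3
      · rename_i c t hs
        have hc := s3 c t hs
        rw [hs] at s2 ⊢
        simp only [List.length_cons] at s2
        have he : ev (c :: t) = C (c : F5) * mon (t.map (fun y => c ^ 3 * y % 5)) := by
          rw [mon, mul_add, ← ev_smul c hc, ev, List.length_map]
        rw [he, jac_mul (mon_monic _), jac_C (mon_monic _), mon_deg, qz_eq,
          ih _ _ (by simp; omega) (by simp; omega), ev_one_cons, jac_comm (mon (x :: a))]
        rfl

/-- The list of `f`. -/
def fl : List ℕ := [1, 0, 0, 1, 2, 0, 0, 0, 1, 0]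

lemma fl_ev : ev fl = f := by
  simp only [ev, fl, f, List.length_cons, List.length_nil, Nat.cast_ofNat, C_ofNat, Nat.cast_one,
    Nat.cast_zero, map_one, map_zero]
  ring

/-- All lists of length `d` with entries below five. -/
def lists : ℕ → List (List ℕ)
  | 0 => [[]]
  | d + 1 => (List.range 5).flatMap (fun x => (lists d).map (x :: ·))

lemma lists_length {d : ℕ} {l : List ℕ} (h : l ∈ lists d) : l.length = d := by
  induction d generalizing l with
  | zero => simp [lists] at h; simp [h]
  | succ d ih =>
    simp only [lists, List.mem_flatMap, List.mem_map] at h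
    obtain ⟨x, _, t, ht, rfl⟩ := h
    simp [ih ht]

lemma sum_V_step (d : ℕ) (G : F5[X] → ℤ) :
    ∑ g ∈ V (d + 1), G g = ∑ x : F5, ∑ g ∈ V d, G (C x * X ^ d + g) := by
  rw [← Finset.sum_product']
  symm
  refine Finset.sum_bij' (fun x _ => C x.1 * X ^ d + x.2)
    (fun g _ => (g.coeff d, g - C (g.coeff d) * X ^ d)) ?_ ?_ ?_ ?_ (fun _ _ => rfl)
  · rintro ⟨x, g⟩ h
    simp only [Finset.mem_product, Finset.mem_univ, true_and, mem_V] at h ⊢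
    refine (degree_add_le _ _).trans_lt (max_lt ?_ ?_)
    · refine (degree_C_mul_X_pow_le _ _).trans_lt ?_
      exact_mod_cast Nat.lt_succ_self _
    · refine h.trans ?_
      exact_mod_cast Nat.lt_succ_self _
  · intro g h
    simp only [Finset.mem_product, Finset.mem_univ, true_and, mem_V] at h ⊢
    rw [degree_lt_iff_coeff_zero] at h ⊢
    intro m hm
    rcases hm.eq_or_lt with rfl | hm
    · simp
    · have h3 := h m hm
      simp [h3, coeff_X_pow, hm.ne']
  · rintro ⟨x, g⟩ h
    simp only [Finset.mem_product, Finset.mem_univ, true_and, mem_V] at h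
    have := coeff_eq_zero_of_degree_lt h
    simp [this]
  · intro g _
    simp

lemma sum_F5 (G : F5 → ℤ) : ∑ x : F5, G x = ((List.range 5).map (fun x : ℕ => G (x : F5))).sum := by
  have h : (Finset.univ : Finset F5) = {0, 1, 2, 3, 4} := by decide
  rw [h]
  rw [Finset.sum_insert (by decide), Finset.sum_insert (by decide), Finset.sum_insert (by decide),
    Finset.sum_insert (by decide), Finset.sum_singleton]
  simp [List.range_succ]

lemma sum_V_lists (d : ℕ) (G : F5[X] → ℤ) :
    ∑ g ∈ V d, G g = ((lists d).map (fun l => G (ev l))).sum := by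
  induction d generalizing G with
  | zero =>
    have : V 0 = {0} := by
      ext g; simp [mem_V]
    simp [this, lists, ev]
  | succ d ih =>
    rw [sum_V_step, sum_F5]
    simp only [ih, lists, List.flatMap, List.map_flatten, List.sum_flatten, List.map_map]
    congr 1
    refine List.map_congr_left fun x _ => ?_
    congr 1
    rw [Function.comp_apply, List.map_map]
    refine List.map_congr_left fun l hl => ?_
    simp [ev, lists_length hl]

lemma chi_mon {d : ℕ} {l : List ℕ} (hd : d ≤ 10) (h : l ∈ lists d) : chi (X ^ d + ev l) = J d l fl := by
  have hl := lists_length h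
  rw [J_spec d l fl hl.le (by rw [hl]; exact hd), fl_ev, chi, jac_comm, mon, hl]

/-- Computable value of `c`. -/
def csum (d : ℕ) : ℤ := ((lists d).map (fun l => J d l fl)).sum

lemma c_eq {d : ℕ} (hd : d ≤ 10) : c d = csum d := by
  rw [c, sum_M, sum_V_lists, csum]
  congr 1
  exact List.map_congr_left fun l hl => chi_mon hd hl

/-- Value of the polynomial of a list. -/
def hv (r : ℕ) : List ℕ → ℕ
  | [] => 0
  | x :: t => x * r ^ t.length + hv r t

lemma hv_spec (r : ℕ) (l : List ℕ) : (ev l).eval (r : F5) = hv r l := by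
  induction l with
  | nil => simp [ev, hv]
  | cons x t ih => simp [ev, hv, ih]

/-- Check of the coprimality condition. -/
def chk (d : ℕ) : Bool := (lists d).all fun l =>
  decide (J d l fl ≠ 0 ∨ hv 0 (1 :: l) % 5 = 0 ∨ hv 1 (1 :: l) % 5 = 0)

lemma good_of_chk {d : ℕ} (hd : d ≤ 10) (hc : chk d = true) : ∀ h ∈ M d, good h := by
  classical
  intro h hh
  have : ∃ l ∈ lists d, h = X ^ d + ev l := by
    by_contra hne
    push Not at hne
    have h1 := sum_M d (fun g => if g = h then 1 else 0)
    rw [sum_V_lists] at h1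
    rw [Finset.sum_ite_eq' , if_pos hh] at h1
    have h2 : (lists d).map (fun l => if X ^ d + ev l = h then (1 : ℤ) else 0)
        = (lists d).map (fun _ => 0) :=
      List.map_congr_left fun l hl => if_neg fun e => hne l hl e.symm
    rw [h2] at h1
    simp at h1
  obtain ⟨l, hl, rfl⟩ := this
  have := (List.all_eq_true.1 hc) l hl
  rw [decide_eq_true_eq] at this
  have hm : X ^ d + ev l = ev (1 :: l) := by rw [ev_one_cons, mon, lists_length hl]
  unfold good
  rw [chi_mon hd hl, hm]
  have e0 := hv_spec 0 (1 :: l)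
  have e1 := hv_spec 1 (1 :: l)
  push_cast at e0 e1
  rw [e0, e1, natCast_eq_zero, natCast_eq_zero]
  exact this

lemma chk0 : chk 0 = true := by decide +kernel
lemma chk1 : chk 1 = true := by decide +kernel
lemma chk2 : chk 2 = true := by decide +kernel
lemma chk3 : chk 3 = true := by decide +kernel
lemma chk4 : chk 4 = true := by decide +kernel
lemma csum0 : csum 0 = 1 := by decide +kernel
lemma csum1 : csum 1 = -1 := by decide +kernel
lemma csum2 : csum 2 = 2 := by decide +kernel
lemma csum3 : csum 3 = -4 := by decide +kernel
lemma csum4 : csum 4 = 16 := by decide +kernel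

lemma c_values : c 0 = 1 ∧ c 1 = -1 ∧ c 2 = 2 ∧ c 3 = -4 ∧ c 4 = 16 ∧ c 5 = -20 ∧ c 6 = 50 ∧
    c 7 = -125 ∧ c 8 = 625 := by
  have h0 := (c_eq (show 0 ≤ 10 by norm_num)).trans csum0
  have h1 := (c_eq (show 1 ≤ 10 by norm_num)).trans csum1
  have h2 := (c_eq (show 2 ≤ 10 by norm_num)).trans csum2
  have h3 := (c_eq (show 3 ≤ 10 by norm_num)).trans csum3
  have h4 := (c_eq (show 4 ≤ 10 by norm_num)).trans csum4
  have f0 := func_eq (e := 0) (by norm_num) (good_of_chk (by norm_num) chk0)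
  have f1 := func_eq (e := 1) (by norm_num) (good_of_chk (by norm_num) chk1)
  have f2 := func_eq (e := 2) (by norm_num) (good_of_chk (by norm_num) chk2)
  have f3 := func_eq (e := 3) (by norm_num) (good_of_chk (by norm_num) chk3)
  have f4 := func_eq (e := 4) (by norm_num) (good_of_chk (by norm_num) chk4)
  norm_num only [h0, h1, h2, h3, h4] at f0 f1 f2 f3 f4
  generalize B 1 = b at *
  generalize c 5 = c5 at *
  generalize c 6 = c6 at *
  generalize c 7 = c7 at *
  generalize c 8 = c8 at *
  have hb : b = 2500 := by linarith
  subst hb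
  refine ⟨h0, h1, h2, h3, h4, ?_, ?_, ?_, ?_⟩ <;> linarith

end PC5

namespace PC5

section fieldpart
variable {K : Type} [Field K] [Fintype K] [Algebra F5 K]

lemma ringChar_ne : ringChar K ≠ 2 := by
  have : CharP K 5 := charP_of_injective_algebraMap (algebraMap F5 K).injective 5
  rw [ringChar.eq K 5]; norm_num

lemma natCard_F5 : Nat.card F5 = 5 := by simp

lemma five_pow_sub (n : ℕ) : 5 ^ n / 2 = (5 ^ n - 1) / (5 - 1) * 2 := by
  have h : (4 : ℕ) ∣ 5 ^ n - 1 := by simpa using Nat.sub_dvd_pow_sub_pow 5 1 n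
  have : 1 ≤ 5 ^ n := Nat.one_le_pow _ _ (by norm_num)
  omega

lemma qc_norm [DecidableEq K] {n : ℕ} (hK : Fintype.card K = 5 ^ n) (y : K) :
    quadraticChar K y = qc (Algebra.norm F5 y) := by
  refine MulChar.IsQuadratic.eq_of_eq_coe (R'' := K) (quadraticChar_isQuadratic K)
    (quadraticChar_isQuadratic F5) ringChar_ne ?_
  have h5 : ringChar F5 ≠ 2 := ringChar_ne (K := F5)
  have h1 := quadraticChar_eq_pow_of_char_ne_two' (ringChar_ne (K := K)) y
  have h2 := quadraticChar_eq_pow_of_char_ne_two' h5 (Algebra.norm F5 y)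
  have h3 := congrArg (algebraMap F5 K) h2
  rw [map_intCast, map_pow, FiniteField.algebraMap_norm_eq_pow, natCard_F5, ← Fintype.card_eq_nat_card, hK,
    ← pow_mul, ZMod.card] at h3
  rw [h1, h3, hK, five_pow_sub]

lemma norm_pb {L : Type} [Field L] [Algebra F5 L] [FiniteDimensional F5 L] (pb : PowerBasis F5 L) :
    Algebra.norm F5 (aeval pb.gen f) = (minpoly F5 pb.gen).resultant f := by
  let E := AlgebraicClosure F5
  apply (algebraMap F5 E).injective
  classical
  have hm : (minpoly F5 pb.gen).Monic := minpoly.monic (Algebra.IsIntegral.isIntegral _)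
  have hsep : (minpoly F5 pb.gen).Separable := Algebra.IsSeparable.isSeparable F5 pb.gen
  have h1 := resultant_eq_prod_eval ((minpoly F5 pb.gen).map (algebraMap F5 E))
    (f.map (algebraMap F5 E)) f.natDegree natDegree_map_le (IsAlgClosed.splits _)
  rw [natDegree_map, resultant_map_map, (hm.map _).leadingCoeff, one_pow, one_mul] at h1
  rw [h1, Algebra.norm_eq_prod_embeddings F5 E]
  rw [@Fintype.prod_equiv (L →ₐ[F5] E) _ _ _ _ _ pb.liftEquiv'
    (fun σ => σ (aeval pb.gen f)) (fun x => (f.map (algebraMap F5 E)).eval x.1) ?_]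
  · have := Finset.prod_mem_multiset (M := E)
      (m := (minpoly F5 pb.gen).aroots E)
      (fun x => (f.map (algebraMap F5 E)).eval x.1) (fun x => (f.map (algebraMap F5 E)).eval x)
      (fun _ => rfl)
    rw [Finset.prod_eq_multiset_prod, Finset.prod_eq_multiset_prod, Multiset.toFinset_val,
      Multiset.dedup_eq_self.mpr (nodup_roots (.map hsep))] at this
    rw [Finset.prod_eq_multiset_prod]
    convert this
  · intro σ
    rw [PowerBasis.liftEquiv'_apply_coe, eval_map_algebraMap, aeval_algHom_apply]

lemma finrank_K {n : ℕ} (hK : Fintype.card K = 5 ^ n) : Module.finrank F5 K = n := by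
  have h := Module.card_eq_pow_finrank (K := F5) (V := K)
  rw [hK, ZMod.card] at h
  exact (Nat.pow_right_injective (le_refl 2 |>.trans (by norm_num)) h).symm

lemma norm_x {n : ℕ} (hK : Fintype.card K = 5 ^ n) (x : K) :
    Algebra.norm F5 (aeval x f) = (minpoly F5 x).resultant f ^ (n / (minpoly F5 x).natDegree) := by
  have hx : IsIntegral F5 x := Algebra.IsIntegral.isIntegral x
  let L := IntermediateField.adjoin F5 {x}
  let pb := IntermediateField.adjoin.powerBasis hx
  have hgen : algebraMap L K pb.gen = x := by
    simp [pb, L]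
  have hmin : minpoly F5 pb.gen = minpoly F5 x := by
    rw [← minpoly.algebraMap_eq (algebraMap L K).injective, hgen]
  have h1 : aeval x f = algebraMap L K (aeval pb.gen f) := by
    rw [← aeval_algebraMap_apply, hgen]
  have h2 : Module.finrank F5 L = (minpoly F5 x).natDegree := IntermediateField.adjoin.finrank hx
  have h3 := Module.finrank_mul_finrank F5 L K
  rw [finrank_K hK, h2] at h3
  have hpos : 0 < (minpoly F5 x).natDegree := minpoly.natDegree_pos hx
  rw [h1, ← Algebra.norm_norm (S := L), Algebra.norm_algebraMap, map_pow, norm_pb, hmin, ← h3,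
    Nat.mul_div_cancel_left _ hpos]

lemma qc_value [DecidableEq K] {n : ℕ} (hK : Fintype.card K = 5 ^ n) (x : K) :
    quadraticChar K (aeval x f) = chi (minpoly F5 x) ^ (n / (minpoly F5 x).natDegree) := by
  rw [qc_norm hK, norm_x hK, qc_pow, chi, jac_comm]; rfl

lemma card_minpoly [DecidableEq K] {n : ℕ} (hn : 0 < n) (hK : Fintype.card K = 5 ^ n) {P : F5[X]}
    (hP : Irreducible P) (hm : P.Monic) (hd : P.natDegree ∣ n) :
    (Finset.univ.filter (fun x : K => minpoly F5 x = P)).card = P.natDegree := by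
  have hdvd := (hP.natDegree_dvd_iff_dvd_X_pow_card_pow_sub_X).1 hd
  rw [natCard_F5] at hdvd
  have hs : (P.map (algebraMap F5 K)).Splits := by
    have h1 := FiniteField.isSplittingField_of_card_eq 5 n hK
    refine Splits.of_dvd h1.splits ?_ (map_dvd (mapRingHom (algebraMap F5 K)) hdvd)
    rw [Polynomial.map_ne_zero_iff (algebraMap F5 K).injective]
    exact FiniteField.X_pow_card_pow_sub_X_ne_zero _ hn.ne' (by norm_num)
  have hsep : P.Separable := PerfectField.separable_of_irreducible hP
  rw [← card_rootSet_eq_natDegree hsep hs, ← Set.toFinset_card]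
  congr 1
  ext x
  rw [Finset.mem_filter, Set.mem_toFinset, mem_rootSet_of_ne hm.ne_zero]
  constructor
  · rintro ⟨_, rfl⟩; exact minpoly.aeval _ _
  · intro h
    exact ⟨Finset.mem_univ _, (minpoly.eq_of_irreducible_of_monic hP h hm).symm⟩

end fieldpart

open Classical in
/-- Monic irreducible polynomials of degree at most `D`. -/
noncomputable def Irr (D : ℕ) : Finset F5[X] :=
  ((Finset.range (D + 1)).biUnion M).filter Irreducible

lemma mem_Irr {D : ℕ} {P : F5[X]} : P ∈ Irr D ↔ P.Monic ∧ Irreducible P ∧ P.natDegree ≤ D := by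
  simp only [Irr, Finset.mem_filter, Finset.mem_biUnion, Finset.mem_range, mem_M]
  constructor
  · rintro ⟨⟨d, hd, hm, rfl⟩, hi⟩
    exact ⟨hm, hi, by omega⟩
  · rintro ⟨hm, hi, hd⟩
    exact ⟨⟨_, by omega, hm, rfl⟩, hi⟩

/-- Prime power sum. -/
noncomputable def Sp (D n : ℕ) : ℤ := ∑ P ∈ Irr D, ∑ k ∈ Finset.Icc 1 D,
  if k * P.natDegree = n then (P.natDegree : ℤ) * chi P ^ k else 0

lemma field_sum {K : Type} [Field K] [Fintype K] [DecidableEq K] [Algebra F5 K] {n D : ℕ} (hn : 0 < n)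
    (hD : n ≤ D) (hK : Fintype.card K = 5 ^ n) :
    ∑ x : K, quadraticChar K (aeval x f) = Sp D n := by
  have hint : ∀ x : K, IsIntegral F5 x := fun x => Algebra.IsIntegral.isIntegral x
  have hdvd : ∀ x : K, (minpoly F5 x).natDegree ∣ n := fun x => by
    rw [← finrank_K hK]; exact minpoly.degree_dvd (hint x)
  rw [← Finset.sum_fiberwise_of_maps_to (s := Finset.univ) (t := Irr D) (g := fun x : K => minpoly F5 x)]
  · rw [Sp]
    refine Finset.sum_congr rfl fun P hP => ?_
    obtain ⟨hm, hi, hdeg⟩ := mem_Irr.1 hP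
    have hpos : 0 < P.natDegree := hi.natDegree_pos
    by_cases hd : P.natDegree ∣ n
    · obtain ⟨k, hk⟩ := hd
      have hk0 : 1 ≤ k := by
        rcases Nat.eq_zero_or_pos k with rfl | h
        · omega
        · exact h
      have hkn : k ≤ n := by rw [hk]; exact Nat.le_mul_of_pos_left _ hpos
      rw [Finset.sum_eq_single k]
      · rw [if_pos (by rw [hk, mul_comm])]
        rw [Finset.sum_congr rfl (g := fun _ => chi P ^ k)]
        · rw [Finset.sum_const, card_minpoly hn hK hi hm ⟨k, hk⟩]; simp
        · intro x hx
          rw [Finset.mem_filter] at hx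
          rw [qc_value hK, hx.2, hk, Nat.mul_div_cancel_left _ hpos]
      · intro j _ hj
        rw [if_neg]
        intro h
        apply hj
        rw [hk, mul_comm] at h
        exact Nat.eq_of_mul_eq_mul_left hpos h
      · intro h
        exact absurd (Finset.mem_Icc.2 ⟨hk0, hkn.trans hD⟩) h
    · rw [Finset.sum_eq_zero, Finset.sum_eq_zero]
      · intro k _
        rw [if_neg]
        rintro rfl
        exact hd (dvd_mul_left _ _)
      · intro x hx
        rw [Finset.mem_filter] at hx
        exact absurd (hx.2 ▸ hdvd x) hd
  · intro x _
    exact mem_Irr.2 ⟨minpoly.monic (hint x), minpoly.irreducible (hint x),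
      (Nat.le_of_dvd hn (hdvd x)).trans hD⟩

open UniqueFactorizationMonoid in
open Classical in
lemma degree_count {g : F5[X]} {d : ℕ} (hg : g ∈ M d) :
    (∑ P ∈ Irr d, ∑ k ∈ Finset.Icc 1 d, if P ^ k ∣ g then P.natDegree else 0) = d := by
  obtain ⟨hm, hd⟩ := mem_M.1 hg
  have h0 := hm.ne_zero
  have hfac : ∀ P ∈ normalizedFactors g, P ∈ Irr d := by
    intro P hP
    have hi := irreducible_of_normalized_factor P hP
    have hn := normalize_normalized_factor P hP
    refine mem_Irr.2 ⟨?_, hi, ?_⟩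
    · rw [← hn]; exact monic_normalize hi.ne_zero
    · rw [← hd]; exact natDegree_le_of_dvd (dvd_of_mem_normalizedFactors hP) h0
  have hcount : ∀ P ∈ Irr d, (∑ k ∈ Finset.Icc 1 d, if P ^ k ∣ g then P.natDegree else 0)
      = (normalizedFactors g).count P * P.natDegree := by
    intro P hP
    obtain ⟨hPm, hi, hdeg⟩ := mem_Irr.1 hP
    have hpos : 0 < P.natDegree := hi.natDegree_pos
    have hiff : ∀ k, P ^ k ∣ g ↔ k ≤ (normalizedFactors g).count P := by
      intro k
      rw [pow_dvd_iff_le_emultiplicity, le_emultiplicity_iff_replicate_le_normalizedFactors hi h0,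
        hPm.normalize_eq_self, Multiset.le_count_iff_replicate_le]
    have hle : (normalizedFactors g).count P ≤ d := by
      have h1 := (hiff _).2 le_rfl
      have h2 := natDegree_le_of_dvd h1 h0
      rw [natDegree_pow, hd] at h2
      exact (Nat.le_mul_of_pos_right _ hpos).trans h2
    rw [← Finset.sum_filter, Finset.sum_const, smul_eq_mul]
    congr 1
    have : (Finset.Icc 1 d).filter (fun k => P ^ k ∣ g) = Finset.Icc 1 ((normalizedFactors g).count P) := by
      ext k
      simp only [Finset.mem_filter, Finset.mem_Icc, hiff]
      omega
    rw [this]; simp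
  rw [Finset.sum_congr rfl hcount]
  have hprod : (normalizedFactors g).prod = g := by
    rw [prod_normalizedFactors_eq h0, hm.normalize_eq_self]
  have hnd : ((normalizedFactors g).map natDegree).sum = d := by
    rw [← natDegree_multiset_prod_of_monic, hprod, hd]
    intro P hP
    exact (mem_Irr.1 (hfac P hP)).1
  rw [Finset.sum_multiset_map_count] at hnd
  refine Eq.trans ?_ hnd
  symm
  simp only [smul_eq_mul]
  refine Finset.sum_subset (fun P hP => hfac P (Multiset.mem_toFinset.1 hP)) ?_
  intro P _ hP
  rw [Multiset.mem_toFinset] at hP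
  rw [Multiset.count_eq_zero_of_notMem hP, zero_mul]

open Classical in
lemma sum_dvd {Q : F5[X]} (hQ : Q.Monic) (d : ℕ) :
    ∑ g ∈ M d, (if Q ∣ g then chi g else 0)
      = if Q.natDegree ≤ d then chi Q * c (d - Q.natDegree) else 0 := by
  split_ifs with hd
  · rw [← Finset.sum_filter, c, Finset.mul_sum]
    symm
    refine Finset.sum_bij (fun h _ => Q * h) ?_ ?_ ?_ ?_
    · intro h hh
      rw [mem_M] at hh
      rw [Finset.mem_filter, mem_M]
      refine ⟨⟨hQ.mul hh.1, ?_⟩, dvd_mul_right _ _⟩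
      rw [hQ.natDegree_mul hh.1, hh.2]; omega
    · intro a _ b _ h
      exact mul_left_cancel₀ hQ.ne_zero h
    · intro g hg
      rw [Finset.mem_filter, mem_M] at hg
      obtain ⟨⟨hm, hgd⟩, h, rfl⟩ := hg
      have hh : h.Monic := hQ.of_mul_monic_left hm
      refine ⟨h, mem_M.2 ⟨hh, ?_⟩, rfl⟩
      rw [hQ.natDegree_mul hh] at hgd; omega
    · intro h _
      rw [chi_mul]
  · refine Finset.sum_eq_zero fun g hg => if_neg fun h => ?_
    obtain ⟨hm, hgd⟩ := mem_M.1 hg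
    have := natDegree_le_of_dvd h hm.ne_zero
    omega

lemma newton (d : ℕ) : (d : ℤ) * c d = ∑ n ∈ Finset.Icc 1 d, Sp d n * c (d - n) := by
  classical
  have h1 : (d : ℤ) * c d = ∑ g ∈ M d, ∑ P ∈ Irr d, ∑ k ∈ Finset.Icc 1 d,
      (P.natDegree : ℤ) * (if P ^ k ∣ g then chi g else 0) := by
    rw [c, Finset.mul_sum]
    refine Finset.sum_congr rfl fun g hg => ?_
    conv_lhs => rw [← degree_count hg]
    push_cast
    rw [Finset.sum_mul]
    refine Finset.sum_congr rfl fun P _ => ?_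
    rw [Finset.sum_mul]
    refine Finset.sum_congr rfl fun k _ => ?_
    split_ifs <;> simp
  have h2 : ∑ g ∈ M d, ∑ P ∈ Irr d, ∑ k ∈ Finset.Icc 1 d,
      (P.natDegree : ℤ) * (if P ^ k ∣ g then chi g else 0)
      = ∑ P ∈ Irr d, ∑ k ∈ Finset.Icc 1 d, (P.natDegree : ℤ) *
        (if k * P.natDegree ≤ d then chi P ^ k * c (d - k * P.natDegree) else 0) := by
    rw [Finset.sum_comm]
    refine Finset.sum_congr rfl fun P hP => ?_
    rw [Finset.sum_comm]
    refine Finset.sum_congr rfl fun k _ => ?_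
    rw [← Finset.mul_sum, sum_dvd ((mem_Irr.1 hP).1.pow k), natDegree_pow, chi_pow]
  rw [h1, h2]
  have h3 : ∑ n ∈ Finset.Icc 1 d, Sp d n * c (d - n) = ∑ P ∈ Irr d, ∑ k ∈ Finset.Icc 1 d,
      ∑ n ∈ Finset.Icc 1 d,
        (if k * P.natDegree = n then (P.natDegree : ℤ) * chi P ^ k else 0) * c (d - n) := by
    have h4 : ∀ n ∈ Finset.Icc 1 d, Sp d n * c (d - n) = ∑ P ∈ Irr d, ∑ k ∈ Finset.Icc 1 d,
        (if k * P.natDegree = n then (P.natDegree : ℤ) * chi P ^ k else 0) * c (d - n) := by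
      intro n _
      rw [Sp, Finset.sum_mul]
      refine Finset.sum_congr rfl fun P _ => ?_
      rw [Finset.sum_mul]
    rw [Finset.sum_congr rfl h4, Finset.sum_comm]
    refine Finset.sum_congr rfl fun P _ => ?_
    rw [Finset.sum_comm]
  rw [h3]
  refine Finset.sum_congr rfl fun P hP => Finset.sum_congr rfl fun k hk => ?_
  have hpos : 0 < P.natDegree := (mem_Irr.1 hP).2.1.natDegree_pos
  have hk1 := (Finset.mem_Icc.1 hk).1
  have hkp : 1 ≤ k * P.natDegree := Nat.mul_pos hk1 hpos
  simp_rw [ite_mul, zero_mul]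
  rw [Finset.sum_ite_eq]
  simp only [Finset.mem_Icc, hkp, true_and]
  split_ifs <;> ring

end PC5

namespace PC5

/-- Product of `1 - a X` over a multiset. -/
noncomputable def Qs (s : Multiset ℂ) : PowerSeries ℂ :=
  (s.map fun a => 1 - PowerSeries.C a * PowerSeries.X).prod

/-- Generating series of positive power sums. -/
noncomputable def Ps (s : Multiset ℂ) : PowerSeries ℂ :=
  PowerSeries.mk fun n => if n = 0 then 0 else (s.map (· ^ n)).sum

lemma Ps_single (a : ℂ) : Ps {a} * (1 - PowerSeries.C a * PowerSeries.X) =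
    PowerSeries.C a * PowerSeries.X := by
  ext n
  rw [mul_sub, mul_one, ← mul_assoc]
  rcases n with _ | n
  · simp [Ps]
  · rw [map_sub, PowerSeries.coeff_succ_mul_X, PowerSeries.coeff_mul_C, PowerSeries.coeff_C_mul,
      PowerSeries.coeff_X]
    rcases n with _ | n
    · simp [Ps]
    · simp [Ps, pow_succ]

lemma Ps_cons (a : ℂ) (s : Multiset ℂ) : Ps (a ::ₘ s) = Ps {a} + Ps s := by
  ext n
  simp only [Ps, map_add, PowerSeries.coeff_mk]
  split_ifs <;> simp

lemma deriv_Qs (s : Multiset ℂ) :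
    PowerSeries.X * PowerSeries.derivative ℂ (Qs s) = - (Ps s * Qs s) := by
  induction s using Multiset.induction_on with
  | empty =>
    have : Ps 0 = 0 := by ext n; simp [Ps]
    simp [Qs, this]
  | cons a s ih =>
    have hQ : Qs (a ::ₘ s) = (1 - PowerSeries.C a * PowerSeries.X) * Qs s := by simp [Qs]
    rw [hQ, Derivation.leibniz, Ps_cons]
    have hd : PowerSeries.derivative ℂ (1 - PowerSeries.C a * PowerSeries.X) = -PowerSeries.C a := by
      simp [PowerSeries.derivative_C]
    rw [hd]
    have h1 := Ps_single a
    simp only [smul_eq_mul]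
    linear_combination (1 - PowerSeries.C a * PowerSeries.X) * ih + Qs s * h1

lemma newton_roots (s : Multiset ℂ) (d : ℕ) : (d : ℂ) * PowerSeries.coeff d (Qs s) =
    - ∑ n ∈ Finset.Icc 1 d, (s.map (· ^ n)).sum * PowerSeries.coeff (d - n) (Qs s) := by
  have h := congrArg (PowerSeries.coeff d) (deriv_Qs s)
  rw [map_neg, PowerSeries.coeff_mul (φ := Ps s), Finset.Nat.sum_antidiagonal_eq_sum_range_succ_mk] at h
  have hl : PowerSeries.coeff d (PowerSeries.X * PowerSeries.derivative ℂ (Qs s))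
      = (d : ℂ) * PowerSeries.coeff d (Qs s) := by
    rcases d with _ | d
    · simp
    · rw [PowerSeries.coeff_succ_X_mul, PowerSeries.coeff_derivative]; push_cast; ring
  rw [← hl, h]
  congr 1
  symm
  refine Finset.sum_subset_zero_on_sdiff ?_ ?_ ?_
  · intro n hn
    rw [Finset.mem_Icc] at hn
    rw [Finset.mem_range]; omega
  · intro n hn
    rw [Finset.mem_sdiff, Finset.mem_range, Finset.mem_Icc] at hn
    have : n = 0 := by omega
    subst this
    simp [Ps]
  · intro n hn
    rw [Finset.mem_Icc] at hn
    have : n ≠ 0 := by omega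
    simp [Ps, this]

lemma P5_natDegree : P5.natDegree = 8 := by
  unfold P5; compute_degree!

lemma P5_monic : P5.Monic := by
  rw [Monic, leadingCoeff, P5_natDegree]
  simp [P5, coeff_X, coeff_ofNat_mul]

lemma reverse_prod (s : Multiset ℂ) :
    (s.map fun a => X - C a).prod.reverse = (s.map fun a => (1 - C a * X : ℂ[X])).prod := by
  induction s using Multiset.induction_on with
  | empty => simpa using reverse_C (1 : ℂ)
  | cons a s ih =>
    rw [Multiset.map_cons, Multiset.prod_cons, Multiset.map_cons, Multiset.prod_cons,
      reverse_mul_of_domain, ih]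
    congr 1
    ext n
    rw [coeff_reverse, natDegree_X_sub_C]
    rcases n with _ | _ | n
    · simp [revAt_le]
    · simp [revAt_le, coeff_one]
    · rw [revAt_eq_self_of_lt (by omega)]
      simp [coeff_X, coeff_one]

lemma Qs_roots : Qs P5.roots = (P5.reverse : PowerSeries ℂ) := by
  have h : (P5.roots.map fun a => X - C a).prod = P5 :=
    ((IsAlgClosed.splits P5).eq_prod_roots_of_monic P5_monic).symm
  conv_rhs => rw [← h]
  rw [reverse_prod, Qs]
  rw [← Polynomial.coeToPowerSeries.ringHom_apply, map_multiset_prod, Multiset.map_map]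
  congr 1
  refine Multiset.map_congr rfl fun a _ => ?_
  simp

lemma coeff_Qs (d : ℕ) : PowerSeries.coeff d (Qs P5.roots) = (c d : ℂ) := by
  rw [Qs_roots, Polynomial.coeff_coe, coeff_reverse, P5_natDegree]
  obtain ⟨h0, h1, h2, h3, h4, h5, h6, h7, h8⟩ := c_values
  rcases le_or_gt 9 d with hd | hd
  · rw [c_big hd, revAt_eq_self_of_lt (by omega), coeff_eq_zero_of_natDegree_lt]
    · simp
    · rw [P5_natDegree]; omega
  · rw [revAt_le (by omega)]
    interval_cases d <;>
      simp [P5, coeff_X, coeff_ofNat_mul, coeff_ofNat_zero, coeff_ofNat_succ, coeff_X_pow, *]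

lemma Sp_indep {n D E : ℕ} (hn : 0 < n) (hD : n ≤ D) (hE : n ≤ E) : Sp D n = Sp E n := by
  classical
  have : Fintype (GaloisField 5 n) := Fintype.ofFinite _
  have hK : Fintype.card (GaloisField 5 n) = 5 ^ n := by
    rw [Fintype.card_eq_nat_card, GaloisField.card 5 n hn.ne']
  rw [← field_sum hn hD hK, ← field_sum hn hE hK]

lemma Sp_eq (n : ℕ) (hn : 0 < n) : (Sp n n : ℂ) = - (P5.roots.map (· ^ n)).sum := by
  induction n using Nat.strong_induction_on with
  | _ n ih =>
  have h1 := newton n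
  have h2 := newton_roots P5.roots n
  simp_rw [coeff_Qs] at h2
  have h1' := congrArg (Int.cast : ℤ → ℂ) h1
  push_cast at h1'
  rw [h1'] at h2
  obtain ⟨m, rfl⟩ : ∃ m, n = m + 1 := ⟨n - 1, by omega⟩
  rw [Finset.sum_Icc_succ_top (by omega), Finset.sum_Icc_succ_top (by omega)] at h2
  have h3 : ∑ k ∈ Finset.Icc 1 m, (Sp (m + 1) k : ℂ) * (c (m + 1 - k) : ℂ) =
      - ∑ k ∈ Finset.Icc 1 m, (P5.roots.map (· ^ k)).sum * (c (m + 1 - k) : ℂ) := by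
    rw [← Finset.sum_neg_distrib]
    refine Finset.sum_congr rfl fun k hk => ?_
    rw [Finset.mem_Icc] at hk
    rw [Sp_indep (E := k) (by omega) (by omega) le_rfl, ih k (by omega) (by omega)]
    ring
  rw [h3] at h2
  simp only [Nat.sub_self, c_values.1, Int.cast_one, mul_one] at h2
  linear_combination h2

lemma aeval_f {F : Type} [Field F] [Algebra F5 F] (x : F) :
    aeval x f = x ^ 9 + x ^ 6 + 2 * x ^ 5 + x := by
  have h2 : aeval x (2 : F5[X]) = 2 := map_ofNat _ 2
  simp only [f, map_add, map_mul, map_pow, aeval_X, h2]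

lemma card_points {F : Type} [Field F] [Fintype F] [DecidableEq F] [Algebra F5 F] :
    (Nat.card {p : F × F // p.2 ^ 2 = p.1 ^ 9 + p.1 ^ 6 + 2 * p.1 ^ 5 + p.1} : ℤ) =
      Fintype.card F + ∑ x : F, quadraticChar F (aeval x f) := by
  have he : {p : F × F // p.2 ^ 2 = p.1 ^ 9 + p.1 ^ 6 + 2 * p.1 ^ 5 + p.1} ≃
      Σ x : F, {y : F // y ^ 2 = aeval x f} :=
    { toFun := fun p => ⟨p.1.1, p.1.2, by rw [p.2, aeval_f]⟩
      invFun := fun q => ⟨(q.1, q.2.1), by rw [← aeval_f]; exact q.2.2⟩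
      left_inv := fun p => rfl
      right_inv := fun q => rfl }
  rw [Nat.card_congr he, Nat.card_eq_fintype_card, Fintype.card_sigma]
  push_cast
  have : ∀ x : F, (Fintype.card {y : F // y ^ 2 = aeval x f} : ℤ) =
      quadraticChar F (aeval x f) + 1 := by
    intro x
    rw [← quadraticChar_card_sqrts (ringChar_ne (K := F)), Set.toFinset_card]
    rfl
  simp_rw [this]
  rw [Finset.sum_add_distrib]
  simp [add_comm]

end PC5

/-- For every `n ≥ 1` and every finite field `F` with `5 ^ n` elements, the number of pairs
`(x, y) ∈ F × F` with `y² = x⁹ + x⁶ + 2x⁵ + x` equals `5 ^ n` minus the sum of the `n`-th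
powers of the complex roots (with multiplicity) of `P5`. -/
theorem point_count_F5 (n : ℕ) (hn : 0 < n) (F : Type) [Field F] [Fintype F]
    (hF : Fintype.card F = 5 ^ n) :
    ((Nat.card {p : F × F // p.2 ^ 2 = p.1 ^ 9 + p.1 ^ 6 + 2 * p.1 ^ 5 + p.1} : ℕ) : ℂ)
      = 5 ^ n - (P5.roots.map (· ^ n)).sum := by
  classical
  have hch : CharP F 5 := by
    obtain ⟨p, hp⟩ := CharP.exists F
    obtain ⟨m, hpp, hc⟩ := FiniteField.card F p
    have h5 : p ∣ 5 ^ n := by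
      rw [← hF, hc]; exact dvd_pow_self _ m.ne_zero
    have : p = 5 := (Nat.prime_dvd_prime_iff_eq hpp (by norm_num)).1 (hpp.dvd_of_dvd_pow h5)
    rwa [this] at hp
  let _ : Algebra PC5.F5 F := ZMod.algebra F 5
  have h := PC5.card_points (F := F)
  rw [PC5.field_sum hn le_rfl hF, hF] at h
  have h' := congrArg (Int.cast : ℤ → ℂ) h
  push_cast at h'
  rw [h', PC5.Sp_eq n hn]
  ring
end

section
/- The polynomial P₃(T) = T⁸ − T⁷ + 2T⁶ − 4T⁵ − 2T⁴ − 12T³ + 18T² − 27T + 81 is irreducible over ℚ. -/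
open Polynomial

/-- The Weil polynomial `P₃` viewed as a polynomial with rational coefficients. -/
noncomputable def P3Q : Polynomial ℚ :=
  X ^ 8 - X ^ 7 + 2 * X ^ 6 - 4 * X ^ 5 - 2 * X ^ 4 - 12 * X ^ 3 + 18 * X ^ 2 - 27 * X + 81

/-- The integral version of `P3Q`. -/
noncomputable def P3Z : Polynomial ℤ :=
  X ^ 8 - X ^ 7 + 2 * X ^ 6 - 4 * X ^ 5 - 2 * X ^ 4 - 12 * X ^ 3 + 18 * X ^ 2 - 27 * X + 81

theorem P3Z_monic : P3Z.Monic := by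
  unfold P3Z
  monicity!

theorem P3_root_bound (z : ℂ)
    (hz : z ^ 8 - z ^ 7 + 2 * z ^ 6 - 4 * z ^ 5 - 2 * z ^ 4 - 12 * z ^ 3 + 18 * z ^ 2
      - 27 * z + 81 = 0) : ‖z‖ < 4 := by
  by_contra! h
  have e : z ^ 8 = z ^ 7 + -2 * z ^ 6 + 4 * z ^ 5 + 2 * z ^ 4 + 12 * z ^ 3 + -18 * z ^ 2
      + 27 * z + -81 := by linear_combination hz
  have b : ‖z‖ ^ 8 ≤ ‖z‖ ^ 7 + 2 * ‖z‖ ^ 6 + 4 * ‖z‖ ^ 5 + 2 * ‖z‖ ^ 4 + 12 * ‖z‖ ^ 3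
      + 18 * ‖z‖ ^ 2 + 27 * ‖z‖ + 81 := by
    rw [← norm_pow, e]
    refine (norm_add_le _ _).trans (add_le_add ((norm_add_le _ _).trans (add_le_add
      ((norm_add_le _ _).trans (add_le_add ((norm_add_le _ _).trans (add_le_add
      ((norm_add_le _ _).trans (add_le_add ((norm_add_le _ _).trans (add_le_add
      ((norm_add_le _ _).trans (add_le_add ?_ ?_)) ?_)) ?_)) ?_)) ?_)) ?_)) ?_) <;> simp
  obtain ⟨t, ht, hr⟩ : ∃ t : ℝ, 0 ≤ t ∧ ‖z‖ = t + 4 := ⟨‖z‖ - 4, by linarith, by ring⟩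
  rw [hr] at b
  ring_nf at b
  have := pow_nonneg ht 2
  have := pow_nonneg ht 3
  have := pow_nonneg ht 4
  have := pow_nonneg ht 5
  have := pow_nonneg ht 6
  have := pow_nonneg ht 7
  have := pow_nonneg ht 8
  linarith

theorem prod_norm_gt (s : Multiset ℂ) (hs : ∀ w ∈ s, 1 < ‖w‖) :
    1 ≤ ‖s.prod‖ ∧ (s ≠ 0 → 1 < ‖s.prod‖) := by
  induction s using Multiset.induction with
  | empty => simp
  | cons a s ih =>
    have h1 := (ih fun w hw => hs w (Multiset.mem_cons_of_mem hw)).1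
    have h2 := hs a (Multiset.mem_cons_self a s)
    rw [Multiset.prod_cons, norm_mul]
    have : 1 < ‖a‖ * ‖s.prod‖ := by nlinarith
    exact ⟨this.le, fun _ => this⟩

theorem factor_eval (g : ℤ[X]) (hg : g.Monic) (hd : g ∣ P3Z) (h1 : g ≠ 1) :
    g.eval (-8) ≠ 1 ∧ g.eval (-8) ≠ -1 := by
  have hm : (g.map (Int.castRingHom ℂ)).Monic := hg.map _
  have hs := IsAlgClosed.splits (g.map (Int.castRingHom ℂ))
  have he := hs.eval_eq_prod_roots_of_monic hm (-8)
  have hE : (g.map (Int.castRingHom ℂ)).eval (-8) = ((g.eval (-8) : ℤ) : ℂ) := by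
    have := Polynomial.eval_intCast_map (Int.castRingHom ℂ) g (-8)
    simpa using this
  have hroots : (g.map (Int.castRingHom ℂ)).roots ≠ 0 := by
    intro h0
    have := hs.natDegree_eq_card_roots
    rw [h0, Multiset.card_zero, hg.natDegree_map] at this
    exact h1 (hg.natDegree_eq_zero.mp this)
  have key := (prod_norm_gt ((g.map (Int.castRingHom ℂ)).roots.map fun a => -8 - a) (by
    intro w hw
    obtain ⟨z, hz, rfl⟩ := Multiset.mem_map.mp hw
    have hz0 : (g.map (Int.castRingHom ℂ)).eval z = 0 := (mem_roots'.mp hz).2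
    have hP : (P3Z.map (Int.castRingHom ℂ)).eval z = 0 :=
      eval_eq_zero_of_dvd_of_eval_eq_zero (Polynomial.map_dvd _ hd) hz0
    have hb := P3_root_bound z (by simpa [P3Z] using hP)
    have h8 : ‖(-8 : ℂ)‖ = 8 := by simp
    have := norm_sub_norm_le (-8 : ℂ) z
    linarith)).2 (by simpa using hroots)
  rw [← he, hE] at key
  constructor <;> intro h <;> rw [h] at key <;> simp at key

theorem P3Z_irreducible : Irreducible P3Z := by
  have hne : P3Z ≠ 1 := by
    intro h
    have := congrArg (eval 0) h
    simp [P3Z] at this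
  rw [Polynomial.irreducible_of_monic P3Z_monic hne]
  intro f g hf hg hfg
  by_contra! hcon
  have hF := factor_eval f hf ⟨g, hfg.symm⟩ hcon.1
  have hG := factor_eval g hg ⟨f, by rw [← hfg, mul_comm]⟩ hcon.2
  have hv : f.eval (-8) * g.eval (-8) = 19529129 := by
    rw [← eval_mul, hfg]
    simp [P3Z]
  have hp : Prime (19529129 : ℤ) := by
    rw [Int.prime_iff_natAbs_prime]
    norm_num
  rcases hp.irreducible.isUnit_or_isUnit hv.symm with h | h
  · rcases Int.isUnit_iff.mp h with h | h
    exacts [hF.1 h, hF.2 h]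
  · rcases Int.isUnit_iff.mp h with h | h
    exacts [hG.1 h, hG.2 h]

/-- `P₃(T) = T⁸ − T⁷ + 2T⁶ − 4T⁵ − 2T⁴ − 12T³ + 18T² − 27T + 81` is irreducible over `ℚ`. -/
theorem P3_irreducible : Irreducible P3Q := by
  have h := (IsPrimitive.Int.irreducible_iff_irreducible_map_cast P3Z_monic.isPrimitive).mp
    P3Z_irreducible
  have e : P3Z.map (Int.castRingHom ℚ) = P3Q := by
    simp [P3Z, P3Q]
  rwa [e] at h
end

section
/- If α and β are complex roots of P₅(T) = T⁸ − T⁷ + 2T⁶ − 4T⁵ + 16T⁴ − 20T³ + 50T² − 125T + 625 and α/β is a root of unity (i.e., (α/β)^n = 1 for some positive integer n), then α = β. (Equivalently, the tensor square of the L-polynomial has no nontrivial cyclotomic factors; this certifies that the corresponding ordinary simple abelian fourfold is geometrically simple.) -/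
open Polynomial

theorem pow_mod_2 {k : Type*} [CommRing k] (a : k) (hq : (2 : k) = 0)
    (hP : a^8 - a^7 + 2*a^6 - 4*a^5 + 16*a^4 - 20*a^3 + 50*a^2 - 125*a + 625 = 0) :
    a^14 = 1 := by
  have h7 : a^7 = a^7 := rfl
  have h14 : a^14 = (1) := by
    have e : a^14 = (a^7)^2 := by ring
    rw [e, h7]
    linear_combination ((1) + (1)*a^1 + (1)*a^2 + (1)*a^3 + (1)*a^4 + (1)*a^5 + (1)*a^6) * hP + ((-313) + (-250)*a^1 + (-275)*a^2 + (-265)*a^3 + (-273)*a^4 + (-271)*a^5 + (-272)*a^6 + (41)*a^7 + (-22)*a^8 + (3)*a^9 + (-7)*a^10 + (1)*a^11 + (-1)*a^12) * hq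
  linear_combination h14

theorem pow_mod_3 {k : Type*} [CommRing k] (a : k) (hq : (3 : k) = 0)
    (hP : a^8 - a^7 + 2*a^6 - 4*a^5 + 16*a^4 - 20*a^3 + 50*a^2 - 125*a + 625 = 0) :
    a^36 = 2 := by
  have h4 : a^4 = a^4 := rfl
  have h9 : a^9 = (-1) + (1)*a^1 + (1)*a^4 + (-1)*a^6 + (-1)*a^7 := by
    have e : a^9 = (a^4)^2*a := by ring
    rw [e, h4]
    linear_combination ((1) + (1)*a^1) * hP + ((-208) + (-167)*a^1 + (25)*a^2 + (-10)*a^3 + (1)*a^4 + (-4)*a^5 + (1)*a^6) * hq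
  have h18 : a^18 = (1)*a^1 + (1)*a^4 + (-1)*a^6 + (-1)*a^7 := by
    have e : a^18 = (a^9)^2 := by ring
    rw [e, h9]
    linear_combination ((1) + (-1)*a^1 + (1)*a^3 + (-1)*a^4 + (1)*a^6) * hP + ((-208) + (249)*a^1 + (-58)*a^2 + (-185)*a^3 + (237)*a^4 + (-51)*a^5 + (-186)*a^6 + (31)*a^7 + (-11)*a^8 + (5)*a^9 + (-5)*a^10 + (1)*a^13) * hq
  have h36 : a^36 = (2) := by
    have e : a^36 = (a^18)^2 := by ring
    rw [e, h18]
    linear_combination ((1) + (-1)*a^1 + (1)*a^3 + (-1)*a^4 + (1)*a^6) * hP + ((-209) + (250)*a^1 + (-58)*a^2 + (-185)*a^3 + (238)*a^4 + (-51)*a^5 + (-187)*a^6 + (30)*a^7 + (-11)*a^8 + (5)*a^9 + (-5)*a^10 + (1)*a^13) * hq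
  linear_combination h36

theorem pow_mod_19 {k : Type*} [CommRing k] (a : k) (hq : (19 : k) = 0)
    (hP : a^8 - a^7 + 2*a^6 - 4*a^5 + 16*a^4 - 20*a^3 + 50*a^2 - 125*a + 625 = 0) :
    a^2413 = 9 := by
  have h4 : a^4 = a^4 := rfl
  have h9 : a^9 = (2) + (-6)*a^1 + (-1)*a^2 + (8)*a^3 + (4)*a^4 + (7)*a^5 + (2)*a^6 + (-1)*a^7 := by
    have e : a^9 = (a^4)^2*a := by ring
    rw [e, h4]
    linear_combination ((1) + (1)*a^1) * hP + ((-33) + (-26)*a^1 + (4)*a^2 + (-2)*a^3 + (-1)*a^5) * hq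
  have h18 : a^18 = (-5) + (-5)*a^1 + (1)*a^2 + (-5)*a^3 + (2)*a^4 + (6)*a^5 + (-6)*a^6 + (5)*a^7 := by
    have e : a^18 = (a^9)^2 := by ring
    rw [e, h9]
    linear_combination ((5) + (1)*a^1 + (9)*a^2 + (-4)*a^3 + (4)*a^4 + (-3)*a^5 + (1)*a^6) * hP + ((-164) + (-1)*a^1 + (-301)*a^2 + (196)*a^3 + (-189)*a^4 + (143)*a^5 + (-76)*a^6 + (25)*a^7 + (-4)*a^8 + (10)*a^9 + (2)*a^11 + (-1)*a^12) * hq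
  have h37 : a^37 = (-3) + (-8)*a^1 + (8)*a^2 + (7)*a^3 + (7)*a^4 + (5)*a^5 + (3)*a^6 + (-2)*a^7 := by
    have e : a^37 = (a^18)^2*a := by ring
    rw [e, h18]
    linear_combination ((8) + (6)*a^1 + (-6)*a^2 + (4)*a^3 + (-4)*a^4 + (-8)*a^5 + (3)*a^6 + (6)*a^7) * hP + ((-263) + (-143)*a^1 + (218)*a^2 + (-178)*a^3 + (175)*a^4 + (218)*a^5 + (-136)*a^6 + (-164)*a^7 + (28)*a^8 + (-14)*a^9 + (8)*a^10 + (-6)*a^11 + (-2)*a^12 + (5)*a^13 + (-3)*a^14 + (1)*a^15) * hq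
  have h75 : a^75 = (9) + (2)*a^1 + (9)*a^2 + (5)*a^3 + (4)*a^4 + (-7)*a^5 + (3)*a^6 + (3)*a^7 := by
    have e : a^75 = (a^37)^2*a := by ring
    rw [e, h37]
    linear_combination ((-5) + (5)*a^1 + (-1)*a^2 + (4)*a^3 + (7)*a^4 + (-8)*a^5 + (-8)*a^6 + (4)*a^7) * hP + ((164) + (-197)*a^1 + (81)*a^2 + (-156)*a^3 + (-201)*a^4 + (288)*a^5 + (197)*a^6 + (-157)*a^7 + (42)*a^8 + (-1)*a^9 + (13)*a^10 + (-2)*a^11 + (1)*a^12 + (-1)*a^13) * hq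
  have h150 : a^150 = (6) + (8)*a^1 + (5)*a^2 + (5)*a^3 + (1)*a^4 + (-2)*a^5 + (3)*a^6 + (-5)*a^7 := by
    have e : a^150 = (a^75)^2 := by ring
    rw [e, h75]
    linear_combination ((-9) + (7)*a^1 + (-2)*a^2 + (-3)*a^3 + (-5)*a^4 + (8)*a^5 + (9)*a^6) * hP + ((300) + (-288)*a^1 + (144)*a^2 + (64)*a^3 + (174)*a^4 + (-299)*a^5 + (-223)*a^6 + (33)*a^7 + (-10)*a^8 + (3)*a^9 + (-2)*a^12 + (1)*a^13) * hq
  have h301 : a^301 = (7) + (-2)*a^1 + (1)*a^2 + (-9)*a^3 + (-5)*a^4 + (-3)*a^5 + (5)*a^7 := by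
    have e : a^301 = (a^150)^2*a := by ring
    rw [e, h150]
    linear_combination ((-6) + (-5)*a^1 + (1)*a^2 + (-4)*a^3 + (5)*a^4 + (-7)*a^5 + (-5)*a^6 + (6)*a^7) * hP + ((197) + (127)*a^1 + (-45)*a^2 + (152)*a^3 + (-186)*a^4 + (284)*a^5 + (102)*a^6 + (-201)*a^7 + (39)*a^8 + (-17)*a^9 + (7)*a^10 + (-7)*a^11 + (1)*a^13 + (-1)*a^14 + (1)*a^15) * hq
  have h603 : a^603 = (-6) + (1)*a^1 + (8)*a^2 + (-3)*a^3 + (4)*a^4 + (-7)*a^5 + (5)*a^6 + (3)*a^7 := by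
    have e : a^603 = (a^301)^2*a := by ring
    rw [e, h301]
    linear_combination ((-3) + (2)*a^1 + (8)*a^2 + (-3)*a^3 + (2)*a^4 + (2)*a^5 + (6)*a^6 + (6)*a^7) * hP + ((99) + (-83)*a^1 + (-244)*a^2 + (144)*a^3 + (-109)*a^4 + (-40)*a^5 + (-201)*a^6 + (-153)*a^7 + (31)*a^8 + (-7)*a^9 + (3)*a^10 + (-8)*a^11 + (-2)*a^12 + (-2)*a^13 + (1)*a^15) * hq
  have h1206 : a^1206 = (5) + (-8)*a^1 + (2)*a^2 + (5)*a^3 + (-2)*a^4 + (-8)*a^5 + (2)*a^6 + (2)*a^7 := by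
    have e : a^1206 = (a^603)^2 := by ring
    rw [e, h603]
    linear_combination ((-6) + (-3)*a^1 + (-9)*a^2 + (-8)*a^3 + (4)*a^4 + (1)*a^5 + (9)*a^6) * hP + ((199) + (59)*a^1 + (287)*a^2 + (208)*a^3 + (-158)*a^4 + (9)*a^5 + (-301)*a^6 + (57)*a^7 + (-19)*a^8 + (8)*a^9 + (-4)*a^10 + (-2)*a^12 + (2)*a^13) * hq
  have h2413 : a^2413 = (9) := by
    have e : a^2413 = (a^1206)^2*a := by ring
    rw [e, h1206]
    linear_combination ((-5) + (-4)*a^1 + (-6)*a^2 + (-2)*a^3 + (4)*a^4 + (-5)*a^5 + (-7)*a^6 + (4)*a^7) * hP + ((164) + (100)*a^1 + (180)*a^2 + (36)*a^3 + (-128)*a^4 + (187)*a^5 + (188)*a^6 + (-151)*a^7 + (33)*a^8 + (-18)*a^9 + (12)*a^10 + (-1)*a^12 + (-2)*a^13 + (1)*a^14) * hq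
  linear_combination h2413

theorem key (q M c p n : ℕ) (hq : q.Prime) (hp : p.Prime) (hpq : p ≠ q) (hqc : ¬ q ∣ c)
    (H : ∀ (k : Type) [Field k] (a : k), (q : k) = 0 →
      a^8 - a^7 + 2*a^6 - 4*a^5 + 16*a^4 - 20*a^3 + 50*a^2 - 125*a + 625 = 0 → a ^ M = c)
    (α β ζ : ℂ) (hα : P5.eval α = 0) (hβ : P5.eval β = 0)
    (hζ : IsPrimitiveRoot ζ n) (hn : 0 < n) (hpn : p ∣ n) (h : α = ζ * β) : p ∣ M := by
  classical
  simp only [P5, eval_add, eval_sub, eval_mul, eval_pow, eval_X, eval_ofNat] at hα hβ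
  have hint : ∀ x : ℂ, x^8 - x^7 + 2*x^6 - 4*x^5 + 16*x^4 - 20*x^3 + 50*x^2 - 125*x + 625 = 0 →
      IsIntegral ℤ x := by
    intro x hx
    refine ⟨X^8 - X^7 + 2*X^6 - 4*X^5 + 16*X^4 - 20*X^3 + 50*X^2 - 125*X + 625, ?_, ?_⟩
    · monicity!
    · simpa [eval₂_ofNat] using hx
  have hβi := hint β hβ
  have hαi := hint α hα
  have hζi : IsIntegral ℤ ζ := hζ.isIntegral hn
  let A : (integralClosure ℤ ℂ) := ⟨α, hαi⟩
  let B : (integralClosure ℤ ℂ) := ⟨β, hβi⟩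
  let Z : (integralClosure ℤ ℂ) := ⟨ζ, hζi⟩
  have hA : A^8 - A^7 + 2*A^6 - 4*A^5 + 16*A^4 - 20*A^3 + 50*A^2 - 125*A + 625 = 0 :=
    by
    have hinj : Function.Injective (integralClosure ℤ ℂ).val := Subtype.val_injective
    apply hinj
    simp only [map_add, map_sub, map_mul, map_pow, map_ofNat, map_zero]
    exact hα
  have hB : B^8 - B^7 + 2*B^6 - 4*B^5 + 16*B^4 - 20*B^3 + 50*B^2 - 125*B + 625 = 0 :=
    by
    have hinj : Function.Injective (integralClosure ℤ ℂ).val := Subtype.val_injective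
    apply hinj
    simp only [map_add, map_sub, map_mul, map_pow, map_ofNat, map_zero]
    exact hβ
  have hAB : A = Z * B := Subtype.ext h
  have hZ : IsPrimitiveRoot Z n :=
    IsPrimitiveRoot.of_map_of_injective (f := (integralClosure ℤ ℂ).val) (by exact hζ) Subtype.val_injective
  have hnu : ¬ IsUnit (q : (integralClosure ℤ ℂ)) := by
    intro hu
    obtain ⟨v, hv⟩ := hu.exists_right_inv
    have h1 : (q : ℂ) * (v : ℂ) = 1 := by
      have := congrArg (Subtype.val) hv
      simpa using this
    have hq0 : (q : ℂ) ≠ 0 := by exact_mod_cast hq.ne_zero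
    have h2 : (v : ℂ) = algebraMap ℚ ℂ ((q : ℚ)⁻¹) := by
      simp only [map_inv₀, map_natCast]
      exact eq_inv_of_mul_eq_one_right h1
    have h3 : IsIntegral ℤ ((q : ℚ)⁻¹) := by
      have h4 : IsIntegral ℤ (v : ℂ) := v.2
      rw [h2] at h4
      exact (isIntegral_algebraMap_iff (algebraMap ℚ ℂ).injective).1 h4
    obtain ⟨z, hz⟩ := IsIntegrallyClosed.isIntegral_iff.1 h3
    have hqq : (q : ℚ) ≠ 0 := by exact_mod_cast hq.ne_zero
    have h5 : (q : ℤ) * z = 1 := by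
      have : (q : ℚ) * (z : ℚ) = 1 := by
        have hz' : (z : ℚ) = (q : ℚ)⁻¹ := by simpa using hz
        rw [hz', mul_inv_cancel₀ hqq]
      exact_mod_cast this
    have h6 : IsUnit (q : ℤ) := IsUnit.of_mul_eq_one _ h5
    rw [Int.isUnit_iff] at h6
    have := hq.two_le
    omega
  obtain ⟨m, hm, hqm⟩ := exists_max_ideal_of_mem_nonunits (a := (q : (integralClosure ℤ ℂ))) hnu
  let : Field ((integralClosure ℤ ℂ) ⧸ m) := Ideal.Quotient.field m
  let f := Ideal.Quotient.mk m
  have hqk : (q : (integralClosure ℤ ℂ) ⧸ m) = 0 := by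
    have := Ideal.Quotient.eq_zero_iff_mem.2 hqm
    simpa using this
  have : CharP ((integralClosure ℤ ℂ) ⧸ m) q := by
    have h1 := CharP.ringChar_of_prime_eq_zero hq hqk
    exact h1 ▸ ringChar.charP _
  have hMA := H ((integralClosure ℤ ℂ) ⧸ m) (f A) hqk (by simpa only [map_add, map_sub, map_mul, map_pow, map_ofNat, map_zero] using congrArg f hA)
  have hMB := H ((integralClosure ℤ ℂ) ⧸ m) (f B) hqk (by simpa only [map_add, map_sub, map_mul, map_pow, map_ofNat, map_zero] using congrArg f hB)
  have hc : (c : (integralClosure ℤ ℂ) ⧸ m) ≠ 0 := by rwa [Ne, CharP.cast_eq_zero_iff ((integralClosure ℤ ℂ) ⧸ m) q]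
  have hZM : (f Z) ^ M = 1 := by
    rw [hAB, map_mul, mul_pow, hMB] at hMA
    exact mul_right_cancel₀ hc (by rw [hMA, one_mul])
  obtain ⟨d, rfl⟩ := hpn
  have hprim : IsPrimitiveRoot (Z ^ d) p := hZ.pow hn (mul_comm p d)
  have hpk : ((p : ℕ) : (integralClosure ℤ ℂ) ⧸ m) ≠ 0 := by
    rw [Ne, CharP.cast_eq_zero_iff ((integralClosure ℤ ℂ) ⧸ m) q]
    intro hd
    exact hpq ((Nat.prime_dvd_prime_iff_eq hq hp).1 hd).symm
  have : NeZero ((p : ℕ) : (integralClosure ℤ ℂ) ⧸ m) := ⟨hpk⟩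
  have hroot : (cyclotomic p ((integralClosure ℤ ℂ) ⧸ m)).IsRoot (f (Z ^ d)) := by
    have h1 := hprim.isRoot_cyclotomic hp.pos
    have h2 := h1.map (f := f)
    rwa [map_cyclotomic] at h2
  have hprim2 := isRoot_cyclotomic_iff.1 hroot
  apply hprim2.dvd_of_pow_eq_one
  rw [map_pow, ← pow_mul, mul_comm, pow_mul, hZM, one_pow]

/-- If `α` and `β` are complex roots of `P₅` whose ratio is a root of unity, then `α = β`. -/
theorem P5_no_root_of_unity_ratio (α β : ℂ) (hα : P5.eval α = 0) (hβ : P5.eval β = 0)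
    (h : ∃ n : ℕ, 0 < n ∧ (α / β) ^ n = 1) : α = β := by
  obtain ⟨N, hN, hpow⟩ := h
  have hβ0 : β ≠ 0 := by
    rintro rfl
    simp [P5] at hβ
  have hab : α = (α / β) * β := by field_simp
  have hζ := IsPrimitiveRoot.orderOf (α / β)
  have hn : 0 < orderOf (α / β) := orderOf_pos_iff.2 (isOfFinOrder_iff_pow_eq_one.2 ⟨N, hN, hpow⟩)
  by_cases h1 : orderOf (α / β) = 1
  · rw [orderOf_eq_one_iff] at h1
    rw [hab, h1, one_mul]
  exfalso
  obtain ⟨p, hp, hpn⟩ := Nat.exists_prime_and_dvd h1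
  by_cases hp2 : p = 2
  · have := key 19 2413 9 p _ (by norm_num) hp (by omega) (by norm_num)
      (fun k _ a hq hP => by exact_mod_cast pow_mod_19 a (by exact_mod_cast hq) hP)
      α β _ hα hβ hζ hn hpn hab
    first | rw [hp2] at this | rw [hp7] at this
    norm_num at this
  · have h14 := key 2 14 1 p _ (by norm_num) hp hp2 (by norm_num)
      (fun k _ a hq hP => by exact_mod_cast pow_mod_2 a (by exact_mod_cast hq) hP)
      α β _ hα hβ hζ hn hpn hab
    have hp7 : p = 7 := by
      have h7 : p ∣ 2 * 7 := h14
      rcases (Nat.Prime.dvd_mul hp).1 h7 with h | h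
      · exact absurd ((Nat.prime_dvd_prime_iff_eq hp Nat.prime_two).1 h) hp2
      · exact (Nat.prime_dvd_prime_iff_eq hp (by norm_num)).1 h
    have := key 3 36 2 p _ (by norm_num) hp (by omega) (by norm_num)
      (fun k _ a hq hP => by exact_mod_cast pow_mod_3 a (by exact_mod_cast hq) hP)
      α β _ hα hβ hζ hn hpn hab
    first | rw [hp2] at this | rw [hp7] at this
    norm_num at this
end

section
/- The splitting field of P₃(T) = T⁸ − T⁷ + 2T⁶ − 4T⁵ − 2T⁴ − 12T³ + 18T² − 27T + 81 over ℚ has degree 48 as a field extension of ℚ. -/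
open Polynomial

namespace P3Aux

/-- The trace polynomial. -/
noncomputable def qp (R : Type*) [CommRing R] : R[X] := X ^ 4 - X ^ 3 - 10 * X ^ 2 + 5 * X + 4

/-- The resolvent cubic of the trace polynomial. -/
noncomputable def cp (R : Type*) [CommRing R] : R[X] := X ^ 3 + 10 * X ^ 2 - 21 * X - 189

lemma qp_eq (R : Type*) [CommRing R] :
    qp R = C 1 * X ^ 4 + C (-1) * X ^ 3 + C (-10) * X ^ 2 + C 5 * X + C 4 := by
  have e : (C (10 : R)) = 10 := rfl
  have e5 : (C (5 : R)) = 5 := rfl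
  have e4 : (C (4 : R)) = 4 := rfl
  rw [C_neg, C_neg, e, e5, e4, C_1, qp]; ring

lemma cp_eq (R : Type*) [CommRing R] :
    cp R = C 1 * X ^ 3 + C 10 * X ^ 2 + C (-21) * X + C (-189) := by
  have e : (C (10 : R)) = 10 := rfl
  have e5 : (C (21 : R)) = 21 := rfl
  have e4 : (C (189 : R)) = 189 := rfl
  rw [C_neg, C_neg, e, e5, e4, C_1, cp]; ring

lemma qp_natDegree (R : Type*) [CommRing R] [Nontrivial R] : (qp R).natDegree = 4 := by
  rw [qp_eq]; compute_degree!

lemma qp_monic (R : Type*) [CommRing R] [Nontrivial R] : (qp R).Monic := by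
  rw [Monic, leadingCoeff, qp_natDegree, qp_eq]; compute_degree!

lemma cp_natDegree (R : Type*) [CommRing R] [Nontrivial R] : (cp R).natDegree = 3 := by
  rw [cp_eq]; exact natDegree_cubic one_ne_zero

lemma cp_monic (R : Type*) [CommRing R] [Nontrivial R] : (cp R).Monic := by
  rw [Monic, cp_eq]; exact leadingCoeff_cubic one_ne_zero

lemma qp_aeval {R S : Type*} [CommRing R] [CommRing S] [Algebra R S] (t : S) :
    aeval t (qp R) = t ^ 4 - t ^ 3 - 10 * t ^ 2 + 5 * t + 4 := by
  have e1 : algebraMap R S 10 = 10 := map_ofNat _ 10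
  have e2 : algebraMap R S 5 = 5 := map_ofNat _ 5
  have e3 : algebraMap R S 4 = 4 := map_ofNat _ 4
  simp [qp_eq, e1, e2, e3]; ring

lemma cp_aeval {R S : Type*} [CommRing R] [CommRing S] [Algebra R S] (t : S) :
    aeval t (cp R) = t ^ 3 + 10 * t ^ 2 - 21 * t - 189 := by
  have e1 : algebraMap R S 10 = 10 := map_ofNat _ 10
  have e2 : algebraMap R S 21 = 21 := map_ofNat _ 21
  have e3 : algebraMap R S 189 = 189 := map_ofNat _ 189
  simp [cp_eq, e1, e2, e3]; ring

lemma qp_eval {R : Type*} [CommRing R] (t : R) :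
    eval t (qp R) = t ^ 4 - t ^ 3 - 10 * t ^ 2 + 5 * t + 4 := by
  simp [qp]

lemma no_rat_root_q (r : ℚ) : r ^ 4 - r ^ 3 - 10 * r ^ 2 + 5 * r + 4 ≠ 0 := by
  intro h
  obtain ⟨n, hn⟩ := exists_integer_of_is_root_of_monic (qp_monic ℤ) (r := r)
    (by rw [qp_aeval]; exact h)
  have hn' : r = (n : ℚ) := by simpa using hn.1
  subst hn'
  have h2 : n ^ 4 - n ^ 3 - 10 * n ^ 2 + 5 * n + 4 = 0 := by exact_mod_cast h
  have h3 := congrArg (Int.cast : ℤ → ZMod 5) h2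
  push_cast at h3
  revert h3
  generalize (n : ZMod 5) = m
  revert m
  decide

lemma no_rat_root_c (r : ℚ) : r ^ 3 + 10 * r ^ 2 - 21 * r - 189 ≠ 0 := by
  intro h
  obtain ⟨n, hn⟩ := exists_integer_of_is_root_of_monic (cp_monic ℤ) (r := r)
    (by rw [cp_aeval]; exact h)
  have hn' : r = (n : ℚ) := by simpa using hn.1
  subst hn'
  have h2 : n ^ 3 + 10 * n ^ 2 - 21 * n - 189 = 0 := by exact_mod_cast h
  have h3 := congrArg (Int.cast : ℤ → ZMod 11) h2
  push_cast at h3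
  revert h3
  generalize (n : ZMod 11) = m
  revert m
  decide

lemma monic_two {E : Type*} [Field E] {f : E[X]} (hf : f.Monic) (h : f.natDegree = 2) (t : E) :
    eval t f = t ^ 2 + f.coeff 1 * t + f.coeff 0 := by
  have h2 : f.coeff 2 = 1 := by rw [← h]; exact hf
  rw [eval_eq_sum_range, h]
  simp [Finset.sum_range_succ, h2]; ring

lemma qp_irreducible (E : Type*) [Field E] [CharZero E]
    (h1 : ∀ r : E, r ^ 4 - r ^ 3 - 10 * r ^ 2 + 5 * r + 4 ≠ 0)
    (h2 : ∀ r : E, r ^ 3 + 10 * r ^ 2 - 21 * r - 189 ≠ 0) : Irreducible (qp E) := by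
  rw [(qp_monic E).irreducible_iff_natDegree']
  refine ⟨fun h => ?_, fun f g hf hg hfg hdeg => ?_⟩
  · have := qp_natDegree E
    rw [h] at this; simp at this
  · have hd : f.natDegree + g.natDegree = 4 := by
      rw [← hf.natDegree_mul hg, hfg, qp_natDegree]
    rw [qp_natDegree, Finset.mem_Ioc] at hdeg
    have hev : ∀ t : E, eval t f * eval t g = t ^ 4 - t ^ 3 - 10 * t ^ 2 + 5 * t + 4 := by
      intro t; rw [← eval_mul, hfg, qp_eval]
    obtain hg1 | hg2 : g.natDegree = 1 ∨ g.natDegree = 2 := by omega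
    · obtain ⟨t, ht⟩ := exists_root_of_degree_eq_one (degree_eq_iff_natDegree_eq hg.ne_zero |>.2 hg1)
      apply h1 t
      rw [← hev t, ht.eq_zero, mul_zero]
    · have hf2 : f.natDegree = 2 := by omega
      simp only [monic_two hf hf2, monic_two hg hg2] at hev
      generalize f.coeff 1 = a, f.coeff 0 = b, g.coeff 1 = c, g.coeff 0 = e at hev
      have k0 := hev 0
      have k1 := hev 1
      have k2 := hev (-1)
      have k3 := hev 2
      have k4 := hev (-2)
      have c0 : b * e = 4 := by linear_combination k0
      have c2 : b + e + a * c = -10 := by linear_combination (k1 + k2) / 2 - k0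
      have e1 : a + c + (a * e + b * c) = 4 := by linear_combination (k1 - k2) / 2
      have e2 : 8 * (a + c) + 2 * (a * e + b * c) = 2 := by linear_combination (k3 - k4) / 2
      have c3 : a + c = -1 := by linear_combination (e2 - 2 * e1) / 6
      have c1 : a * e + b * c = 5 := by linear_combination e1 - c3
      apply h2 (b + e)
      have key : (b + e) ^ 3 - (b + e + a * c) * (b + e) ^ 2
          + ((a + c) * (a * e + b * c) - 4 * (b * e)) * (b + e)
          - ((a * e + b * c) ^ 2 + (a + c) ^ 2 * (b * e) - 4 * (b + e + a * c) * (b * e)) = 0 := by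
        ring
      rw [c0, c1, c2, c3] at key
      linear_combination key

lemma qpQ_irreducible : Irreducible (qp ℚ) := qp_irreducible ℚ no_rat_root_q no_rat_root_c

lemma cpQ_irreducible : Irreducible (cp ℚ) := by
  rw [irreducible_iff_roots_eq_zero_of_degree_le_three (by rw [cp_natDegree]; norm_num)
    (by rw [cp_natDegree])]
  rw [Multiset.eq_zero_iff_forall_notMem]
  intro r hr
  rw [mem_roots (cp_monic ℚ).ne_zero] at hr
  apply no_rat_root_c r
  rw [← cp_aeval (R := ℚ) r]; simpa using hr

lemma dvd_finrank {K L : Type*} [Field K] [Field L] [Algebra K L] [FiniteDimensional K L]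
    {p : K[X]} (hp : Irreducible p) (hm : p.Monic) {x : L} (hx : aeval x p = 0) :
    p.natDegree ∣ Module.finrank K L := by
  rw [minpoly.eq_of_irreducible_of_monic hp hx hm]
  exact minpoly.degree_dvd (Algebra.IsIntegral.isIntegral x)

lemma disc_irreducible : Irreducible (X ^ 2 - C (587097 : ℚ)) := by
  rw [X_pow_sub_C_irreducible_iff_of_prime Nat.prime_two]
  intro b hb
  have h : IsSquare (587097 : ℚ) := ⟨b, by rw [← hb]; ring⟩
  rw [show (587097 : ℚ) = ((587097 : ℕ) : ℚ) by norm_num, Rat.isSquare_natCast_iff] at h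
  obtain ⟨m, hm⟩ := h
  have h1 : m < 767 := by nlinarith
  have h2 : 766 < m := by nlinarith
  omega

lemma irr_quad (E : Type*) [Field E] [Algebra ℚ E] (hE : Module.finrank ℚ E = 2) :
    Irreducible (qp E) := by
  have : FiniteDimensional ℚ E := Module.finite_of_finrank_pos (by omega)
  have : CharZero E := algebraRat.charZero E
  apply qp_irreducible
  · intro r h
    have := dvd_finrank qpQ_irreducible (qp_monic ℚ) (x := r) (by rw [qp_aeval, h])
    rw [qp_natDegree, hE] at this
    omega
  · intro r h
    have := dvd_finrank cpQ_irreducible (cp_monic ℚ) (x := r) (by rw [cp_aeval, h])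
    rw [cp_natDegree, hE] at this
    omega

lemma lower {L : Type*} [Field L] [Algebra ℚ L] [FiniteDimensional ℚ L] (x y z w : L)
    (s1 : x + y + z + w = 1)
    (s2 : x * y + x * z + x * w + y * z + y * w + z * w = -10)
    (s3 : x * y * z + x * y * w + x * z * w + y * z * w = -5)
    (s4 : x * y * z * w = 4) : 24 ∣ Module.finrank ℚ L := by
  have hx : x ^ 4 - x ^ 3 - 10 * x ^ 2 + 5 * x + 4 = 0 := by
    linear_combination x ^ 3 * s1 - x ^ 2 * s2 + x * s3 - s4
  obtain ⟨r1, hr1⟩ : ∃ r, r = x * y + z * w := ⟨_, rfl⟩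
  obtain ⟨r2, hr2⟩ : ∃ r, r = x * z + y * w := ⟨_, rfl⟩
  obtain ⟨r3, hr3⟩ : ∃ r, r = x * w + y * z := ⟨_, rfl⟩
  have t1 : r1 + r2 + r3 = -10 := by rw [hr1, hr2, hr3]; linear_combination s2
  have t2 : r1 * r2 + r1 * r3 + r2 * r3 = -21 := by
    have : r1 * r2 + r1 * r3 + r2 * r3 =
      (x + y + z + w) * (x * y * z + x * y * w + x * z * w + y * z * w) - 4 * (x * y * z * w) := by
      rw [hr1, hr2, hr3]; ring
    rw [this, s1, s3, s4]; norm_num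
  have t3 : r1 * r2 * r3 = 189 := by
    have : r1 * r2 * r3 = (x * y * z + x * y * w + x * z * w + y * z * w) ^ 2
      + (x + y + z + w) ^ 2 * (x * y * z * w)
      - 4 * (x * y + x * z + x * w + y * z + y * w + z * w) * (x * y * z * w) := by
      rw [hr1, hr2, hr3]; ring
    rw [this, s1, s2, s3, s4]; norm_num
  have hr : r1 ^ 3 + 10 * r1 ^ 2 - 21 * r1 - 189 = 0 := by
    linear_combination r1 ^ 2 * t1 - r1 * t2 + t3
  obtain ⟨d, hd⟩ : ∃ d, d = (r1 - r2) * (r1 - r3) * (r2 - r3) := ⟨_, rfl⟩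
  have hdd : d ^ 2 = 587097 := by
    have : d ^ 2 = (r1 + r2 + r3) ^ 2 * (r1 * r2 + r1 * r3 + r2 * r3) ^ 2
      - 4 * (r1 * r2 + r1 * r3 + r2 * r3) ^ 3 - 4 * (r1 + r2 + r3) ^ 3 * (r1 * r2 * r3)
      + 18 * (r1 + r2 + r3) * (r1 * r2 + r1 * r3 + r2 * r3) * (r1 * r2 * r3)
      - 27 * (r1 * r2 * r3) ^ 2 := by
      rw [hd]; ring
    rw [this, t1, t2, t3]; norm_num
  have h3 : 3 ∣ Module.finrank ℚ L := by
    have := dvd_finrank cpQ_irreducible (cp_monic ℚ) (x := r1) (by rw [cp_aeval, hr])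
    rwa [cp_natDegree] at this
  have hE : Module.finrank ℚ (IntermediateField.adjoin ℚ {d}) = 2 := by
    rw [IntermediateField.adjoin.finrank (Algebra.IsIntegral.isIntegral d),
      ← minpoly.eq_of_irreducible_of_monic disc_irreducible (x := d) ?_ ?_]
    · exact natDegree_X_pow_sub_C
    · simp [hdd]
    · exact monic_X_pow_sub_C _ two_ne_zero
  have hirr := @irr_quad _ _ (IntermediateField.adjoin ℚ {d}).algebra' hE
  have h4 := dvd_finrank hirr (qp_monic _) (x := x) (by rw [qp_aeval, hx])
  rw [qp_natDegree] at h4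
  have h5 := Module.finrank_mul_finrank ℚ (IntermediateField.adjoin ℚ {d}) L
  rw [hE] at h5
  omega

lemma upper (K : Type*) [Field K] [Algebra ℚ K] [(qp ℚ).IsSplittingField ℚ K] :
    Module.finrank ℚ K ≤ 24 := by
  rw [(IsSplittingField.algEquiv K (qp ℚ)).toLinearEquiv.finrank_eq,
    ← Gal.card_of_separable qpQ_irreducible.separable]
  have : Fact (((qp ℚ).map (algebraMap ℚ (qp ℚ).SplittingField)).Splits) :=
    ⟨SplittingField.splits _⟩
  have h1 := Nat.card_le_card_of_injective _ (Gal.galActionHom_injective (qp ℚ) (qp ℚ).SplittingField)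
  have h2 : Nat.card ((qp ℚ).rootSet (qp ℚ).SplittingField) = 4 := by
    have h3 := card_rootSet_eq_natDegree qpQ_irreducible.separable
      (SplittingField.splits (qp ℚ))
    rwa [← Nat.card_eq_fintype_card, qp_natDegree] at h3
  rw [Nat.card_perm, h2] at h1
  exact h1

end P3Aux

namespace P3Aux

lemma exists_real_root (a b : ℝ) (hab : a ≤ b)
    (h : (a ^ 4 - a ^ 3 - 10 * a ^ 2 + 5 * a + 4) * (b ^ 4 - b ^ 3 - 10 * b ^ 2 + 5 * b + 4) < 0) :
    ∃ c, a < c ∧ c < b ∧ c ^ 4 - c ^ 3 - 10 * c ^ 2 + 5 * c + 4 = 0 := by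
  obtain ⟨f, hf⟩ : ∃ f : ℝ → ℝ, ∀ c, f c = c ^ 4 - c ^ 3 - 10 * c ^ 2 + 5 * c + 4 :=
    ⟨_, fun _ => rfl⟩
  have hc : ContinuousOn f (Set.uIcc a b) := by
    rw [funext hf]; fun_prop
  have h0 : (0 : ℝ) ∈ Set.uIcc (f a) (f b) := by
    rw [← hf, ← hf] at h
    rw [Set.mem_uIcc]
    rcases mul_neg_iff.1 h with h | h
    · right; exact ⟨h.2.le, h.1.le⟩
    · left; exact ⟨h.1.le, h.2.le⟩
  obtain ⟨c, hc1, hc2⟩ := intermediate_value_uIcc hc h0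
  rw [Set.uIcc_of_le hab] at hc1
  rw [← hf, ← hf] at h
  refine ⟨c, lt_of_le_of_ne hc1.1 ?_, lt_of_le_of_ne hc1.2 ?_, by rw [← hf, hc2]⟩
  · rintro rfl; rw [hc2] at h; simp at h
  · rintro rfl; rw [hc2] at h; simp at h

lemma exists_real_roots : ∃ x y z w : ℝ, x + y + z + w = 1 ∧
    x * y + x * z + x * w + y * z + y * w + z * w = -10 ∧
    x * y * z + x * y * w + x * z * w + y * z * w = -5 ∧ x * y * z * w = 4 := by
  obtain ⟨x, hx1, hx2, hx⟩ := exists_real_root (-3) (-2) (by norm_num) (by norm_num)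
  obtain ⟨y, hy1, hy2, hy⟩ := exists_real_root (-1) 0 (by norm_num) (by norm_num)
  obtain ⟨z, hz1, hz2, hz⟩ := exists_real_root 0 1 (by norm_num) (by norm_num)
  obtain ⟨w, hw1, hw2, hw⟩ := exists_real_root 1 4 (by norm_num) (by norm_num)
  have quot : ∀ u : ℝ, x ≠ u → u ^ 4 - u ^ 3 - 10 * u ^ 2 + 5 * u + 4 = 0 →
      x ^ 3 + x ^ 2 * u + x * u ^ 2 + u ^ 3 - (x ^ 2 + x * u + u ^ 2) - 10 * (x + u) + 5 = 0 := by
    intro u hu h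
    apply mul_left_cancel₀ (sub_ne_zero.2 hu)
    linear_combination hx - h
  have a1 := quot y (by linarith) hy
  have a2 := quot z (by linarith) hz
  have a3 := quot w (by linarith) hw
  have b1 : x ^ 2 + y ^ 2 + z ^ 2 + x * y + x * z + y * z - (x + y + z) - 10 = 0 := by
    apply mul_left_cancel₀ (sub_ne_zero.2 (show y ≠ z by linarith))
    linear_combination a1 - a2
  have b2 : x ^ 2 + y ^ 2 + w ^ 2 + x * y + x * w + y * w - (x + y + w) - 10 = 0 := by
    apply mul_left_cancel₀ (sub_ne_zero.2 (show y ≠ w by linarith))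
    linear_combination a1 - a3
  have c1 : x + y + z + w - 1 = 0 := by
    apply mul_left_cancel₀ (sub_ne_zero.2 (show z ≠ w by linarith))
    linear_combination b1 - b2
  have s1 : x + y + z + w = 1 := by linarith
  have hw' : w = 1 - x - y - z := by linarith
  have s2 : x * y + x * z + x * w + y * z + y * w + z * w = -10 := by
    rw [hw']; linear_combination -b1
  have s3 : x * y * z + x * y * w + x * z * w + y * z * w = -5 := by
    linear_combination a1 - x ^ 2 * s1 - y ^ 2 * s1 - x * y * s1 + (x + y) * s2
  refine ⟨x, y, z, w, s1, s2, s3, ?_⟩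
  linear_combination x ^ 3 * s1 - x ^ 2 * s2 + x * s3 - hx

lemma P3_aeval (t : ℂ) : aeval t P3Q = t ^ 8 - t ^ 7 + 2 * t ^ 6 - 4 * t ^ 5 - 2 * t ^ 4
    - 12 * t ^ 3 + 18 * t ^ 2 - 27 * t + 81 := by
  have e2 : aeval t (2 : ℚ[X]) = 2 := map_ofNat _ 2
  have e4 : aeval t (4 : ℚ[X]) = 4 := map_ofNat _ 4
  have e12 : aeval t (12 : ℚ[X]) = 12 := map_ofNat _ 12
  have e18 : aeval t (18 : ℚ[X]) = 18 := map_ofNat _ 18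
  have e27 : aeval t (27 : ℚ[X]) = 27 := map_ofNat _ 27
  have e81 : aeval t (81 : ℚ[X]) = 81 := map_ofNat _ 81
  simp [P3Q, e2, e4, e12, e18, e27, e81]

lemma P3_trace (t t' : ℂ) (h : t * t' = 3) :
    aeval t P3Q = t ^ 4 * aeval (t + t') (qp ℚ) := by
  have ht : t ≠ 0 := by rintro rfl; simp at h
  have h' : t' = 3 / t := by field_simp; linear_combination h
  rw [P3_aeval, qp_aeval, h']
  field_simp
  ring

lemma P3_ne_zero : P3Q ≠ 0 := by
  intro h
  have := P3_aeval 0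
  rw [h] at this; norm_num at this

/-- The auxiliary element `g(u)` with `g(u)² = 63 (12 - u²)` on roots of the trace polynomial. -/
def g (u : ℂ) : ℂ := 4 * u ^ 3 - 2 * u ^ 2 - 41 * u + 10

lemma g_sq {u : ℂ} (h : aeval u (qp ℚ) = 0) : g u ^ 2 = 63 * (12 - u ^ 2) := by
  rw [qp_aeval] at h
  rw [g]; linear_combination (16 * u ^ 2 - 164) * h

lemma g_ne_zero {u : ℂ} (h : aeval u (qp ℚ) = 0) : g u ≠ 0 := by
  intro h0
  have h1 := g_sq h
  rw [h0] at h1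
  rw [qp_aeval] at h
  have h2 : u ^ 2 = 12 := by linear_combination h1 / 63
  have h3 : u = 4 := by linear_combination (-1 / 7) * h + (1 / 7) * (u ^ 2 - u + 2) * h2
  rw [h3] at h2; norm_num at h2

lemma g_mem {k : Type*} [Field k] [Algebra k ℂ] (K : IntermediateField k ℂ) {u : ℂ} (h : u ∈ K) :
    g u ∈ K := by
  have e : ∀ n : ℕ, (n : ℂ) ∈ K := fun n => natCast_mem K n
  have := e 4
  have := e 2
  have := e 41
  have := e 10
  exact add_mem (sub_mem (sub_mem (mul_mem (e 4) (pow_mem h _)) (mul_mem (e 2) (pow_mem h _)))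
    (mul_mem (e 41) h)) (e 10)

end P3Aux

open P3Aux in
/-- The splitting field of `P₃` over `ℚ` has degree `48`. -/
theorem P3_splitting_field_degree : Module.finrank ℚ P3Q.SplittingField = 48 := by
  obtain ⟨x, y, z, w, s1, s2, s3, s4⟩ := exists_real_roots
  obtain ⟨s, hs, hsim⟩ : ∃ s : ℂ, s ^ 2 = -7 ∧ ∀ r : ℝ, (r : ℂ) ^ 2 ≠ -7 := by
    refine ⟨Complex.I * (Real.sqrt 7 : ℝ), ?_, ?_⟩
    · rw [mul_pow, Complex.I_sq, ← Complex.ofReal_pow, Real.sq_sqrt (by norm_num)]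
      norm_num
    · intro r hr
      have : r ^ 2 = -7 := by exact_mod_cast hr
      nlinarith [sq_nonneg r]
  have qne : qp ℚ ≠ 0 := (qp_monic ℚ).ne_zero
  have s1' : (x + y + z + w : ℂ) = 1 := by exact_mod_cast s1
  have s2' : (x * y + x * z + x * w + y * z + y * w + z * w : ℂ) = -10 := by exact_mod_cast s2
  have s3' : (x * y * z + x * y * w + x * z * w + y * z * w : ℂ) = -5 := by exact_mod_cast s3
  have s4' : (x * y * z * w : ℂ) = 4 := by exact_mod_cast s4
  have fac : ∀ u : ℂ, aeval u (qp ℚ) = (u - x) * (u - y) * (u - z) * (u - w) := by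
    intro u
    rw [qp_aeval]
    linear_combination u ^ 3 * s1' - u ^ 2 * s2' + u * s3' - s4'
  obtain ⟨L, hL⟩ : ∃ L, L = IntermediateField.adjoin ℚ ((qp ℚ).rootSet ℂ) := ⟨_, rfl⟩
  have hroot : ∀ u : ℂ, aeval u (qp ℚ) = 0 → u ∈ L := fun u hu => by
    rw [hL]
    exact IntermediateField.subset_adjoin _ _ (mem_rootSet.2 ⟨qne, hu⟩)
  have hLspl : (qp ℚ).IsSplittingField ℚ L := by
    rw [hL]
    exact IntermediateField.adjoin_rootSet_isSplittingField (IsAlgClosed.splits _)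
  have hLfin : FiniteDimensional ℚ L := IsSplittingField.finiteDimensional L (qp ℚ)
  have hx : (x : ℂ) ∈ L := hroot _ (by rw [fac]; ring)
  have hy : (y : ℂ) ∈ L := hroot _ (by rw [fac]; ring)
  have hz : (z : ℂ) ∈ L := hroot _ (by rw [fac]; ring)
  have hw : (w : ℂ) ∈ L := hroot _ (by rw [fac]; ring)
  have hL24 : Module.finrank ℚ L = 24 := by
    have h1 : 24 ∣ Module.finrank ℚ L := by
      apply lower (⟨x, hx⟩ : L) ⟨y, hy⟩ ⟨z, hz⟩ ⟨w, hw⟩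
      · apply Subtype.ext; push_cast; exact s1'
      · apply Subtype.ext; push_cast; exact s2'
      · apply Subtype.ext; push_cast; exact s3'
      · apply Subtype.ext; push_cast; exact s4'
    have h2 := upper L
    have h3 : 0 < Module.finrank ℚ L := Module.finrank_pos
    omega
  have hreal : ∀ u ∈ L, ∃ r : ℝ, (r : ℂ) = u := by
    have : L ≤ (Complex.ofRealAm.restrictScalars ℚ).fieldRange := by
      rw [hL, IntermediateField.adjoin_le_iff]
      intro u hu
      have hu := (mem_rootSet.1 hu).2
      rw [fac, mul_eq_zero, mul_eq_zero, mul_eq_zero] at hu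
      rcases hu with ((hu | hu) | hu) | hu
      · exact ⟨x, (sub_eq_zero.1 hu).symm⟩
      · exact ⟨y, (sub_eq_zero.1 hu).symm⟩
      · exact ⟨z, (sub_eq_zero.1 hu).symm⟩
      · exact ⟨w, (sub_eq_zero.1 hu).symm⟩
    intro u hu
    obtain ⟨r, hr⟩ := this hu
    exact ⟨r, hr⟩
  have hirr : Irreducible (X ^ 2 - C (-7 : L)) := by
    rw [X_pow_sub_C_irreducible_iff_of_prime Nat.prime_two]
    intro b hb
    obtain ⟨r, hr⟩ := hreal b b.2
    apply hsim r
    rw [hr]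
    have := congrArg (Subtype.val) hb
    push_cast at this
    exact this
  have hM2 : Module.finrank L (IntermediateField.adjoin L {s}) = 2 := by
    have h0 : aeval s (X ^ 2 - C (-7 : L)) = 0 := by
      have e : algebraMap L ℂ 7 = 7 := map_ofNat _ 7
      simp [hs, e]
    have hm : (X ^ 2 - C (-7 : L)).Monic := monic_X_pow_sub_C _ two_ne_zero
    rw [IntermediateField.adjoin.finrank ⟨_, hm, h0⟩,
      ← minpoly.eq_of_irreducible_of_monic hirr h0 hm]
    exact natDegree_X_pow_sub_C
  have hKspl : P3Q.IsSplittingField ℚ (IntermediateField.adjoin ℚ (P3Q.rootSet ℂ)) :=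
    IntermediateField.adjoin_rootSet_isSplittingField (IsAlgClosed.splits _)
  obtain ⟨K, hK⟩ : ∃ K, K = IntermediateField.adjoin ℚ (P3Q.rootSet ℂ) := ⟨_, rfl⟩
  rw [← hK] at hKspl
  have hKM : K = (IntermediateField.adjoin L {s}).restrictScalars ℚ := by
    apply le_antisymm
    · rw [hK, IntermediateField.adjoin_le_iff]
      intro t ht
      have ht := (mem_rootSet.1 ht).2
      have ht0 : t ≠ 0 := by
        rintro rfl
        rw [P3_aeval] at ht; norm_num at ht
      have htt : t * (3 / t) = 3 := by field_simp
      rw [P3_trace t (3 / t) htt] at ht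
      obtain ⟨t', ht'⟩ : ∃ t', t' = 3 / t := ⟨_, rfl⟩
      rw [← ht'] at ht htt
      have hu : aeval (t + t') (qp ℚ) = 0 := by
        rcases mul_eq_zero.1 ht with h | h
        · exact absurd h (pow_ne_zero _ ht0)
        · exact h
      have huM : t + t' ∈ IntermediateField.adjoin L {s} :=
        (IntermediateField.adjoin L {s}).algebraMap_mem ⟨_, hroot _ hu⟩
      have hsM : s ∈ IntermediateField.adjoin L {s} :=
        IntermediateField.mem_adjoin_simple_self _ _
      have hsg := mul_mem hsM (g_mem _ huM)
      have h21 : (21 : ℂ) ∈ IntermediateField.adjoin L {s} := natCast_mem _ 21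
      have h42 : (42 : ℂ) ∈ IntermediateField.adjoin L {s} := natCast_mem _ 42
      have hsq : (21 * (t - t')) ^ 2 = (s * g (t + t')) ^ 2 := by
        rw [mul_pow s, hs, g_sq hu]
        linear_combination (-4 * 441 : ℂ) * htt
      change t ∈ IntermediateField.adjoin L {s}
      rcases sq_eq_sq_iff_eq_or_eq_neg.1 hsq with h | h
      · have : t = (21 * (t + t') + s * g (t + t')) / 42 := by
          linear_combination h / 42
        rw [this]
        exact div_mem (add_mem (mul_mem h21 huM) hsg) h42
      · have : t = (21 * (t + t') - s * g (t + t')) / 42 := by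
          linear_combination h / 42
        rw [this]
        exact div_mem (sub_mem (mul_mem h21 huM) hsg) h42
    · have key : ∀ u : ℂ, aeval u (qp ℚ) = 0 → u ∈ K ∧ s ∈ K := by
        intro u hu
        have hg := g_sq hu
        have hpr : (u + s * g u / 21) / 2 * ((u - s * g u / 21) / 2) = 3 := by
          linear_combination (-(g u) ^ 2 / 1764) * hs + hg / 252
        have hpr' : (u - s * g u / 21) / 2 * ((u + s * g u / 21) / 2) = 3 := by
          rw [mul_comm, hpr]
        have m1 : (u + s * g u / 21) / 2 ∈ K := by
          rw [hK]
          apply IntermediateField.subset_adjoin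
          refine mem_rootSet.2 ⟨P3_ne_zero, ?_⟩
          rw [P3_trace _ _ hpr, show (u + s * g u / 21) / 2 + (u - s * g u / 21) / 2 = u by ring,
            hu, mul_zero]
        have m2 : (u - s * g u / 21) / 2 ∈ K := by
          rw [hK]
          apply IntermediateField.subset_adjoin
          refine mem_rootSet.2 ⟨P3_ne_zero, ?_⟩
          rw [P3_trace _ _ hpr', show (u - s * g u / 21) / 2 + (u + s * g u / 21) / 2 = u by ring,
            hu, mul_zero]
        have huK : u ∈ K := by
          have := add_mem m1 m2
          rwa [show (u + s * g u / 21) / 2 + (u - s * g u / 21) / 2 = u by ring] at this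
        refine ⟨huK, ?_⟩
        have h21 : (21 : ℂ) ∈ K := natCast_mem K 21
        have := div_mem (mul_mem h21 (sub_mem m1 m2)) (g_mem K huK)
        have hg0 := g_ne_zero hu
        rwa [show 21 * ((u + s * g u / 21) / 2 - (u - s * g u / 21) / 2) / g u = s by
          field_simp; ring] at this
      have hLK : L ≤ K := by
        rw [hL, IntermediateField.adjoin_le_iff]
        intro u hu
        exact (key u (mem_rootSet.1 hu).2).1
      have hle : IntermediateField.adjoin L {s} ≤ IntermediateField.extendScalars hLK := by
        rw [IntermediateField.adjoin_le_iff]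
        intro u hu
        rw [Set.mem_singleton_iff.1 hu]
        exact (key x (by rw [fac]; ring)).2
      intro u hu
      exact hle hu
  rw [← (IsSplittingField.algEquiv K P3Q).toLinearEquiv.finrank_eq, hKM]
  have := Module.finrank_mul_finrank ℚ L (IntermediateField.adjoin L {s})
  rw [hL24, hM2] at this
  exact this.symm
end
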